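/- arXiv:1402.0440 — 5 statements merged into one kernel-verified Lean document; each statement's English description precedes it below -/
import Mathlib

section
/- Let a, b be real numbers with 0 < a < b < 1/2, and let (a_n)_{n≥1}, (b_n)_{n≥1} be sequences of rationals such that (a_n) is strictly increasing with limit a, (b_n) is strictly decreasing with limit b, and 0 < a_n < a < b < b_n < 1/2 for all n. Identify ℂ with ℝ × ℝ, let Q = [−1,1] × [−1,1], and for each n ≥ 1 set S_n = (−b_n, b_n) × (3⁻ⁿ, 3¹⁻ⁿ], L_n = [−b_n, a_n] × [8·3⁻ⁿ⁻¹, 3¹⁻ⁿ], R_n = [−a_n, b_n] × [5·3⁻ⁿ⁻¹, 2·3⁻ⁿ]. Let Ω = ((ℝ × ℝ) \ Q) ∪ ⋃_{n≥1} (S_n \ (L_n ∪ R_n)), and for k ≥ 1 let Ω_k = ((ℝ × ℝ) \ Q) ∪ ⋃_{1≤n≤k} (S_n \ (L_n ∪ R_n)). Then for every k ≥ 1 the Hausdorff distance between the boundary ∂Ω_k and the boundary ∂Ω is at most 3⁻ᵏ. -/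
theorem aux_frontier_congr {s s' U : Set (ℝ × ℝ)} (hU : IsOpen U) {p : ℝ × ℝ} (hp : p ∈ U)
    (h : ∀ q ∈ U, (q ∈ s ↔ q ∈ s')) (hps : p ∈ frontier s) : p ∈ frontier s' := by
  have hev : ∀ᶠ q in nhds p, (q ∈ s ↔ q ∈ s') := by
    filter_upwards [hU.mem_nhds hp] with q hq using h q hq
  rw [frontier_eq_closure_inter_closure] at hps ⊢
  obtain ⟨h1, h2⟩ := hps
  rw [mem_closure_iff_frequently] at h1 h2
  constructor
  · rw [mem_closure_iff_frequently]
    exact (h1.and_eventually hev).mono fun q hq => hq.2.1 hq.1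
  · rw [mem_closure_iff_frequently]
    exact (h2.and_eventually hev).mono fun q hq hq' => hq.1 (hq.2.2 hq')

theorem aux_frontier_mem {s : Set (ℝ × ℝ)} {p : ℝ × ℝ} (h1 : p ∈ closure s) (h2 : p ∉ s) :
    p ∈ frontier s := ⟨h1, fun h => h2 (interior_subset h)⟩

theorem aux_closure_rect {s : Set (ℝ × ℝ)} {x₀ x₁ y₀ y₁ : ℝ} (hx : x₀ < x₁) (hy : y₀ < y₁)
    (h : Set.Ioo x₀ x₁ ×ˢ Set.Ioo y₀ y₁ ⊆ s) : Set.Icc x₀ x₁ ×ˢ Set.Icc y₀ y₁ ⊆ closure s := by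
  rw [← closure_Ioo hx.ne, ← closure_Ioo hy.ne, ← closure_prod_eq]
  exact closure_mono h

/-- the boundary of the truncated domain `Ω_k` approximates the
boundary of `Ω` within `3⁻ᵏ` in the Hausdorff distance. -/
theorem frontier_approx_hausdorff
    (a b : ℝ) (aseq bseq : ℕ → ℚ)
    (ha : 0 < a) (hab : a < b) (hb : b < 1 / 2)
    (haInc : ∀ n, 1 ≤ n → aseq n < aseq (n + 1))
    (hbDec : ∀ n, 1 ≤ n → bseq (n + 1) < bseq n)
    (haLim : Filter.Tendsto (fun n => (aseq n : ℝ)) Filter.atTop (nhds a))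
    (hbLim : Filter.Tendsto (fun n => (bseq n : ℝ)) Filter.atTop (nhds b))
    (hbnd : ∀ n, 1 ≤ n →
      0 < (aseq n : ℝ) ∧ (aseq n : ℝ) < a ∧ b < (bseq n : ℝ) ∧ (bseq n : ℝ) < 1 / 2)
    (Q : Set (ℝ × ℝ)) (hQ : Q = Set.Icc (-1 : ℝ) 1 ×ˢ Set.Icc (-1 : ℝ) 1)
    (S L R : ℕ → Set (ℝ × ℝ))
    (hS : ∀ n, S n =
      Set.Ioo (-(bseq n : ℝ)) (bseq n) ×ˢ Set.Ioc ((3 : ℝ) ^ (-(n : ℤ))) ((3 : ℝ) ^ (1 - (n : ℤ))))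
    (hL : ∀ n, L n =
      Set.Icc (-(bseq n : ℝ)) (aseq n) ×ˢ
        Set.Icc (8 * (3 : ℝ) ^ (-((n : ℤ) + 1))) ((3 : ℝ) ^ (1 - (n : ℤ))))
    (hR : ∀ n, R n =
      Set.Icc (-(aseq n : ℝ)) (bseq n) ×ˢ
        Set.Icc (5 * (3 : ℝ) ^ (-((n : ℤ) + 1))) (2 * (3 : ℝ) ^ (-(n : ℤ))))
    (Ω : Set (ℝ × ℝ))
    (hΩ : Ω = ((Set.univ : Set (ℝ × ℝ)) \ Q) ∪ ⋃ n ∈ {n : ℕ | 1 ≤ n}, (S n \ (L n ∪ R n)))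
    (Ωk : ℕ → Set (ℝ × ℝ))
    (hΩk : ∀ k, Ωk k =
      ((Set.univ : Set (ℝ × ℝ)) \ Q) ∪ ⋃ n ∈ Set.Icc 1 k, (S n \ (L n ∪ R n))) :
    ∀ k, 1 ≤ k →
      Metric.hausdorffDist (frontier (Ωk k)) (frontier Ω) ≤ (3 : ℝ) ^ (-(k : ℤ)) := by
  intro k hk
  have hbmono : ∀ m, 1 ≤ m → ∀ n, m ≤ n → (bseq n : ℝ) ≤ bseq m := by
    intro m hm n hn
    induction n, hn using Nat.le_induction with
    | base => exact le_rfl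
    | succ n hn ih =>
      have h1 : (bseq (n + 1) : ℝ) < bseq n := by exact_mod_cast hbDec n (hm.trans hn)
      exact h1.le.trans ih
  have h30 : (3 : ℝ) ≠ 0 := by norm_num
  obtain ⟨t, ht⟩ : ∃ t : ℝ, t = (3 : ℝ) ^ (-(k : ℤ)) := ⟨_, rfl⟩
  rw [← ht]
  have ht0 : 0 < t := by rw [ht]; positivity
  have hle : ∀ n : ℕ, n ≤ k → t ≤ (3 : ℝ) ^ (-(n : ℤ)) := by
    intro n hn
    rw [ht]
    exact zpow_le_zpow_right₀ (by norm_num) (by omega)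
  have hge1 : ∀ n : ℕ, k + 1 ≤ n → (3 : ℝ) ^ (1 - (n : ℤ)) ≤ t := by
    intro n hn
    rw [ht]
    exact zpow_le_zpow_right₀ (by norm_num) (by omega)
  have e1 : (3 : ℝ) ^ (-((k : ℤ) + 1)) = t / 3 := by
    rw [ht, neg_add, zpow_add₀ h30]; norm_num; ring
  have e2 : (3 : ℝ) ^ (1 - (k : ℤ)) = 3 * t := by
    rw [ht, sub_eq_add_neg, zpow_add₀ h30]; norm_num
  have e3 : (3 : ℝ) ^ (-((k + 1 : ℕ) : ℤ)) = t / 3 := by rw [← e1]; push_cast; rfl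
  have e4 : (3 : ℝ) ^ (1 - ((k + 1 : ℕ) : ℤ)) = t := by
    rw [ht]; congr 1; push_cast; ring
  have e5 : (3 : ℝ) ^ (-(((k + 1 : ℕ) : ℤ) + 1)) = t / 9 := by
    have : (-(((k + 1 : ℕ) : ℤ) + 1)) = -((k : ℤ) + 1) + (-1) := by push_cast; ring
    rw [this, zpow_add₀ h30, e1]; norm_num; ring
  have hge2 : ∀ n : ℕ, k + 2 ≤ n → (3 : ℝ) ^ (1 - (n : ℤ)) ≤ t / 3 := by
    intro n hn
    rw [← e1]
    exact zpow_le_zpow_right₀ (by norm_num) (by omega)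
  have ht1 : t ≤ 1 := by simpa using hle 0 (Nat.zero_le _)
  obtain ⟨A, hA⟩ : ∃ A : ℝ, A = aseq (k + 1) := ⟨_, rfl⟩
  obtain ⟨B, hB⟩ : ∃ B : ℝ, B = bseq (k + 1) := ⟨_, rfl⟩
  obtain ⟨b1, b2, b3, b4⟩ := hbnd (k + 1) (by omega)
  rw [← hA] at b1 b2
  rw [← hB] at b3 b4
  have hBk : B < bseq k := by rw [hB]; exact_mod_cast hbDec k hk
  have mΩ : ∀ q : ℝ × ℝ, q ∈ Ω ↔ q ∉ Q ∨ ∃ n, 1 ≤ n ∧ q ∈ S n ∧ q ∉ L n ∧ q ∉ R n := by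
    intro q; rw [hΩ]; simp only [Set.mem_union, Set.mem_diff, Set.mem_univ, true_and, Set.mem_iUnion, Set.mem_setOf_eq, Set.mem_Icc, exists_prop, not_or]
  have mΩk : ∀ q : ℝ × ℝ, q ∈ Ωk k ↔
      q ∉ Q ∨ ∃ n, (1 ≤ n ∧ n ≤ k) ∧ q ∈ S n ∧ q ∉ L n ∧ q ∉ R n := by
    intro q; rw [hΩk]; simp only [Set.mem_union, Set.mem_diff, Set.mem_univ, true_and, Set.mem_iUnion, Set.mem_setOf_eq, Set.mem_Icc, exists_prop, not_or]
  have mQ : ∀ q : ℝ × ℝ, q ∈ Q ↔ (-1 ≤ q.1 ∧ q.1 ≤ 1) ∧ (-1 ≤ q.2 ∧ q.2 ≤ 1) := by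
    intro q; rw [hQ]; simp only [Set.mem_prod, Set.mem_Icc]
  have mS : ∀ n, ∀ q : ℝ × ℝ, q ∈ S n ↔ (-(bseq n : ℝ) < q.1 ∧ q.1 < bseq n) ∧
      ((3 : ℝ) ^ (-(n : ℤ)) < q.2 ∧ q.2 ≤ (3 : ℝ) ^ (1 - (n : ℤ))) := by
    intro n q; rw [hS]; simp only [Set.mem_prod, Set.mem_Ioo, Set.mem_Ioc]
  have mL : ∀ n, ∀ q : ℝ × ℝ, q ∈ L n ↔ (-(bseq n : ℝ) ≤ q.1 ∧ q.1 ≤ aseq n) ∧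
      (8 * (3 : ℝ) ^ (-((n : ℤ) + 1)) ≤ q.2 ∧ q.2 ≤ (3 : ℝ) ^ (1 - (n : ℤ))) := by
    intro n q; rw [hL]; simp only [Set.mem_prod, Set.mem_Icc]
  have mR : ∀ n, ∀ q : ℝ × ℝ, q ∈ R n ↔ (-(aseq n : ℝ) ≤ q.1 ∧ q.1 ≤ bseq n) ∧
      (5 * (3 : ℝ) ^ (-((n : ℤ) + 1)) ≤ q.2 ∧ q.2 ≤ 2 * (3 : ℝ) ^ (-(n : ℤ))) := by
    intro n q; rw [hR]; simp only [Set.mem_prod, Set.mem_Icc]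
  have hsub : Ωk k ⊆ Ω := by
    intro q hq
    rw [mΩk] at hq
    rw [mΩ]
    rcases hq with h | ⟨n, hn, h⟩
    · exact Or.inl h
    · exact Or.inr ⟨n, hn.1, h⟩
  obtain ⟨D, hD⟩ : ∃ D : Set (ℝ × ℝ), D = Set.Icc (-B) B ×ˢ Set.Icc 0 t := ⟨_, rfl⟩
  have mD : ∀ q : ℝ × ℝ, q ∈ D ↔ (-B ≤ q.1 ∧ q.1 ≤ B) ∧ (0 ≤ q.2 ∧ q.2 ≤ t) := by
    intro q; rw [hD]; simp only [Set.mem_prod, Set.mem_Icc]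
  have hDc : IsOpen Dᶜ := by
    rw [hD]; exact (isClosed_Icc.prod isClosed_Icc).isOpen_compl
  have hagree : ∀ q ∈ Dᶜ, (q ∈ Ωk k ↔ q ∈ Ω) := by
    intro q hq
    refine ⟨fun h => hsub h, fun h => ?_⟩
    rw [mΩ] at h
    rw [mΩk]
    rcases h with h | ⟨n, hn, h⟩
    · exact Or.inl h
    · by_cases hnk : n ≤ k
      · exact Or.inr ⟨n, ⟨hn, hnk⟩, h⟩
      · exfalso
        apply hq
        rw [mD]
        obtain ⟨⟨h1, h2⟩, h3, h4⟩ := (mS n q).1 h.1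
        have h5 := hbmono (k + 1) (by omega) n (by omega)
        rw [← hB] at h5
        have h6 : (0 : ℝ) < (3 : ℝ) ^ (-(n : ℤ)) := by positivity
        have h7 := hge1 n (by omega)
        exact ⟨⟨by linarith, by linarith⟩, by linarith, by linarith⟩
  have hcl : ∀ x, -B ≤ x → x ≤ B → (x, t) ∈ closure (Ωk k) := by
    intro x h1 h2
    have h3 : Set.Ioo (-B) B ×ˢ Set.Ioo t (5 / 3 * t) ⊆ Ωk k := by
      rintro q ⟨⟨q1, q2⟩, q3, q4⟩
      rw [mΩk]
      refine Or.inr ⟨k, ⟨hk, le_rfl⟩, ?_, ?_, ?_⟩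
      · rw [mS, ← ht, e2]
        exact ⟨⟨by linarith, by linarith⟩, by linarith, by linarith⟩
      · rw [mL, e1]
        rintro ⟨-, h, -⟩
        linarith
      · rw [mR, e1]
        rintro ⟨-, h, -⟩
        linarith
    exact aux_closure_rect (by linarith) (by linarith) h3 ⟨⟨h1, h2⟩, le_rfl, by
      show t ≤ 5 / 3 * t
      linarith⟩
  have hnot : ∀ q : ℝ × ℝ, -1 ≤ q.1 → q.1 ≤ 1 → -1 ≤ q.2 → q.2 ≤ t → q ∉ Ωk k := by
    intro q h1 h2 h3 h4 h
    rw [mΩk] at h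
    rcases h with h | ⟨n, hn, h⟩
    · exact h ((mQ q).2 ⟨⟨h1, h2⟩, h3, h4.trans ht1⟩)
    · have := ((mS n q).1 h.1).2.1
      linarith [hle n hn.2]
  have hnotΩ : ∀ q : ℝ × ℝ, -1 ≤ q.1 → q.1 ≤ 1 → t / 3 < q.2 → q.2 ≤ t →
      (q ∈ L (k + 1) ∨ q ∈ R (k + 1)) → q ∉ Ω := by
    intro q h1 h2 h3 h4 h5 h
    rw [mΩ] at h
    rcases h with h | ⟨n, hn, h⟩
    · exact h ((mQ q).2 ⟨⟨h1, h2⟩, by linarith, h4.trans ht1⟩)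
    · have h6 := ((mS n q).1 h.1).2
      rcases lt_trichotomy n (k + 1) with hn' | hn' | hn'
      · linarith [hle n (by omega), h6.1]
      · subst hn'
        rcases h5 with h5 | h5
        · exact h.2.1 h5
        · exact h.2.2 h5
      · linarith [hge2 n (by omega), h6.2]
  apply Metric.hausdorffDist_le_of_mem_dist ht0.le
  · rintro ⟨x, y⟩ hp
    by_cases hpD : (x, y) ∈ D
    · obtain ⟨⟨h1, h2⟩, h3, h4⟩ := (mD _).1 hpD
      dsimp only at h1 h2 h3 h4
      have hy : y = t := by
        by_contra hne
        have hlt : y < t := lt_of_le_of_ne h4 hne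
        have hO : IsOpen (Set.Ioo (-1 : ℝ) 1 ×ˢ Set.Ioo (-1 : ℝ) t) := isOpen_Ioo.prod isOpen_Ioo
        have hm : (x, y) ∈ Set.Ioo (-1 : ℝ) 1 ×ˢ Set.Ioo (-1 : ℝ) t :=
          ⟨⟨by show -1 < x; linarith, by show x < 1; linarith⟩, by show -1 < y; linarith, hlt⟩
        obtain ⟨q, ⟨⟨q1, q2⟩, q3, q4⟩, hq⟩ := mem_closure_iff.1 hp.1 _ hO hm
        exact hnot q q1.le q2.le q3.le q4.le hq
      subst hy
      by_cases hx : x ≤ A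
      · refine ⟨(x, y), aux_frontier_mem (closure_mono hsub (hcl x h1 h2)) ?_, by simpa using h3⟩
        refine hnotΩ _ ?_ ?_ ?_ ?_ (Or.inl ?_)
        · dsimp only; linarith
        · dsimp only; linarith
        · dsimp only; linarith
        · exact le_rfl
        · rw [mL, e5, e4, ← hA, ← hB]
          dsimp only
          exact ⟨⟨h1, hx⟩, by linarith, le_rfl⟩
      · push Not at hx
        refine ⟨(x, 2 / 3 * y), aux_frontier_mem ?_ ?_, ?_⟩
        · have h3 : Set.Ioo (-B) B ×ˢ Set.Ioo (2 / 3 * y) (8 / 9 * y) ⊆ Ω := by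
            rintro q ⟨⟨q1, q2⟩, q3, q4⟩
            rw [mΩ]
            refine Or.inr ⟨k + 1, by omega, ?_, ?_, ?_⟩
            · rw [mS, e3, e4, ← hB]
              exact ⟨⟨by linarith, by linarith⟩, by linarith, by linarith⟩
            · rw [mL, e5]
              rintro ⟨-, h, -⟩
              linarith
            · rw [mR, e3]
              rintro ⟨-, -, h⟩
              linarith
          exact aux_closure_rect (by linarith) (by linarith) h3 ⟨⟨h1, h2⟩, le_rfl, by
            show 2 / 3 * y ≤ 8 / 9 * y
            linarith⟩
        · refine hnotΩ _ ?_ ?_ ?_ ?_ (Or.inr ?_)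
          · dsimp only; linarith
          · dsimp only; linarith
          · dsimp only; linarith
          · dsimp only; linarith
          · rw [mR, e5, e3, ← hA, ← hB]
            dsimp only
            exact ⟨⟨by linarith, h2⟩, by linarith, by linarith⟩
        · rw [Prod.dist_eq]
          simp only [dist_self, Real.dist_eq]
          refine max_le h3 ?_
          rw [abs_le]
          constructor <;> linarith
    · exact ⟨(x, y), aux_frontier_congr hDc hpD hagree hp, by simpa using ht0.le⟩
  · rintro ⟨x, y⟩ hp
    by_cases hpD : (x, y) ∈ D
    · obtain ⟨⟨h1, h2⟩, h3, h4⟩ := (mD _).1 hpD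
      dsimp only at h1 h2 h3 h4
      refine ⟨(x, t), aux_frontier_mem (hcl x h1 h2) (hnot _ ?_ ?_ ?_ le_rfl), ?_⟩
      · dsimp only; linarith
      · dsimp only; linarith
      · dsimp only; linarith
      · rw [Prod.dist_eq]
        simp only [dist_self, Real.dist_eq]
        refine max_le ht0.le ?_
        rw [abs_le]
        constructor <;> linarith
    · exact ⟨(x, y), aux_frontier_congr hDc hpD (fun q hq => (hagree q hq).symm) hp,
        by simpa using ht0.le⟩
end

section
/- Let b > 0 be a real number. If the horizontal segment S = {(t, 0) : t ∈ [−b, b]} ⊆ ℝ × ℝ is a computable compact set, then b is a computable real number. -/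
/-- A real number is computable if some computable sequence of rationals
approximates it with precision `2⁻ⁿ`. -/
def IsComputableReal (x : ℝ) : Prop :=
  ∃ f : ℕ → ℚ, Computable f ∧ ∀ n : ℕ, |(f n : ℝ) - x| < (2 : ℝ) ^ (-(n : ℤ))

/-- A real number is lower-computable if some computable monotone nondecreasing
sequence of rationals converges to it. -/
def IsLowerComputableReal (x : ℝ) : Prop :=
  ∃ f : ℕ → ℚ, Computable f ∧ Monotone f ∧
    Filter.Tendsto (fun n => (f n : ℝ)) Filter.atTop (nhds x)

/-- A real number is upper-computable if some computable monotone nonincreasing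
sequence of rationals converges to it. -/
def IsUpperComputableReal (x : ℝ) : Prop :=
  ∃ f : ℕ → ℚ, Computable f ∧ Antitone f ∧
    Filter.Tendsto (fun n => (f n : ℝ)) Filter.atTop (nhds x)

/-- The finite subset of `ℝ × ℝ` determined by a finite set of rational points. -/
def ratFinsetToSet (s : Finset (ℚ × ℚ)) : Set (ℝ × ℝ) :=
  (fun q : ℚ × ℚ => (((q.1 : ℝ), (q.2 : ℝ)) : ℝ × ℝ)) '' ↑s

/-- A function `f : ℕ → Finset (ℚ × ℚ)` is computable if it is given by a
computable list-valued function (lists being a standard effective encoding of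
finite sets). -/
def ComputableFinsetFun (f : ℕ → Finset (ℚ × ℚ)) : Prop :=
  ∃ g : ℕ → List (ℚ × ℚ), Computable g ∧ ∀ n, (g n).toFinset = f n

/-- A nonempty compact set `K ⊆ ℝ × ℝ` is computable if a computable function
produces, for each `n`, a nonempty finite set of rational points at Hausdorff
distance less than `2⁻ⁿ` from `K`. -/
def IsComputableCompactSet (K : Set (ℝ × ℝ)) : Prop :=
  ∃ f : ℕ → Finset (ℚ × ℚ), ComputableFinsetFun f ∧
    ∀ n : ℕ, (f n).Nonempty ∧
      Metric.hausdorffDist K (ratFinsetToSet (f n)) < (2 : ℝ) ^ (-(n : ℤ))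

namespace CRS

/-- The set of raw codes of rationals. -/
def R (m : ℕ) : Prop :=
  0 < m.unpair.2 ∧ ((m.unpair.1 + 1) / 2).Coprime m.unpair.2

instance : DecidablePred R := fun m => by unfold R; infer_instance

/-- Code of an integer. -/
def ic (z : ℤ) : ℕ := Equiv.intEquivNat z

theorem ic_ofNat (n : ℕ) : ic (Int.ofNat n) = 2 * n := rfl
theorem ic_negSucc (n : ℕ) : ic (Int.negSucc n) = 2 * n + 1 := rfl

theorem ic_natAbs (z : ℤ) : (ic z + 1) / 2 = z.natAbs := by
  cases z with
  | ofNat n => rw [ic_ofNat]; simp; omega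
  | negSucc n => rw [ic_negSucc]; simp; omega

theorem ic_even (z : ℤ) : ic z % 2 = 0 ↔ 0 ≤ z := by
  cases z with
  | ofNat n => rw [ic_ofNat]; simp
  | negSucc n => rw [ic_negSucc]; simp [Int.negSucc_not_nonneg]

/-- Raw code of a rational. -/
def e0 (q : ℚ) : ℕ := Nat.pair (ic q.num) q.den

theorem e0_R (q : ℚ) : R (e0 q) := by
  simp only [R, e0, Nat.unpair_pair, ic_natAbs]
  exact ⟨q.den_pos, q.reduced⟩

theorem R_e0 (m : ℕ) (h : R m) : ∃ q, e0 q = m := by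
  obtain ⟨h1, h2⟩ := h
  obtain ⟨z, hz⟩ := Equiv.intEquivNat.surjective m.unpair.1
  have hz' : ic z = m.unpair.1 := hz
  rw [← hz', ic_natAbs] at h2
  refine ⟨⟨z, m.unpair.2, h1.ne', h2⟩, ?_⟩
  simp [e0, hz']

theorem range_iff (m : ℕ) :
    m ∈ Set.range (@Encodable.encode ℚ Rat.instEncodable) ↔ R m := by
  constructor
  · rintro ⟨q, rfl⟩; exact e0_R q
  · intro h; obtain ⟨q, hq⟩ := R_e0 m h; exact ⟨q, hq⟩

theorem encode_eq (q : ℚ) : @Encodable.encode ℚ (Primcodable.toEncodable) q = Nat.count R (e0 q) := by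
  have h : @Encodable.encode ℚ (Primcodable.toEncodable) q =
    (List.range (e0 q)).countP (fun m => @decide
      (m ∈ Set.range (@Encodable.encode ℚ Rat.instEncodable))
      (@Encodable.decidableRangeEncode ℚ Rat.instEncodable m)) := rfl
  rw [h, Nat.count]
  apply List.countP_congr
  intro m _
  simp only [decide_eq_true_eq]
  exact range_iff m

theorem primrec_half : Primrec (fun m : ℕ => (m.unpair.1 + 1) / 2) :=
  Primrec.nat_div.comp (Primrec.succ.comp (Primrec.fst.comp Primrec.unpair)) (Primrec.const 2)

theorem primrec_den : Primrec (fun m : ℕ => m.unpair.2) :=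
  Primrec.snd.comp Primrec.unpair

theorem primrec_R : PrimrecPred R := by
  have hdvd : PrimrecRel (fun a b : ℕ => b % a = 0) :=
    PrimrecRel.comp Primrec.eq (Primrec.nat_mod.comp Primrec.snd Primrec.fst) (Primrec.const 0)
  have h1 : PrimrecRel (fun (x : ℕ) (m : ℕ) =>
      ¬ (((m.unpair.1 + 1) / 2) % x = 0 ∧ m.unpair.2 % x = 0 ∧ ¬ (x = 1))) := by
    have a1 := PrimrecRel.comp (f := fun p : ℕ × ℕ => p.1) hdvd Primrec.fst
      (primrec_half.comp Primrec.snd)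
    have a2 := PrimrecRel.comp (f := fun p : ℕ × ℕ => p.1) hdvd Primrec.fst
      (primrec_den.comp Primrec.snd)
    have a3 : PrimrecPred (fun p : ℕ × ℕ => p.1 = 1) :=
      PrimrecRel.comp Primrec.eq Primrec.fst (Primrec.const 1)
    exact (a1.and (a2.and a3.not)).not
  have h2 := PrimrecRel.comp (PrimrecRel.forall_lt h1) (Primrec.succ.comp primrec_den) Primrec.id
  have h3 : PrimrecPred (fun m : ℕ => 0 < m.unpair.2) :=
    PrimrecRel.comp Primrec.nat_lt (Primrec.const 0) primrec_den
  refine (h3.and h2).of_eq fun m => ?_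
  unfold R
  refine and_congr_right fun hp => ?_
  simp only [id]
  constructor
  · intro h
    by_contra hc
    refine h (Nat.gcd ((m.unpair.1 + 1) / 2) m.unpair.2) ?_ ⟨?_, ?_, hc⟩
    · exact Nat.lt_succ_of_le (Nat.gcd_le_right _ hp)
    · exact Nat.mod_eq_zero_of_dvd (Nat.gcd_dvd_left _ _)
    · exact Nat.mod_eq_zero_of_dvd (Nat.gcd_dvd_right _ _)
  · rintro h x _ ⟨hx1, hx2, hx3⟩
    exact hx3 (Nat.eq_one_of_dvd_coprimes h (Nat.dvd_of_mod_eq_zero hx1)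
      (Nat.dvd_of_mod_eq_zero hx2))

theorem primrec_count : Primrec (Nat.count R) := by
  have hs : Primrec₂ (fun (n : ℕ) (c : ℕ) => if R n then c + 1 else c) :=
    Primrec.ite (primrec_R.comp Primrec.fst) (Primrec.succ.comp Primrec.snd) Primrec.snd
  refine (Primrec.nat_rec₁ 0 hs).of_eq fun n => ?_
  induction n with
  | zero => simp
  | succ n ih => simp only [Nat.count_succ, ← ih]; split_ifs <;> rfl

theorem computable_e0 : Computable e0 := by
  have hp : PrimrecRel (fun (q : ℚ) (m : ℕ) => R m ∧ Nat.count R m = @Encodable.encode ℚ Primcodable.toEncodable q) :=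
    (primrec_R.comp Primrec.snd).and (PrimrecRel.comp Primrec.eq
      (primrec_count.comp Primrec.snd) (Primrec.encode.comp Primrec.fst))
  have hb : Primrec₂ (fun (q : ℚ) (m : ℕ) =>
      decide (R m ∧ Nat.count R m = @Encodable.encode ℚ Primcodable.toEncodable q)) := hp.decide
  have hr := Partrec.rfind (p := fun (q : ℚ) (m : ℕ) =>
    (Part.some (decide (R m ∧ Nat.count R m = @Encodable.encode ℚ Primcodable.toEncodable q)))) hb.to_comp.partrec₂
  refine hr.of_eq_tot fun q => ?_
  refine Nat.mem_rfind.2 ?_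
  constructor
  · simp [e0_R, encode_eq]
  · intro m hm
    simp only [Part.mem_some_iff]
    symm
    rw [decide_eq_false_iff_not]
    rintro ⟨h1, h2⟩
    rw [encode_eq] at h2
    exact hm.ne (Nat.count_injective h1 (e0_R q) h2)

/-- Maximum step on raw codes: is `x` nonnegative and larger in absolute value? -/
def C (a x : ℕ) : Prop :=
  x.unpair.1 % 2 = 0 ∧
    ((a.unpair.1 + 1) / 2) * x.unpair.2 < ((x.unpair.1 + 1) / 2) * a.unpair.2

instance : DecidableRel C := fun a x => by unfold C; infer_instance

theorem primrec_C : PrimrecRel C := by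
  refine PrimrecPred.and ?_ ?_
  · exact PrimrecRel.comp Primrec.eq (Primrec.nat_mod.comp (Primrec.fst.comp
      (Primrec.unpair.comp Primrec.snd)) (Primrec.const 2)) (Primrec.const 0)
  · exact PrimrecRel.comp Primrec.nat_lt
      (Primrec.nat_mul.comp (primrec_half.comp Primrec.fst) (primrec_den.comp Primrec.snd))
      (Primrec.nat_mul.comp (primrec_half.comp Primrec.snd) (primrec_den.comp Primrec.fst))

theorem C_iff (a x : ℚ) (ha : 0 ≤ a) : C (e0 a) (e0 x) ↔ a < x := by
  have hna : 0 ≤ a.num := Rat.num_nonneg.2 ha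
  simp only [C, e0, Nat.unpair_pair, ic_even, ic_natAbs]
  rw [Rat.lt_iff]
  constructor
  · rintro ⟨h1, h2⟩
    zify at h2
    rwa [abs_of_nonneg h1, abs_of_nonneg hna] at h2
  · intro h
    have h1 : 0 ≤ x.num := Rat.num_nonneg.2 (ha.trans (Rat.lt_iff _ _ |>.2 h).le)
    refine ⟨h1, ?_⟩
    zify
    rwa [abs_of_nonneg h1, abs_of_nonneg hna]

/-- One step of the maximum. -/
def step (a x : ℚ) : ℚ := bif decide (C (e0 a) (e0 x)) then x else a

theorem computable_step : Computable₂ step := by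
  have hC : Computable₂ (fun a x : ℕ => decide (C a x)) := primrec_C.decide.to_comp
  exact Computable.cond (hC.comp (computable_e0.comp Computable.fst)
    (computable_e0.comp Computable.snd)) Computable.snd Computable.fst

theorem step_eq (a x : ℚ) (ha : 0 ≤ a) : step a x = max a x := by
  unfold step
  by_cases h : a < x
  · simp [(C_iff a x ha).2 h, h.le]
  · have : ¬ C (e0 a) (e0 x) := fun h' => h ((C_iff a x ha).1 h')
    simp [this, not_lt.1 h]

/-- Running maximum of first coordinates. -/
def F (l : List (ℚ × ℚ)) (k : ℕ) : ℚ :=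
  Nat.rec 0 (fun i acc => (l[i]?).elim acc (fun p => step acc p.1)) k

theorem F_spec (l : List (ℚ × ℚ)) (k : ℕ) :
    0 ≤ F l k ∧ (∀ i p, i < k → l[i]? = some p → p.1 ≤ F l k) ∧
      (F l k = 0 ∨ ∃ p ∈ l, F l k = p.1) := by
  induction k with
  | zero => simp [F]
  | succ k ih =>
    obtain ⟨h1, h2, h3⟩ := ih
    cases hk : l[k]? with
    | none =>
      have e : F l (k + 1) = F l k := by
        show (l[k]?).elim (F l k) (fun p => step (F l k) p.1) = _
        rw [hk]; rfl
      rw [e]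
      refine ⟨h1, fun i p hi hp => ?_, h3⟩
      rcases Nat.lt_succ_iff_lt_or_eq.1 hi with h | rfl
      · exact h2 i p h hp
      · simp [hk] at hp
    | some p0 =>
      have e : F l (k + 1) = max (F l k) p0.1 := by
        rw [← step_eq _ _ h1]
        show (l[k]?).elim (F l k) (fun p => step (F l k) p.1) = _
        rw [hk]; rfl
      rw [e]
      refine ⟨h1.trans (le_max_left _ _), fun i p hi hp => ?_, ?_⟩
      · rcases Nat.lt_succ_iff_lt_or_eq.1 hi with h | rfl
        · exact (h2 i p h hp).trans (le_max_left _ _)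
        · rw [hk] at hp; cases hp; exact le_max_right _ _
      · rcases max_choice (F l k) p0.1 with h | h
        · rw [h]; exact h3
        · rw [h]; exact Or.inr ⟨p0, List.mem_of_getElem? hk, rfl⟩

theorem computable_F (g : ℕ → List (ℚ × ℚ)) (hg : Computable g) :
    Computable (fun n => F (g n) (g n).length) := by
  have h1 : Computable (fun q : ℕ × (ℕ × ℚ) => (g q.1)[q.2.1]?) :=
    Computable.list_getElem?.comp (hg.comp Computable.fst) (Computable.fst.comp Computable.snd)
  have h2 : Computable (fun q : ℕ × (ℕ × ℚ) => q.2.2) := Computable.snd.comp Computable.snd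
  have h3 : Computable₂ (fun (q : ℕ × (ℕ × ℚ)) (p : ℚ × ℚ) => step q.2.2 p.1) :=
    computable_step.comp (h2.comp Computable.fst) (Computable.fst.comp Computable.snd)
  have h4 := Computable.option_casesOn h1 h2 h3
  have h5 : Computable₂ (fun (n : ℕ) (y : ℕ × ℚ) =>
      ((g n)[y.1]?).elim y.2 (fun p => step y.2 p.1)) :=
    h4.of_eq fun q => by
      beta_reduce
      cases (g q.1)[q.2.1]? <;> rfl
  exact Computable.nat_rec (Computable.list_length.comp hg) (Computable.const 0) h5

end CRS

/-- if the horizontal segment `[-b,b] × {0}` is a computable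
compact subset of the plane, then `b` is a computable real number. -/
theorem computableReal_of_computable_segment (b : ℝ) (hb : 0 < b)
    (h : IsComputableCompactSet {p : ℝ × ℝ | p.1 ∈ Set.Icc (-b) b ∧ p.2 = 0}) :
    IsComputableReal b := by
  obtain ⟨f, ⟨g, hg, hgf⟩, hf⟩ := h
  refine ⟨fun n => CRS.F (g n) (g n).length, CRS.computable_F g hg, fun n => ?_⟩
  obtain ⟨hne, hd⟩ := hf n
  set K : Set (ℝ × ℝ) := {p : ℝ × ℝ | p.1 ∈ Set.Icc (-b) b ∧ p.2 = 0} with hK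
  have hbK : ((b, 0) : ℝ × ℝ) ∈ K := ⟨⟨by linarith, le_rfl⟩, rfl⟩
  have hKb : Bornology.IsBounded K := by
    refine ((Metric.isBounded_Icc (-b) b).prod (Bornology.isBounded_singleton (x := (0 : ℝ)))).subset ?_
    rintro ⟨x, y⟩ ⟨h1, h2⟩
    exact ⟨h1, h2⟩
  have hSb : Bornology.IsBounded (ratFinsetToSet (f n)) :=
    ((f n).finite_toSet.image _).isBounded
  have hSn : (ratFinsetToSet (f n)).Nonempty := by
    obtain ⟨q, hq⟩ := hne
    exact ⟨_, q, hq, rfl⟩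
  have hfin := Metric.hausdorffEDist_ne_top_of_nonempty_of_bounded ⟨_, hbK⟩ hSn hKb hSb
  obtain ⟨h0, h1, h2⟩ := CRS.F_spec (g n) (g n).length
  have hδ : (0 : ℝ) < (2 : ℝ) ^ (-(n : ℤ)) := by positivity
  rw [abs_lt]
  constructor
  · obtain ⟨y, ⟨q, hq, rfl⟩, hy⟩ := Metric.exists_dist_lt_of_hausdorffDist_lt hbK hd hfin
    have hq' : q ∈ g n := by
      have : q ∈ f n := hq
      rwa [← hgf n, List.mem_toFinset] at this
    obtain ⟨i, hi, hiq⟩ := List.getElem_of_mem hq'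
    have hle := h1 i q hi (by rw [List.getElem?_eq_getElem hi, hiq])
    have hle' : (q.1 : ℝ) ≤ (CRS.F (g n) (g n).length : ℝ) := by exact_mod_cast hle
    rw [Prod.dist_eq] at hy
    have := (le_max_left _ _).trans_lt hy
    rw [Real.dist_eq, abs_lt] at this
    simp only at this
    linarith [this.1, this.2]
  · rcases h2 with h2 | ⟨q, hq, h2⟩
    · simp only [h2, Rat.cast_zero]; linarith
    · have hqS : (((q.1 : ℝ), (q.2 : ℝ)) : ℝ × ℝ) ∈ ratFinsetToSet (f n) := by
        refine ⟨q, ?_, rfl⟩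
        rw [← hgf n]; simpa using hq
      obtain ⟨y, hy, hyd⟩ := Metric.exists_dist_lt_of_hausdorffDist_lt' hqS hd hfin
      have := (le_max_left _ _).trans_lt ((Prod.dist_eq (x := y)).symm.trans_lt hyd)
      rw [Real.dist_eq, abs_lt] at this
      have hyb := hy.1.2
      simp only at this
      simp only [h2]
      linarith [this.1, this.2]
end

section
/- Let E ⊆ ℕ be a set that is recursively enumerable (E is the domain of some partial computable function ℕ →. ℕ) but such that the membership predicate n ∈ E is not computable (not `ComputablePred`). Then the real number α = Σ_{n ∈ E} 10^{−(n+1)} is lower-computable but is not a computable real number. -/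
def ratE (q : ℚ) : ℕ := Nat.pair (Encodable.encode q.num) q.den

theorem ratE_eq (q : ℚ) : @Encodable.encode ℚ Rat.instEncodable q = ratE q := by
  rfl

theorem ratE_inj : Function.Injective ratE := fun a b h => by
  rw [← ratE_eq, ← ratE_eq] at h
  exact Encodable.encode_injective h

theorem ratE_ofNat_aux : ∃ (_ : DecidablePred (· ∈ Set.range ratE)) (_ : Infinite (Set.range ratE)),
   ∀ n, ratE (Denumerable.ofNat ℚ n) = (Nat.Subtype.ofNat (Set.range ratE) n : ℕ) := by
  let _ := @Encodable.decidableRangeEncode ℚ Rat.instEncodable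
  let this : Infinite (Set.range (@Encodable.encode ℚ Rat.instEncodable)) :=
    Infinite.of_injective _ (Equiv.ofInjective _ Encodable.encode_injective).injective
  refine ⟨inferInstanceAs (DecidablePred (· ∈ Set.range (@Encodable.encode ℚ Rat.instEncodable))), this, fun n => ?_⟩
  have h : ∀ x : Set.range (@Encodable.encode ℚ Rat.instEncodable), ratE ((@Encodable.equivRangeEncode ℚ Rat.instEncodable).symm x) = x := by
    intro x
    have := (@Encodable.equivRangeEncode ℚ Rat.instEncodable).apply_symm_apply x
    exact congrArg Subtype.val this
  exact h _

theorem encInt (z : ℤ) : Encodable.encode z = Equiv.intEquivNat z := rfl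

theorem encInt_ofNat (n : ℕ) : Encodable.encode (Int.ofNat n) = 2 * n := by
  rw [encInt]; simp [Equiv.intEquivNat, Equiv.intEquivNatSumNat]; rfl
theorem encInt_negSucc (n : ℕ) : Encodable.encode (Int.negSucc n) = 2 * n + 1 := by
  rw [encInt]; simp [Equiv.intEquivNat, Equiv.intEquivNatSumNat]

theorem mem_range_ratE (m : ℕ) : m ∈ Set.range ratE ↔
    0 < m.unpair.2 ∧ ∀ d < m.unpair.2 + 1, ((m.unpair.1 + 1) / 2) % d = 0 → m.unpair.2 % d = 0 → d = 1 := by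
  have key : ∀ a b : ℕ, 0 < b → ((∀ d < b + 1, a % d = 0 → b % d = 0 → d = 1) ↔ a.Coprime b) := by
    intro a b hb
    constructor
    · intro h
      exact h _ (Nat.lt_succ_of_le (Nat.gcd_le_right _ hb)) (Nat.mod_eq_zero_of_dvd (Nat.gcd_dvd_left _ _))
        (Nat.mod_eq_zero_of_dvd (Nat.gcd_dvd_right _ _))
    · intro h d _ h1 h2
      exact Nat.eq_one_of_dvd_coprimes h (Nat.dvd_of_mod_eq_zero h1) (Nat.dvd_of_mod_eq_zero h2)
  constructor
  · rintro ⟨q, rfl⟩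
    have h1 := q.den_pos
    refine ⟨by simpa [ratE] using h1, ?_⟩
    have h2 := q.reduced
    simp only [ratE, Nat.unpair_pair]
    rw [key _ _ h1]
    rcases hq : q.num with n | n
    · rw [encInt_ofNat]; rw [hq] at h2; convert h2 using 1; simp; omega
    · rw [encInt_negSucc]; rw [hq] at h2; convert h2 using 1; simp; omega
  · rintro ⟨h0, h⟩
    rw [key _ _ h0] at h
    rcases Nat.even_or_odd' m.unpair.1 with ⟨k, hk | hk⟩
    · refine ⟨⟨Int.ofNat k, m.unpair.2, h0.ne', ?_⟩, ?_⟩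
      · convert h using 1; simp; omega
      · simp only [ratE]; rw [encInt_ofNat, ← hk, Nat.pair_unpair]
    · refine ⟨⟨Int.negSucc k, m.unpair.2, h0.ne', ?_⟩, ?_⟩
      · convert h using 1; simp; omega
      · simp only [ratE]; rw [encInt_negSucc, ← hk, Nat.pair_unpair]

/-- truncated numerator -/
def rnum (m : ℕ) : ℕ := if m.unpair.1 % 2 = 0 then m.unpair.1 / 2 else 0

theorem rnum_ratE (q : ℚ) : rnum (ratE q) = q.num.toNat := by
  simp only [rnum, ratE, Nat.unpair_pair]
  rcases hq : q.num with n | n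
  · rw [encInt_ofNat]; simp
  · rw [encInt_negSucc]; simp

theorem rnum_div (q : ℚ) : ((rnum (ratE q) : ℕ) : ℚ) / ((ratE q).unpair.2 : ℕ) = max q 0 := by
  rw [rnum_ratE]
  simp only [ratE, Nat.unpair_pair]
  rcases le_total 0 q with h | h
  · rw [max_eq_left h]
    have : ((q.num.toNat : ℤ) : ℚ) = q.num := by rw [Int.toNat_of_nonneg (Rat.num_nonneg.2 h)]
    rw [Int.cast_natCast] at this
    rw [this, Rat.num_div_den]
  · rw [max_eq_right h, Int.toNat_of_nonpos (Rat.num_nonpos.2 h)]; simp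

theorem rnum_primrec : Primrec rnum :=
  Primrec.ite ((Primrec.eq.comp (Primrec.nat_mod.comp (Primrec.fst.comp Primrec.unpair) (Primrec.const 2))
    (Primrec.const 0))) (Primrec.nat_div.comp (Primrec.fst.comp Primrec.unpair) (Primrec.const 2)) (Primrec.const 0)

theorem pow10_primrec : Primrec (fun n : ℕ => 10 ^ n) := by
  have := Primrec.nat_rec₁ (α := ℕ) (f := fun _ a => 10 * a) 1
    (Primrec.nat_mul.comp (Primrec.const 10) Primrec.snd).to₂
  exact this.of_eq fun n => by
    induction n with
    | zero => rfl
    | succ n ih => rw [pow_succ, ← ih, mul_comm]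

theorem rangeE_primrec : PrimrecPred (fun m => m ∈ Set.range ratE) := by
  have hR : PrimrecRel (fun d m : ℕ => ¬ (((m.unpair.1 + 1) / 2) % d = 0 ∧ m.unpair.2 % d = 0) ∨ d = 1) := by
    refine PrimrecPred.or (PrimrecPred.not (PrimrecPred.and ?_ ?_)) ?_
    · exact Primrec.eq.comp (Primrec.nat_mod.comp (Primrec.nat_div.comp (Primrec.succ.comp
        (Primrec.fst.comp (Primrec.unpair.comp Primrec.snd))) (Primrec.const 2)) Primrec.fst) (Primrec.const 0)
    · exact Primrec.eq.comp (Primrec.nat_mod.comp 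
        (Primrec.snd.comp (Primrec.unpair.comp Primrec.snd)) Primrec.fst) (Primrec.const 0)
    · exact Primrec.eq.comp Primrec.fst (Primrec.const 1)
  have h2 : PrimrecPred (fun m : ℕ => 0 < m.unpair.2 ∧ ∀ d < m.unpair.2 + 1,
      ¬ (((m.unpair.1 + 1) / 2) % d = 0 ∧ m.unpair.2 % d = 0) ∨ d = 1) := by
    refine PrimrecPred.and ?_ ?_
    · exact Primrec.nat_lt.comp (Primrec.const 0) (Primrec.snd.comp Primrec.unpair)
    · exact hR.forall_lt.comp (Primrec.succ.comp (Primrec.snd.comp Primrec.unpair)) Primrec.id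
  refine h2.of_eq fun m => ?_
  rw [mem_range_ratE]
  refine and_congr_right fun _ => forall₂_congr fun d _ => ?_
  tauto

theorem ratE_ofNat_computable : Computable (fun n => ratE (Denumerable.ofNat ℚ n)) := by
  obtain ⟨i1, i2, h⟩ := ratE_ofNat_aux
  have hex : ∀ y : ℕ, ∃ m, y + m + 1 ∈ Set.range ratE := by
    intro y
    obtain ⟨z, hz, hyz⟩ := (Set.infinite_coe_iff.1 i2).exists_gt y
    exact ⟨z - (y + 1), by rwa [show y + (z - (y+1)) + 1 = z by omega]⟩
  have hfind := Computable.find (P := fun y m : ℕ => y + m + 1 ∈ Set.range ratE)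
    (PrimrecPred.computablePred (rangeE_primrec.comp (Primrec.succ.comp
      (Primrec.nat_add.comp Primrec.fst Primrec.snd)))) hex
  have hstep : Computable₂ (fun (_ : ℕ) (p : ℕ × ℕ) => p.2 + Nat.find (hex p.2) + 1) :=
    (Computable.succ.comp (Primrec.nat_add.to_comp.comp (Computable.snd.comp Computable.snd)
      (hfind.comp (Computable.snd.comp Computable.snd)))).to₂
  have := Computable.nat_rec (f := fun n : ℕ => n) (g := fun _ => ((Nat.Subtype.ofNat (Set.range ratE) 0 : ℕ)))
    Computable.id (Computable.const _) hstep
  refine this.of_eq fun n => ?_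
  rw [h]
  induction n with
  | zero => rfl
  | succ n ih =>
    simp only [Nat.Subtype.ofNat, Nat.Subtype.succ] at ih ⊢
    simp only [ih]

theorem ratE_computable : Computable ratE :=
  (ratE_ofNat_computable.comp Computable.encode).of_eq fun q => congrArg ratE (Denumerable.ofNat_encode q)

theorem div_computable (a b : ℕ → ℕ) (ha : Computable a) (hb : Computable b) (hb0 : ∀ n, 0 < b n) :
    Computable (fun n => (a n : ℚ) / (b n : ℚ)) := by
  let P : ℕ → ℕ → Prop := fun n k =>
    rnum (ratE (Denumerable.ofNat ℚ k)) * b n = a n * (ratE (Denumerable.ofNat ℚ k)).unpair.2 ∧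
    (ratE (Denumerable.ofNat ℚ k)).unpair.1 % 2 = 0
  have hP : ∀ n k, P n k ↔ Denumerable.ofNat ℚ k = (a n : ℚ) / (b n : ℚ) := by
    intro n k
    generalize hq : Denumerable.ofNat ℚ k = q
    simp only [P, hq]
    have h1 := rnum_div q
    have hd : 0 < (ratE q).unpair.2 := by simpa [ratE] using q.den_pos
    have hd' : ((ratE q).unpair.2 : ℚ) ≠ 0 := by exact_mod_cast hd.ne'
    have hb' : (b n : ℚ) ≠ 0 := by exact_mod_cast (hb0 n).ne'
    have h2 : (ratE q).unpair.1 % 2 = 0 ↔ 0 ≤ q := by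
      simp only [ratE, Nat.unpair_pair]
      rw [← Rat.num_nonneg]
      rcases hq : q.num with n | n
      · rw [encInt_ofNat]; simp
      · rw [encInt_negSucc]; simp [Nat.add_mod]
    rw [h2]
    have h3 : rnum (ratE q) * b n = a n * (ratE q).unpair.2 ↔ max q 0 = (a n : ℚ) / (b n : ℚ) := by
      rw [← h1, div_eq_div_iff hd' hb']
      norm_cast
    rw [h3]
    constructor
    · rintro ⟨h, h0⟩
      rwa [max_eq_left h0] at h
    · intro h
      have h0 : 0 ≤ q := by rw [h]; positivity
      exact ⟨by rwa [max_eq_left h0], h0⟩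
  have hex : ∀ n, ∃ k, P n k := fun n => ⟨@Encodable.encode ℚ Rat.instDenumerable.toEncodable ((a n : ℚ) / (b n : ℚ)), by rw [hP]; exact Denumerable.ofNat_encode _⟩
  classical
  have hPc : ComputablePred (fun p : ℕ × ℕ => P p.1 p.2) := by
    refine Computable.computablePred ?_
    have hE : Computable fun p : ℕ × ℕ => ratE (Denumerable.ofNat ℚ p.2) :=
      ratE_ofNat_computable.comp Computable.snd
    have c1 : Computable fun p : ℕ × ℕ => decide (rnum (ratE (Denumerable.ofNat ℚ p.2)) * b p.1 = a p.1 * (ratE (Denumerable.ofNat ℚ p.2)).unpair.2) :=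
      Primrec.eq.decide.to_comp.comp
        (Primrec.nat_mul.to_comp.comp (rnum_primrec.to_comp.comp hE) (hb.comp Computable.fst))
        (Primrec.nat_mul.to_comp.comp (ha.comp Computable.fst) (Computable.snd.comp (Computable.unpair.comp hE)))
    have c2 : Computable fun p : ℕ × ℕ => decide ((ratE (Denumerable.ofNat ℚ p.2)).unpair.1 % 2 = 0) :=
      Primrec.eq.decide.to_comp.comp
        (Primrec.nat_mod.to_comp.comp (Computable.fst.comp (Computable.unpair.comp hE)) (Computable.const 2))
        (Computable.const 0)
    refine (Primrec.and.to_comp.comp c1 c2).of_eq fun p => ?_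
    simp [P]
  have := Computable.find hPc hex
  refine ((Computable.ofNat ℚ).comp this).of_eq fun n => ?_
  exact (hP _ _).1 (Nat.find_spec (hex n))

/-- The number whose decimal digits are given by `h`. -/
def dig (h : ℕ → Bool) (n : ℕ) : ℕ := Nat.rec 0 (fun k a => 10 * a + (h k).toNat) n

theorem dig_succ (h : ℕ → Bool) (n : ℕ) : dig h (n + 1) = 10 * dig h n + (h n).toNat := rfl

theorem dig_eq {K : Type*} [Field K] [CharZero K] (h : ℕ → Bool) (n : ℕ) :
    (dig h n : K) / 10 ^ n = ∑ i ∈ Finset.range n, if h i then ((10 : K) ^ (i + 1))⁻¹ else 0 := by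
  induction n with
  | zero => simp [dig]
  | succ n ih =>
    rw [Finset.sum_range_succ, ← ih, dig_succ]
    cases h n <;> (simp; field_simp; ring)

theorem sum10 : Summable (fun n : ℕ => ((10 : ℝ) ^ (n + 1))⁻¹) := by
  have := (summable_geometric_of_lt_one (r := (1/10 : ℝ)) (by norm_num) (by norm_num)).mul_left (1/10)
  refine this.congr fun n => ?_
  rw [pow_succ]; simp [mul_comm]

theorem lower_part (E : Set ℕ) (hre : ∃ g : ℕ →. ℕ, Nat.Partrec g ∧ E = {n | (g n).Dom}) :
    IsLowerComputableReal (∑' n : ℕ, E.indicator (fun n => ((10 : ℝ) ^ (n + 1))⁻¹) n) := by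
  obtain ⟨g, hg, rfl⟩ := hre
  obtain ⟨c, rfl⟩ := Nat.Partrec.Code.exists_code.1 hg
  let H : ℕ → ℕ → Bool := fun n i => (Nat.Partrec.Code.evaln n c i).isSome
  have Hmono : ∀ {m n i}, m ≤ n → H m i = true → H n i = true := by
    intro m n i hmn h
    obtain ⟨x, hx⟩ := Option.isSome_iff_exists.1 h
    exact Option.isSome_iff_exists.2 ⟨x, Nat.Partrec.Code.evaln_mono hmn hx⟩
  have Hdom : ∀ i, (c.eval i).Dom ↔ ∃ n, H n i = true := by
    intro i
    rw [Part.dom_iff_mem]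
    constructor
    · rintro ⟨y, hy⟩
      obtain ⟨k, hk⟩ := Nat.Partrec.Code.evaln_complete.1 hy
      exact ⟨k, Option.isSome_iff_exists.2 ⟨y, hk⟩⟩
    · rintro ⟨n, hn⟩
      obtain ⟨x, hx⟩ := Option.isSome_iff_exists.1 hn
      exact ⟨x, Nat.Partrec.Code.evaln_complete.2 ⟨n, hx⟩⟩
  have hH : Primrec₂ H := Primrec.option_isSome.comp (Nat.Partrec.Code.primrec_evaln.comp
    ((Primrec.fst.pair (Primrec.const c)).pair Primrec.snd))
  have hdig : Primrec (fun n => dig (H n) n) := by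
    refine (Primrec.nat_rec' (f := fun n : ℕ => n) (g := fun _ => 0)
      (h := fun n p => 10 * p.2 + (H n p.1).toNat) Primrec.id (Primrec.const 0) ?_).of_eq fun n => rfl
    exact Primrec.nat_add.comp (Primrec.nat_mul.comp (Primrec.const 10) (Primrec.snd.comp Primrec.snd))
      ((Primrec.dom_bool Bool.toNat).comp (hH.comp Primrec.fst (Primrec.fst.comp Primrec.snd)))
  refine ⟨fun n => (dig (H n) n : ℚ) / ((10 ^ n : ℕ) : ℚ),
    div_computable _ _ hdig.to_comp pow10_primrec.to_comp (fun n => by positivity), ?_, ?_⟩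
  · intro m n hmn
    simp only [Nat.cast_pow, Nat.cast_ofNat]
    rw [dig_eq, dig_eq]
    refine (Finset.sum_le_sum (fun i _ => ?_)).trans
      (Finset.sum_le_sum_of_subset_of_nonneg (Finset.range_mono hmn) (fun i _ _ => ?_))
    · by_cases h : H m i = true
      · rw [if_pos h, if_pos (Hmono hmn h)]
      · rw [if_neg h]; split_ifs <;> positivity
    · split_ifs <;> positivity
  · have := tendsto_tsum_of_dominated_convergence (𝓕 := Filter.atTop)
      (f := fun n i => if i < n ∧ H n i = true then ((10 : ℝ) ^ (i + 1))⁻¹ else 0)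
      (g := {n | (c.eval n).Dom}.indicator (fun n => ((10 : ℝ) ^ (n + 1))⁻¹)) sum10 ?_ ?_
    · refine this.congr fun n => ?_
      push_cast
      rw [dig_eq, tsum_eq_sum (s := Finset.range n)]
      · refine Finset.sum_congr rfl fun i hi => ?_
        simp [Finset.mem_range.1 hi]
      · intro i hi
        rw [if_neg]
        intro h
        exact hi (Finset.mem_range.2 h.1)
    · intro i
      by_cases hi : (c.eval i).Dom
      · obtain ⟨k, hk⟩ := (Hdom i).1 hi
        rw [Set.indicator_of_mem (by exact hi)]
        refine tendsto_const_nhds.congr' ?_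
        filter_upwards [Filter.eventually_ge_atTop (max k (i+1))] with n hn
        rw [if_pos ⟨by omega, Hmono (by omega) hk⟩]
      · rw [Set.indicator_of_notMem (by exact hi)]
        refine tendsto_const_nhds.congr fun n => ?_
        rw [if_neg]
        exact fun h => hi ((Hdom i).2 ⟨n, h.2⟩)
    · refine Filter.Eventually.of_forall fun n i => ?_
      split_ifs
      · rw [Real.norm_of_nonneg (by positivity)]
      · rw [norm_zero]; positivity

theorem tail10 (n : ℕ) : ∑' i : ℕ, ((10 : ℝ) ^ (i + n + 1))⁻¹ = ((10 : ℝ) ^ n)⁻¹ / 9 := by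
  have h := tsum_geometric_of_lt_one (r := (1/10 : ℝ)) (by norm_num) (by norm_num)
  have h2 : ∀ i : ℕ, ((10 : ℝ) ^ (i + n + 1))⁻¹ = (((10 : ℝ) ^ n)⁻¹ / 10) * (1/10) ^ i := by
    intro i
    rw [pow_succ, pow_add, one_div, inv_pow]; field_simp
  rw [tsum_congr h2, tsum_mul_left, h]
  ring

theorem upper_part (E : Set ℕ)
    (h : IsComputableReal (∑' n : ℕ, E.indicator (fun n => ((10 : ℝ) ^ (n + 1))⁻¹) n)) :
    ComputablePred (· ∈ E) := by
  classical
  obtain ⟨f, hf, hα⟩ := h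
  let D : ℕ → ℕ := dig (fun i => decide (i ∈ E))
  set α := ∑' n : ℕ, E.indicator (fun n => ((10 : ℝ) ^ (n + 1))⁻¹) n with hαd
  have hs : Summable (E.indicator (fun n => ((10 : ℝ) ^ (n + 1))⁻¹)) := sum10.indicator E
  have hD : ∀ n, (D n : ℝ) ≤ 10 ^ n * α ∧ 10 ^ n * α ≤ D n + 1 / 9 := by
    intro n
    have h1 := hs.sum_add_tsum_nat_add n
    have h2 : ∑ i ∈ Finset.range n, E.indicator (fun n => ((10 : ℝ) ^ (n + 1))⁻¹) i = (D n : ℝ) / 10 ^ n := by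
      rw [dig_eq]
      refine Finset.sum_congr rfl fun i _ => ?_
      simp [Set.indicator_apply]
    have h3 : 0 ≤ ∑' i, E.indicator (fun n => ((10 : ℝ) ^ (n + 1))⁻¹) (i + n) :=
      tsum_nonneg fun i => Set.indicator_nonneg (fun _ _ => by positivity) _
    have h4 : ∑' i, E.indicator (fun n => ((10 : ℝ) ^ (n + 1))⁻¹) (i + n) ≤ ((10 : ℝ) ^ n)⁻¹ / 9 := by
      rw [← tail10]
      refine Summable.tsum_le_tsum (fun i => ?_) ((summable_nat_add_iff n).2 hs) ((summable_nat_add_iff n).2 sum10)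
      exact Set.indicator_le_self' (fun _ _ => by positivity) _
    rw [h2, ← hαd] at h1
    have hp : (0 : ℝ) < 10 ^ n := by positivity
    rw [← h1, mul_add, mul_div_cancel₀ _ hp.ne']
    refine ⟨by nlinarith [mul_nonneg hp.le h3], ?_⟩
    have := mul_le_mul_of_nonneg_left h4 hp.le
    rw [← mul_div_assoc, mul_inv_cancel₀ hp.ne'] at this
    linarith
  let N : ℕ → ℕ := fun n => rnum (ratE (f (4 * n + 6)))
  let Q : ℕ → ℕ := fun n => (ratE (f (4 * n + 6))).unpair.2
  have hQ : ∀ n, 0 < Q n := fun n => by simpa [Q, ratE] using (f (4 * n + 6)).den_pos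
  have hα0 : 0 ≤ α := tsum_nonneg fun i => Set.indicator_nonneg (fun _ _ => by positivity) _
  have hNQ : ∀ n, |10 ^ (n+1) * ((N n : ℝ) / Q n) - 10 ^ (n+1) * α| < 1 / 4 := by
    intro n
    have h1 : ((N n : ℝ) / Q n) = max (f (4 * n + 6) : ℝ) 0 := by
      have := rnum_div (f (4 * n + 6))
      have h := congrArg (fun q : ℚ => (q : ℝ)) this
      simpa only [Rat.cast_div, Rat.cast_natCast, Rat.cast_max, Rat.cast_zero] using h
    have h2 : |max (f (4 * n + 6) : ℝ) 0 - α| ≤ |(f (4 * n + 6) : ℝ) - α| := by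
      have := abs_max_sub_max_le_abs (f (4 * n + 6) : ℝ) α 0
      rwa [max_eq_left hα0] at this
    rw [h1, ← mul_sub, abs_mul, abs_of_pos (by positivity)]
    have h3 := h2.trans_lt (hα (4 * n + 6))
    have h4 : (10 : ℝ) ^ (n+1) * 2 ^ (-((4 * n + 6 : ℕ) : ℤ)) ≤ 1 / 4 := by
      rw [zpow_neg, zpow_natCast, ← div_eq_mul_inv, div_le_div_iff₀ (by positivity) (by norm_num),
        show 4 * n + 6 = 4 * (n + 1) + 2 by ring, pow_add 2, pow_mul]
      have : (10 : ℝ) ^ (n+1) ≤ (2 ^ 4) ^ (n+1) := pow_le_pow_left₀ (by norm_num) (by norm_num) _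
      linarith
    exact (mul_lt_mul_of_pos_left h3 (by positivity)).trans_le h4
  have key : ∀ n, (2 * (10 ^ (n+1) * N n) + Q n) / (2 * Q n) = D (n+1) := by
    intro n
    have hq : (0 : ℝ) < Q n := by exact_mod_cast hQ n
    obtain ⟨a1, a2⟩ := hD (n+1)
    obtain ⟨b1, b2⟩ := abs_lt.1 (hNQ n)
    rw [← mul_div_assoc] at b1 b2
    have e1 : (D (n+1) : ℝ) - 1/4 < 10 ^ (n+1) * N n / Q n := by linarith
    have e2 : 10 ^ (n+1) * (N n : ℝ) / Q n < D (n+1) + 1/2 := by linarith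
    rw [lt_div_iff₀ hq] at e1
    rw [div_lt_iff₀ hq] at e2
    apply Nat.div_eq_of_lt_le
    · have : (D (n+1) * (2 * Q n) : ℝ) ≤ 2 * (10 ^ (n+1) * N n) + Q n := by nlinarith
      exact_mod_cast this
    · have : (2 * (10 ^ (n+1) * N n) + Q n : ℝ) < (D (n+1) + 1) * (2 * Q n) := by nlinarith
      exact_mod_cast this
  have hmem : ∀ n, n ∈ E ↔ (2 * (10 ^ (n+1) * N n) + Q n) / (2 * Q n) % 2 = 1 := by
    intro n
    rw [key]
    simp only [D, dig_succ]
    by_cases hn : n ∈ E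
    · simp [hn]; omega
    · simp [hn]; omega
  refine ComputablePred.of_eq (p := fun n => (2 * (10 ^ (n+1) * N n) + Q n) / (2 * Q n) % 2 = 1) ?_
    (fun n => (hmem n).symm)
  refine Computable.computablePred ?_
  have hE : Computable fun n => ratE (f (4 * n + 6)) := ratE_computable.comp (hf.comp
    (Primrec.nat_add.comp (Primrec.nat_mul.comp (Primrec.const 4) Primrec.id) (Primrec.const 6)).to_comp)
  have hN : Computable N := rnum_primrec.to_comp.comp hE
  have hQc : Computable Q := Computable.snd.comp (Computable.unpair.comp hE)
  have mul := Primrec.nat_mul.to_comp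
  have hp : Computable fun n : ℕ => 10 ^ (n+1) := (pow10_primrec.comp Primrec.succ).to_comp
  exact Primrec.eq.decide.to_comp.comp (Primrec.nat_mod.to_comp.comp (Primrec.nat_div.to_comp.comp
    (Primrec.nat_add.to_comp.comp (mul.comp (Computable.const 2) (mul.comp hp hN)) hQc)
    (mul.comp (Computable.const 2) hQc)) (Computable.const 2)) (Computable.const 1)

/-- if `E ⊆ ℕ` is recursively enumerable but its membership
predicate is not computable, then `Σ_{n ∈ E} 10^{-(n+1)}` is lower-computable
but not computable. -/
theorem re_sum_lowerComputable_not_computable (E : Set ℕ)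
    (hre : ∃ g : ℕ →. ℕ, Nat.Partrec g ∧ E = {n | (g n).Dom})
    (hnc : ¬ ComputablePred (· ∈ E)) :
    IsLowerComputableReal (∑' n : ℕ, E.indicator (fun n => ((10 : ℝ) ^ (n + 1))⁻¹) n) ∧
      ¬ IsComputableReal (∑' n : ℕ, E.indicator (fun n => ((10 : ℝ) ^ (n + 1))⁻¹) n) := by
  exact ⟨lower_part E hre, fun h => hnc (upper_part E h)⟩
end

section
/- Let K ⊆ ℝ × ℝ be a nonempty compact set. Then K is a computable compact set if and only if both of the following hold: (i) there is a sequence (x_n) of points of K that is uniformly computable and dense in K, and (ii) the complement (ℝ × ℝ) \ K is a lower-computable open set. -/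
/-- The point of `ℝ × ℝ` determined by a rational pair. -/
def ratPointToReal (q : ℚ × ℚ) : ℝ × ℝ := ((q.1 : ℝ), (q.2 : ℝ))

/-- A sequence of points of the plane is uniformly computable if a single
computable function produces `2⁻ᵐ`-approximations of each of its terms. -/
def UniformlyComputableSeq (x : ℕ → ℝ × ℝ) : Prop :=
  ∃ g : ℕ × ℕ → ℚ × ℚ, Computable g ∧
    ∀ n m : ℕ, dist (ratPointToReal (g (n, m))) (x n) < (2 : ℝ) ^ (-(m : ℤ))

/-- An open subset of the plane is lower-computable if it is the union of a
computable sequence of rational balls. -/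
def IsLowerComputableOpen (U : Set (ℝ × ℝ)) : Prop :=
  ∃ c : ℕ → ℚ × ℚ, ∃ r : ℕ → ℚ, Computable c ∧ Computable r ∧
    U = ⋃ n : ℕ, Metric.ball (ratPointToReal (c n)) (r n)


/-! ### Computable predicates -/

open Classical in
/-- Computable predicates, with classical decidability. -/
def CP {α : Type*} [Primcodable α] (p : α → Prop) : Prop := Computable fun a => decide (p a)

section CPsec
variable {α β : Type*} [Primcodable α] [Primcodable β]

theorem CP.of_iff {p q : α → Prop} (hp : CP p) (h : ∀ a, p a ↔ q a) : CP q :=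
  Computable.of_eq hp fun a => by simp [h a]

theorem CP.of_bool {f : α → Bool} (hf : Computable f) : CP fun a => f a = true :=
  Computable.of_eq hf fun a => by simp

theorem CP.comp {p : β → Prop} (hp : CP p) {f : α → β} (hf : Computable f) :
    CP fun a => p (f a) :=
  Computable.comp hp hf

theorem CP.not {p : α → Prop} (hp : CP p) : CP fun a => ¬ p a :=
  Computable.of_eq (Primrec.not.to_comp.comp hp) fun a => by simp

theorem CP.and {p q : α → Prop} (hp : CP p) (hq : CP q) : CP fun a => p a ∧ q a :=
  Computable.of_eq (Primrec.and.to_comp.comp hp hq) fun a => by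
    by_cases h1 : p a <;> by_cases h2 : q a <;> simp [h1, h2]

theorem CP.or {p q : α → Prop} (hp : CP p) (hq : CP q) : CP fun a => p a ∨ q a :=
  Computable.of_eq (Primrec.or.to_comp.comp hp hq) fun a => by
    by_cases h1 : p a <;> by_cases h2 : q a <;> simp [h1, h2]

theorem CP.eq {f g : α → β} (hf : Computable f) (hg : Computable g) : CP fun a => f a = g a := by
  classical
  have h := (Primrec.eq (α := β)).decide.to_comp.comp hf hg
  exact Computable.of_eq h fun a => by simp

theorem CP.nat_lt {f g : α → ℕ} (hf : Computable f) (hg : Computable g) :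
    CP fun a => f a < g a := by
  have h := Primrec.nat_lt.decide.to_comp.comp hf hg
  exact Computable.of_eq h fun a => by simp

theorem CP.ball {b : α → ℕ} {p : α → ℕ → Prop} (hb : Computable b)
    (hp : CP fun x : α × ℕ => p x.1 x.2) : CP fun a => ∀ k < b a, p a k := by
  classical
  have h1 : Computable₂ fun (a : α) (y : ℕ × Bool) => (y.2 && decide (p a y.1)) := by
    have h2 : Computable fun z : α × (ℕ × Bool) => decide (p z.1 z.2.1) :=
      Computable.comp hp
        (Computable.pair Computable.fst (Computable.fst.comp Computable.snd))
    have h3 : Computable fun z : α × (ℕ × Bool) => z.2.2 := Computable.snd.comp Computable.snd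
    have := Primrec.and.to_comp.comp h3 h2
    exact this
  have h := Computable.nat_rec hb (Computable.const true) h1
  refine Computable.of_eq h fun a => ?_
  beta_reduce
  generalize b a = n
  induction n with
  | zero => simp
  | succ n ih =>
    have ih' : (Nat.rec true (fun y IH => IH && decide (p a y)) n : Bool) = true ↔
      ∀ k < n, p a k := by
      refine (Bool.eq_iff_iff.1 ih).trans ?_
      simp
    simp only [Nat.lt_succ_iff_lt_or_eq]
    rw [Bool.and_eq_decide, decide_eq_decide, ih', decide_eq_true_eq]
    constructor
    · rintro ⟨h1, h2⟩ k (hk | rfl)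
      exacts [h1 k hk, h2]
    · exact fun h => ⟨fun k hk => h k (Or.inl hk), h n (Or.inr rfl)⟩

theorem CP.bex {b : α → ℕ} {p : α → ℕ → Prop} (hb : Computable b)
    (hp : CP fun x : α × ℕ => p x.1 x.2) : CP fun a => ∃ k < b a, p a k :=
  (CP.ball (p := fun a k => ¬ p a k) hb hp.not).not.of_iff fun a => by push Not; rfl

theorem CP.ball_list {l : α → List β} {p : α → β → Prop} (hl : Computable l)
    (hp : CP fun x : α × β => p x.1 x.2) : CP fun a => ∀ y ∈ l a, p a y := by
  classical
  rcases isEmpty_or_nonempty β with hβ | ⟨⟨d⟩⟩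
  · refine (CP.of_bool (Computable.const true)).of_iff fun a => ?_
    simp only [true_iff]
    exact fun y => hβ.elim y
  have h : CP fun a => ∀ k < (l a).length, p a (((l a)[k]?).getD d) := by
    refine CP.ball (Computable.list_length.comp hl) ?_
    exact hp.comp (f := fun x : α × ℕ => (x.1, ((l x.1)[x.2]?).getD d))
      (Computable.pair Computable.fst (Computable.option_getD
        (Computable.list_getElem?.comp (hl.comp Computable.fst) Computable.snd)
        (Computable.const d)))
  refine h.of_iff fun a => ?_
  constructor
  · intro H y hy
    obtain ⟨k, hk, rfl⟩ := List.getElem_of_mem hy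
    simpa [hk] using H k hk
  · intro H k hk
    have := H _ (List.getElem_mem hk)
    simpa [hk] using this

theorem CP.mem_list {l : α → List β} {f : α → β} (hl : Computable l) (hf : Computable f) :
    CP fun a => f a ∈ l a := by
  have := (CP.ball_list (p := fun a y => ¬ f a = y) hl
    (CP.eq (hf.comp Computable.fst) Computable.snd).not).not
  refine this.of_iff fun a => ?_
  simp

theorem CP.choose_nat {p : α → ℕ → Prop} (hp : CP fun x : α × ℕ => p x.1 x.2)
    (h : ∀ a, ∃ b, p a b) : ∃ f : α → ℕ, Computable f ∧ ∀ a, p a (f a) := by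
  classical
  have h1 : Partrec₂ fun (a : α) (n : ℕ) => (Part.some (decide (p a n)) : Part Bool) := by
    have : Computable₂ fun (a : α) (n : ℕ) => decide (p a n) :=
      Computable.of_eq hp fun a => by simp
    exact this.partrec₂
  have h2 := Partrec.rfind h1
  refine ⟨fun a => Nat.find (h a), Partrec.of_eq_tot h2 fun a => ?_, fun a => Nat.find_spec (h a)⟩
  refine Nat.mem_rfind.2 ?_
  refine ⟨?_, ?_⟩
  · have := Nat.find_spec (h a)
    simpa using this
  · intro m hm
    have := Nat.find_min (h a) hm
    simpa using this

theorem CP.choose {p : α → β → Prop} (hp : CP fun x : α × β => p x.1 x.2)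
    (h : ∀ a, ∃ b, p a b) : ∃ f : α → β, Computable f ∧ ∀ a, p a (f a) := by
  classical
  rcases isEmpty_or_nonempty β with hβ | ⟨⟨d⟩⟩
  · have : IsEmpty α := ⟨fun a => hβ.elim (h a).choose⟩
    refine ⟨fun a => this.elim a, Computable.encode_iff.1 ?_, fun a => this.elim a⟩
    exact (Computable.const (0 : ℕ)).of_eq fun a => this.elim a
  obtain ⟨f, hf, hf'⟩ := CP.choose_nat (p := fun a n => p a ((Encodable.decode (α := β) n).getD d))
    (hp.comp (f := fun x : α × ℕ => (x.1, (Encodable.decode (α := β) x.2).getD d))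
      (Computable.pair Computable.fst
        (Computable.option_getD (Computable.decode.comp Computable.snd) (Computable.const d))))
    (fun a => by
      obtain ⟨b, hb⟩ := h a
      exact ⟨Encodable.encode b, by simpa using hb⟩)
  exact ⟨fun a => (Encodable.decode (α := β) (f a)).getD d,
    Computable.option_getD (Computable.decode.comp hf) (Computable.const d), hf'⟩

theorem Computable.of_graph {f : α → β} (h : CP fun x : α × β => x.2 = f x.1) : Computable f := by
  obtain ⟨g, hg, hg'⟩ := CP.choose (p := fun a b => b = f a) h fun a => ⟨_, rfl⟩
  exact hg.of_eq hg'

theorem computable_range_map {b : α → ℕ} {f : α → ℕ → β} (hb : Computable b)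
    (hf : Computable₂ f) : Computable fun a => (List.range (b a)).map (f a) := by
  have h1 : Computable₂ fun (a : α) (y : ℕ × List β) => y.2 ++ [f a y.1] := by
    have h2 : Computable fun z : α × (ℕ × List β) => f z.1 z.2.1 :=
      hf.comp Computable.fst (Computable.fst.comp Computable.snd)
    have h3 : Computable fun z : α × (ℕ × List β) => z.2.2 := Computable.snd.comp Computable.snd
    have := Computable.list_concat.comp h3 h2
    exact this
  have h := Computable.nat_rec hb (Computable.const []) h1
  refine Computable.of_eq h fun a => ?_
  generalize b a = n
  induction n with
  | zero => simp
  | succ n ih => simp [ih, List.range_succ]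

theorem computable_ite {p : α → Prop} [DecidablePred p] {f g : α → β} (hp : CP p)
    (hf : Computable f) (hg : Computable g) : Computable fun a => if p a then f a else g a :=
  Computable.of_eq (Computable.cond hp hf hg) fun a => by by_cases h : p a <;> simp [h]

theorem cnat_add {f g : α → ℕ} (hf : Computable f) (hg : Computable g) :
    Computable fun a => f a + g a := Primrec.nat_add.to_comp.comp hf hg

theorem cnat_mul {f g : α → ℕ} (hf : Computable f) (hg : Computable g) :
    Computable fun a => f a * g a := Primrec.nat_mul.to_comp.comp hf hg

end CPsec

/-! ### Rational arithmetic -/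

/-- The code of a rational in the `Encodable` instance. -/
def rawCode (q : ℚ) : ℕ := Nat.pair (Encodable.encode q.num) q.den

/-- The range of `rawCode`. -/
def rawSet (n : ℕ) : Prop :=
  0 < n.unpair.2 ∧ ((Denumerable.ofNat ℤ n.unpair.1).natAbs).Coprime n.unpair.2

theorem rawSet_iff (n : ℕ) : rawSet n ↔ ∃ q : ℚ, rawCode q = n := by
  constructor
  · rintro ⟨h1, h2⟩
    refine ⟨⟨Denumerable.ofNat ℤ n.unpair.1, n.unpair.2, h1.ne', h2⟩, ?_⟩
    simp only [rawCode]
    rw [Denumerable.encode_ofNat, Nat.pair_unpair]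
  · rintro ⟨q, rfl⟩
    simp only [rawSet, rawCode, Nat.unpair_pair]
    rw [Denumerable.ofNat_encode]
    exact ⟨q.pos, q.reduced⟩

open Classical in
theorem encode_rat (q : ℚ) :
    @Encodable.encode ℚ Rat.instDenumerable.toEncodable q = Nat.count rawSet (rawCode q) := by
  have h : @Encodable.encode ℚ Rat.instDenumerable.toEncodable q =
    (List.range (rawCode q)).countP
    (fun n => @decide (n ∈ Set.range (@Encodable.encode ℚ Rat.instEncodable))
      (Encodable.decidableRangeEncode ℚ n)) := rfl
  rw [h, Nat.count_eq_card_filter_range, List.countP_eq_length_filter]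
  change _ = ((List.range (rawCode q)).filter (fun n => decide (rawSet n))).length
  congr 1
  apply List.filter_congr
  intro n _
  rw [decide_eq_decide, rawSet_iff]
  rfl

/-- Positive part of an integer from its code. -/
theorem int_code (n : ℕ) : (Denumerable.ofNat ℤ n) =
    if n.bodd then Int.negSucc n.div2 else Int.ofNat n.div2 := by
  have h : Encodable.encode (if n.bodd then Int.negSucc n.div2 else Int.ofNat n.div2 : ℤ) = n := by
    conv_rhs => rw [← Nat.bodd_add_div2 n]
    cases n.bodd
    · simp
      change 2 * _ = _
      rfl
    · simp
      change 2 * n.div2 + 1 = _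
      ring
  rw [← h, Denumerable.ofNat_encode, h]

theorem toNat_computable : Computable fun z : ℤ => z.toNat := by
  have h : Computable fun n : ℕ => if n.bodd = true then 0 else n.div2 :=
    computable_ite (CP.of_bool Computable.nat_bodd) (Computable.const 0) Computable.nat_div2
  refine (h.comp (Computable.encode (α := ℤ))).of_eq fun z => ?_
  conv_rhs => rw [← Denumerable.ofNat_encode z, int_code]
  change (if (Encodable.encode z).bodd = true then 0 else (Encodable.encode z).div2) = _
  split_ifs <;> rfl

theorem negToNat_computable : Computable fun z : ℤ => (-z).toNat := by
  have h : Computable fun n : ℕ => if n.bodd = true then n.div2 + 1 else 0 :=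
    computable_ite (CP.of_bool Computable.nat_bodd)
      (Computable.succ.comp Computable.nat_div2) (Computable.const 0)
  refine (h.comp (Computable.encode (α := ℤ))).of_eq fun z => ?_
  conv_rhs => rw [← Denumerable.ofNat_encode z, int_code]
  change (if (Encodable.encode z).bodd = true then (Encodable.encode z).div2 + 1 else 0) = _
  split_ifs
  · rfl
  · simp

theorem natAbs_computable : Computable fun z : ℤ => z.natAbs :=
  (cnat_add toNat_computable negToNat_computable).of_eq fun z => by lia

theorem coprime_cp {f g : ℕ → ℕ} (ha : Computable f) (hd : Computable g) :
    CP fun n => 0 < g n ∧ (f n).Coprime (g n) := by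
  have h1 := CP.nat_lt (Computable.const 0) hd
  have hmod : ∀ {f : ℕ → ℕ}, Computable f → CP fun x : ℕ × ℕ => f x.1 % x.2 = 0 := fun hf =>
    CP.eq (Primrec.nat_mod.to_comp.comp (hf.comp Computable.fst) Computable.snd)
      (Computable.const 0)
  have h2 := CP.ball (p := fun n k => ¬ (¬ k = 1 ∧ f n % k = 0 ∧ g n % k = 0))
    (Computable.succ.comp hd)
    ((CP.eq Computable.snd (Computable.const 1)).not.and ((hmod ha).and (hmod hd))).not
  refine (h1.and h2).of_iff fun n => ?_
  refine and_congr_right fun hpos => ?_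
  constructor
  · intro h
    by_contra hc
    have hle := Nat.gcd_le_right (f n) hpos
    exact h _ (Nat.lt_succ_of_le hle) ⟨hc, Nat.mod_eq_zero_of_dvd (Nat.gcd_dvd_left _ _),
      Nat.mod_eq_zero_of_dvd (Nat.gcd_dvd_right _ _)⟩
  · rintro h k - ⟨h1, h2, h3⟩
    exact h1 (Nat.eq_one_of_dvd_coprimes h (Nat.dvd_of_mod_eq_zero h2) (Nat.dvd_of_mod_eq_zero h3))

theorem rawSet_cp : CP rawSet := by
  have hd : Computable fun n : ℕ => n.unpair.2 := Computable.snd.comp Computable.unpair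
  have ha : Computable fun n : ℕ => (Denumerable.ofNat ℤ n.unpair.1).natAbs :=
    natAbs_computable.comp ((Computable.ofNat ℤ).comp (Computable.fst.comp Computable.unpair))
  exact coprime_cp ha hd

open Classical in
theorem count_rawSet : Computable fun n => Nat.count rawSet n := by
  have h1 : Computable₂ fun (_ : ℕ) (y : ℕ × ℕ) => if rawSet y.1 then y.2 + 1 else y.2 := by
    have h : Computable fun z : ℕ × (ℕ × ℕ) => if rawSet z.2.1 then z.2.2 + 1 else z.2.2 :=
      computable_ite (rawSet_cp.comp (Computable.fst.comp Computable.snd))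
        (Computable.succ.comp (Computable.snd.comp Computable.snd))
        (Computable.snd.comp Computable.snd)
    exact h
  refine (Computable.nat_rec Computable.id (Computable.const 0) h1).of_eq fun n => ?_
  induction n with
  | zero => simp
  | succ n ih =>
    rw [Nat.count_succ, ← ih]
    simp only [id]
    split_ifs <;> rfl

theorem rawCode_computable : Computable rawCode := by
  classical
  refine Computable.of_graph ?_
  have h1 : CP fun x : ℚ × ℕ => rawSet x.2 := rawSet_cp.comp Computable.snd
  have h2 : CP fun x : ℚ × ℕ => Nat.count rawSet x.2 =
      @Encodable.encode ℚ Rat.instDenumerable.toEncodable x.1 :=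
    CP.eq (count_rawSet.comp Computable.snd) (Computable.encode.comp Computable.fst)
  refine (h1.and h2).of_iff fun ⟨q, n⟩ => ?_
  have hq : rawSet (rawCode q) := (rawSet_iff _).2 ⟨q, rfl⟩
  simp only [encode_rat]
  constructor
  · rintro ⟨a, b⟩
    exact Nat.count_injective a hq b
  · rintro rfl
    exact ⟨hq, rfl⟩

/-- Positive part of the numerator. -/
def qu (q : ℚ) : ℕ := q.num.toNat
/-- Negative part of the numerator. -/
def qv (q : ℚ) : ℕ := (-q.num).toNat

theorem qnum_computable : Computable fun q : ℚ => q.num :=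
  ((Computable.ofNat ℤ).comp (Computable.fst.comp (Computable.unpair.comp
    rawCode_computable))).of_eq fun q => by
      simp only [rawCode, Nat.unpair_pair]
      exact Denumerable.ofNat_encode _

theorem qd_computable : Computable fun q : ℚ => q.den :=
  (Computable.snd.comp (Computable.unpair.comp
    rawCode_computable)).of_eq fun q => by
      simp only [rawCode, Nat.unpair_pair]

theorem qu_computable : Computable qu := toNat_computable.comp qnum_computable
theorem qv_computable : Computable qv := negToNat_computable.comp qnum_computable

theorem q_eq (q : ℚ) : q = ((qu q : ℚ) - qv q) / q.den := by
  have h : q.num = (qu q : ℤ) - qv q := by unfold qu qv; lia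
  have h' : (q.num : ℚ) = (qu q : ℚ) - qv q := by exact_mod_cast congrArg (Int.cast (R := ℚ)) h
  rw [← h', Rat.num_div_den]

section Qsec
variable {α : Type*} [Primcodable α]

theorem CP.qlt {f g : α → ℚ} (hf : Computable f) (hg : Computable g) :
    CP fun a => f a < g a := by
  have h := CP.nat_lt
    (cnat_add (cnat_mul (qu_computable.comp hf) (qd_computable.comp hg))
      (cnat_mul (qv_computable.comp hg) (qd_computable.comp hf)))
    (cnat_add (cnat_mul (qu_computable.comp hg) (qd_computable.comp hf))
      (cnat_mul (qv_computable.comp hf) (qd_computable.comp hg)))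
  refine h.of_iff fun a => ?_
  have h1 : (0 : ℚ) < (f a).den := by exact_mod_cast (f a).pos
  have h2 : (0 : ℚ) < (g a).den := by exact_mod_cast (g a).pos
  conv_rhs => rw [q_eq (f a), q_eq (g a), div_lt_div_iff₀ h1 h2]
  rw [← Nat.cast_lt (α := ℚ)]
  push_cast
  constructor <;> intro h <;> linarith

theorem cq_add {f g : α → ℚ} (hf : Computable f) (hg : Computable g) :
    Computable fun a => f a + g a := by
  refine Computable.of_graph ?_
  have hf' := hf.comp (Computable.fst (α := α) (β := ℚ))
  have hg' := hg.comp (Computable.fst (α := α) (β := ℚ))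
  have hq := (Computable.snd (α := α) (β := ℚ))
  have dd := cnat_mul (qd_computable.comp hf') (qd_computable.comp hg')
  have h := CP.eq
    (cnat_add (cnat_mul (qu_computable.comp hq) dd)
      (cnat_mul (cnat_add (cnat_mul (qv_computable.comp hf') (qd_computable.comp hg'))
        (cnat_mul (qv_computable.comp hg') (qd_computable.comp hf'))) (qd_computable.comp hq)))
    (cnat_add (cnat_mul (qv_computable.comp hq) dd)
      (cnat_mul (cnat_add (cnat_mul (qu_computable.comp hf') (qd_computable.comp hg'))
        (cnat_mul (qu_computable.comp hg') (qd_computable.comp hf'))) (qd_computable.comp hq)))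
  refine h.of_iff fun ⟨a, q⟩ => ?_
  have h1 : (0 : ℚ) < (f a).den := by exact_mod_cast (f a).pos
  have h2 : (0 : ℚ) < (g a).den := by exact_mod_cast (g a).pos
  have h3 : (0 : ℚ) < q.den := by exact_mod_cast q.pos
  conv_rhs => rw [q_eq (f a), q_eq (g a), q_eq q, div_add_div _ _ h1.ne' h2.ne',
    div_eq_div_iff h3.ne' (by positivity)]
  rw [← Nat.cast_inj (R := ℚ)]
  push_cast
  constructor <;> intro h <;> linarith

theorem cq_mul {f g : α → ℚ} (hf : Computable f) (hg : Computable g) :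
    Computable fun a => f a * g a := by
  refine Computable.of_graph ?_
  have hf' := hf.comp (Computable.fst (α := α) (β := ℚ))
  have hg' := hg.comp (Computable.fst (α := α) (β := ℚ))
  have hq := (Computable.snd (α := α) (β := ℚ))
  have dd := cnat_mul (qd_computable.comp hf') (qd_computable.comp hg')
  have h := CP.eq
    (cnat_add (cnat_mul (qu_computable.comp hq) dd)
      (cnat_mul (cnat_add (cnat_mul (qv_computable.comp hf') (qu_computable.comp hg'))
        (cnat_mul (qu_computable.comp hf') (qv_computable.comp hg'))) (qd_computable.comp hq)))
    (cnat_add (cnat_mul (qv_computable.comp hq) dd)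
      (cnat_mul (cnat_add (cnat_mul (qu_computable.comp hf') (qu_computable.comp hg'))
        (cnat_mul (qv_computable.comp hf') (qv_computable.comp hg'))) (qd_computable.comp hq)))
  refine h.of_iff fun ⟨a, q⟩ => ?_
  have h1 : (0 : ℚ) < (f a).den := by exact_mod_cast (f a).pos
  have h2 : (0 : ℚ) < (g a).den := by exact_mod_cast (g a).pos
  have h3 : (0 : ℚ) < q.den := by exact_mod_cast q.pos
  conv_rhs => rw [q_eq (f a), q_eq (g a), q_eq q, div_mul_div_comm,
    div_eq_div_iff h3.ne' (by positivity)]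
  rw [← Nat.cast_inj (R := ℚ)]
  push_cast
  constructor <;> intro h <;> linarith

theorem cq_sub {f g : α → ℚ} (hf : Computable f) (hg : Computable g) :
    Computable fun a => f a - g a :=
  (cq_add hf (cq_mul (Computable.const (-1)) hg)).of_eq fun a => by ring

theorem cq_natCast {f : α → ℕ} (hf : Computable f) : Computable fun a => (f a : ℚ) := by
  have h : Computable fun n : ℕ => (n : ℚ) := by
    have h1 : Computable₂ fun (_ : ℕ) (y : ℕ × ℚ) => y.2 + 1 := by
      have : Computable fun z : ℕ × (ℕ × ℚ) => z.2.2 + 1 :=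
        cq_add (Computable.snd.comp Computable.snd) (Computable.const 1)
      exact this
    refine (Computable.nat_rec Computable.id (Computable.const 0) h1).of_eq fun n => ?_
    induction n with
    | zero => simp
    | succ n ih => rw [Nat.cast_succ, ← ih]; rfl
  exact h.comp hf

theorem cq_pow (c : ℚ) {f : α → ℕ} (hf : Computable f) : Computable fun a => c ^ (f a) := by
  have h : Computable fun n : ℕ => c ^ n := by
    have h1 : Computable₂ fun (_ : ℕ) (y : ℕ × ℚ) => y.2 * c := by
      have : Computable fun z : ℕ × (ℕ × ℚ) => z.2.2 * c :=
        cq_mul (Computable.snd.comp Computable.snd) (Computable.const c)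
      exact this
    refine (Computable.nat_rec Computable.id (Computable.const 1) h1).of_eq fun n => ?_
    induction n with
    | zero => simp
    | succ n ih => rw [pow_succ, ← ih]; rfl
  exact h.comp hf

theorem cq_inv {f : α → ℕ} (hf : Computable f) : Computable fun a => 1 / ((f a : ℚ) + 1) := by
  refine Computable.of_graph ?_
  have h := CP.eq (cq_mul (Computable.snd (α := α) (β := ℚ))
    (cq_add (cq_natCast (hf.comp Computable.fst)) (Computable.const 1))) (Computable.const 1)
  refine h.of_iff fun ⟨a, q⟩ => ?_
  have : (0 : ℚ) < (f a : ℚ) + 1 := by positivity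
  exact (eq_div_iff this.ne').symm

/-- Closeness of rational points. -/
def qnear (p q : ℚ × ℚ) (t : ℚ) : Prop :=
  (p.1 - q.1 < t ∧ q.1 - p.1 < t) ∧ (p.2 - q.2 < t ∧ q.2 - p.2 < t)

theorem CP.qnear {f g : α → ℚ × ℚ} {t : α → ℚ} (hf : Computable f) (hg : Computable g)
    (ht : Computable t) : CP fun a => qnear (f a) (g a) (t a) := by
  have f1 := Computable.fst.comp hf
  have f2 := Computable.snd.comp hf
  have g1 := Computable.fst.comp hg
  have g2 := Computable.snd.comp hg
  exact ((CP.qlt (cq_sub f1 g1) ht).and (CP.qlt (cq_sub g1 f1) ht)).and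
    ((CP.qlt (cq_sub f2 g2) ht).and (CP.qlt (cq_sub g2 f2) ht))

end Qsec

theorem qnear_iff (p q : ℚ × ℚ) (t : ℚ) :
    qnear p q t ↔ dist (ratPointToReal p) (ratPointToReal q) < t := by
  unfold qnear ratPointToReal
  rw [Prod.dist_eq, max_lt_iff, Real.dist_eq, Real.dist_eq, abs_lt, abs_lt]
  simp only [← Rat.cast_lt (K := ℝ), Rat.cast_sub]
  constructor
  · rintro ⟨⟨a, b⟩, c, d⟩
    refine ⟨⟨?_, ?_⟩, ?_, ?_⟩ <;> linarith
  · rintro ⟨⟨a, b⟩, c, d⟩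
    refine ⟨⟨?_, ?_⟩, ?_, ?_⟩ <;> linarith

/-! ### The main theorem -/

theorem two_zpow_neg (n : ℕ) : (2 : ℝ) ^ (-(n : ℤ)) = (1 / 2 : ℝ) ^ n := by
  rw [zpow_neg, zpow_natCast, one_div, inv_pow]

theorem ratFinsetToSet_eq (s : Finset (ℚ × ℚ)) : ratFinsetToSet s = ratPointToReal '' (s : Set (ℚ × ℚ)) := rfl

theorem grid_approx (R m : ℕ) (t : ℝ) (h : |t| ≤ R) :
    ∃ i < 2 * R * (m + 1) + 1, |((i : ℝ) / (m + 1) - R) - t| ≤ 1 / ((m : ℝ) + 1) ∧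
      True := by
  have hm : (0 : ℝ) < (m : ℝ) + 1 := by positivity
  obtain ⟨h1, h2⟩ := abs_le.1 h
  have h0 : 0 ≤ (t + R) * (m + 1) := mul_nonneg (by linarith) hm.le
  refine ⟨⌊(t + R) * (m + 1)⌋₊, ?_, ?_, trivial⟩
  · have := Nat.floor_le h0
    have h3 : (t + R) * (m + 1) ≤ 2 * R * (m + 1) :=
      mul_le_mul_of_nonneg_right (by linarith) hm.le
    have : (⌊(t + R) * (m + 1)⌋₊ : ℝ) < ((2 * R * (m + 1) + 1 : ℕ) : ℝ) := by
      push_cast; linarith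
    exact_mod_cast this
  · have a := Nat.floor_le h0
    have b := Nat.lt_floor_add_one ((t + R) * (m + 1))
    set i : ℝ := (⌊(t + R) * (m + 1)⌋₊ : ℝ)
    have e : i / (m + 1) - R - t = (i - (t + R) * (m + 1)) / (m + 1) := by
      field_simp; ring
    rw [e, abs_div, abs_of_pos hm]
    apply div_le_div_of_nonneg_right _ hm.le
    rw [abs_le]; constructor <;> linarith

theorem grid_bound (R m i : ℕ) (h : i < 2 * R * (m + 1) + 1) :
    |(i : ℝ) / (m + 1) - R| ≤ R := by
  have hm : (0 : ℝ) < (m : ℝ) + 1 := by positivity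
  have h1 : (i : ℝ) ≤ 2 * R * (m + 1) := by exact_mod_cast Nat.lt_succ_iff.1 h
  have h2 : (i : ℝ) / (m + 1) ≤ 2 * R := by rw [div_le_iff₀ hm]; exact h1
  have h3 : 0 ≤ (i : ℝ) / (m + 1) := by positivity
  rw [abs_le]; constructor <;> linarith


def gzc (R m i : ℕ) : ℚ := (i : ℚ) * (1 / ((m : ℚ) + 1)) - R

theorem gzc_comp (R : ℕ) {α : Type*} [Primcodable α] {f h : α → ℕ} (hf : Computable f)
    (hh : Computable h) : Computable fun p => gzc R (f p) (h p) :=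
  cq_sub (cq_mul (cq_natCast hh) (cq_inv hf)) (Computable.const _)

def ggood (g : ℕ × ℕ → ℚ × ℚ) (c : ℕ → ℚ × ℚ) (r : ℕ → ℚ) (n m : ℕ) (y : ℚ × ℚ) : Prop :=
    (∃ k < m, qnear y (g (k, n + 3)) ((1 / 2) ^ n * (1 / 2) - 1 / ((m : ℚ) + 1))) ∨
    (∃ k < m, qnear y (c k) (r k - 1 / ((m : ℚ) + 1)))

theorem ggood_cp {g : ℕ × ℕ → ℚ × ℚ} {c : ℕ → ℚ × ℚ} {r : ℕ → ℚ} (hg : Computable g)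
    (hc : Computable c) (hr : Computable r) {α : Type*} [Primcodable α] {n m : α → ℕ}
    {y : α → ℚ × ℚ} (hn : Computable n) (hm : Computable m) (hy : Computable y) :
    CP fun a => ggood g c r (n a) (m a) (y a) := by
  have hn' : Computable fun z : α × ℕ => n z.1 := hn.comp Computable.fst
  have hm' : Computable fun z : α × ℕ => m z.1 := hm.comp Computable.fst
  have hy' : Computable fun z : α × ℕ => y z.1 := hy.comp Computable.fst
  have hk : Computable fun z : α × ℕ => z.2 := Computable.snd
  have hn3 : Computable fun z : α × ℕ => n z.1 + 3 := cnat_add hn' (Computable.const 3)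
  have hg' : Computable fun z : α × ℕ => g (z.2, n z.1 + 3) := hg.comp (Computable.pair hk hn3)
  have ht : Computable fun z : α × ℕ => (1 / 2 : ℚ) ^ (n z.1) * (1 / 2) - 1 / ((m z.1 : ℚ) + 1) :=
    cq_sub (cq_mul (cq_pow _ hn') (Computable.const _)) (cq_inv hm')
  have hr' : Computable fun z : α × ℕ => r z.2 - 1 / ((m z.1 : ℚ) + 1) :=
    cq_sub (hr.comp hk) (cq_inv hm')
  exact CP.or (CP.bex hm (CP.qnear hy' hg' ht)) (CP.bex hm (CP.qnear hy' (hc.comp hk) hr'))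

def gcert (g : ℕ × ℕ → ℚ × ℚ) (c : ℕ → ℚ × ℚ) (r : ℕ → ℚ) (R n m : ℕ) : Prop :=
  ∀ i < 2 * R * (m + 1) + 1, ∀ j < 2 * R * (m + 1) + 1, ggood g c r n m (gzc R m i, gzc R m j)

theorem gcert_cp {g : ℕ × ℕ → ℚ × ℚ} {c : ℕ → ℚ × ℚ} {r : ℕ → ℚ} (hg : Computable g)
    (hc : Computable c) (hr : Computable r) (R : ℕ) :
    CP fun z : ℕ × ℕ => gcert g c r R z.1 z.2 := by
  have hb : Computable fun m : ℕ => 2 * R * (m + 1) + 1 :=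
    cnat_add (cnat_mul (Computable.const (2 * R)) (cnat_add Computable.id (Computable.const 1)))
      (Computable.const 1)
  have hn : Computable fun z : ((ℕ × ℕ) × ℕ) × ℕ => z.1.1.1 :=
    Computable.fst.comp (Computable.fst.comp Computable.fst)
  have hm : Computable fun z : ((ℕ × ℕ) × ℕ) × ℕ => z.1.1.2 :=
    Computable.snd.comp (Computable.fst.comp Computable.fst)
  have hi : Computable fun z : ((ℕ × ℕ) × ℕ) × ℕ => z.1.2 := Computable.snd.comp Computable.fst
  have hj : Computable fun z : ((ℕ × ℕ) × ℕ) × ℕ => z.2 := Computable.snd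
  have h1 : CP fun z : ((ℕ × ℕ) × ℕ) × ℕ =>
      ggood g c r z.1.1.1 z.1.1.2 (gzc R z.1.1.2 z.1.2, gzc R z.1.1.2 z.2) :=
    ggood_cp hg hc hr hn hm (Computable.pair (gzc_comp R hm hi) (gzc_comp R hm hj))
  have hb1 : Computable fun z : (ℕ × ℕ) × ℕ => 2 * R * (z.1.2 + 1) + 1 :=
    hb.comp (Computable.snd.comp Computable.fst)
  have hb0 : Computable fun z : ℕ × ℕ => 2 * R * (z.2 + 1) + 1 := hb.comp Computable.snd
  have h2 := CP.ball (p := fun (z : (ℕ × ℕ) × ℕ) j =>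
      ggood g c r z.1.1 z.1.2 (gzc R z.1.2 z.2, gzc R z.1.2 j)) hb1 h1
  exact CP.ball (p := fun (z : ℕ × ℕ) i => ∀ j < 2 * R * (z.2 + 1) + 1,
      ggood g c r z.1 z.2 (gzc R z.2 i, gzc R z.2 j)) hb0 h2

theorem bwd_dir (K : Set (ℝ × ℝ)) (hK : IsCompact K) (hne : K.Nonempty)
    (x : ℕ → ℝ × ℝ) (hx : ∀ n, x n ∈ K) (hu : UniformlyComputableSeq x)
    (hd : K ⊆ closure (Set.range x)) (hc : IsLowerComputableOpen Kᶜ) :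
    IsComputableCompactSet K := by
  obtain ⟨g, hg, hgx⟩ := hu
  obtain ⟨c, r, hc, hr, hU⟩ := hc
  simp only [two_zpow_neg] at hgx
  obtain ⟨R, hR⟩ : ∃ R : ℕ, K ⊆ Metric.closedBall 0 R := by
    obtain ⟨R, hR⟩ := hK.isBounded.subset_closedBall 0
    obtain ⟨N, hN⟩ := exists_nat_ge R
    exact ⟨N, hR.trans (Metric.closedBall_subset_closedBall hN)⟩
  have cert_ex : ∀ n, ∃ m, gcert g c r R n m := by
    intro n
    let V : ℕ → Set (ℝ × ℝ) := fun m =>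
      (⋃ k ∈ Set.Iio m, Metric.ball (ratPointToReal (g (k, n + 3)))
        ((1 / 2) ^ n * (1 / 2) - 1 / ((m : ℝ) + 1))) ∪
      (⋃ k ∈ Set.Iio m, Metric.ball (ratPointToReal (c k)) (r k - 1 / ((m : ℝ) + 1)))
    have hVo : ∀ m, IsOpen (V m) := fun m =>
      (isOpen_biUnion fun _ _ => Metric.isOpen_ball).union
        (isOpen_biUnion fun _ _ => Metric.isOpen_ball)
    have hVm : Monotone V := by
      intro a b hab
      have h1 : 1 / ((b : ℝ) + 1) ≤ 1 / ((a : ℝ) + 1) := Nat.one_div_le_one_div hab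
      refine Set.union_subset_union ?_ ?_ <;>
      · refine Set.biUnion_mono (Set.Iio_subset_Iio hab) fun k _ => ?_
        exact Metric.ball_subset_ball (by linarith)
    have key : ∀ (k : ℕ) (d ρ : ℝ), d < ρ → ∃ m : ℕ, k < m ∧ d < ρ - 1 / ((m : ℝ) + 1) := by
      intro k d ρ h
      obtain ⟨m, hm⟩ := exists_nat_one_div_lt (sub_pos.2 h)
      refine ⟨m + k + 1, by omega, ?_⟩
      have : 1 / (((m + k + 1 : ℕ) : ℝ) + 1) ≤ 1 / ((m : ℝ) + 1) :=
        Nat.one_div_le_one_div (by omega)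
      linarith
    have hcov : Metric.closedBall (0 : ℝ × ℝ) R ⊆ ⋃ m, V m := by
      intro y _
      rw [Set.mem_iUnion]
      by_cases hy : y ∈ K
      · have he : (0 : ℝ) < (1 / 2) ^ n := by positivity
        obtain ⟨_, ⟨k, rfl⟩, hk⟩ := Metric.mem_closure_iff.1 (hd hy) ((1 / 2) ^ n * (1 / 4))
          (by positivity)
        have h2 := hgx k (n + 3)
        rw [pow_add] at h2
        have h3 : dist y (ratPointToReal (g (k, n + 3))) < (1 / 2) ^ n * (1 / 2) := by
          have := dist_triangle_right y (ratPointToReal (g (k, n + 3))) (x k)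
          norm_num at h2
          linarith
        obtain ⟨m, hkm, hm⟩ := key k _ _ h3
        exact ⟨m, Or.inl (Set.mem_biUnion hkm hm)⟩
      · have : y ∈ Kᶜ := hy
        rw [hU, Set.mem_iUnion] at this
        obtain ⟨k, hk⟩ := this
        obtain ⟨m, hkm, hm⟩ := key k _ _ (Metric.mem_ball.1 hk)
        exact ⟨m, Or.inr (Set.mem_biUnion hkm hm)⟩
    obtain ⟨m, hm⟩ := (isCompact_closedBall (0 : ℝ × ℝ) R).elim_directed_cover V hVo hcov
      hVm.directed_le
    refine ⟨m, fun i hi j hj => ?_⟩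
    have hz : ratPointToReal (gzc R m i, gzc R m j) ∈ Metric.closedBall (0 : ℝ × ℝ) R := by
      have a := grid_bound R m i hi
      have b := grid_bound R m j hj
      rw [mem_closedBall_zero_iff, Prod.norm_def]
      simp only [ratPointToReal, gzc, Real.norm_eq_abs]
      push_cast
      rw [mul_one_div, mul_one_div]
      exact max_le a b
    rcases hm hz with h | h
    · left
      simp only [Set.mem_iUnion] at h
      obtain ⟨k, hk, h⟩ := h
      refine ⟨k, hk, (qnear_iff _ _ _).2 ?_⟩
      push_cast
      exact h
    · right
      simp only [Set.mem_iUnion] at h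
      obtain ⟨k, hk, h⟩ := h
      refine ⟨k, hk, (qnear_iff _ _ _).2 ?_⟩
      push_cast
      exact h
  obtain ⟨f, hf, hfc⟩ := CP.choose (gcert_cp hg hc hr R) cert_ex
  let L : ℕ → List (ℚ × ℚ) := fun n => (List.range (f n)).map fun k => g (k, n + 3)
  have hL : Computable L := by
    refine computable_range_map hf (f := fun n k => g (k, n + 3)) ?_
    have : Computable fun z : ℕ × ℕ => g (z.2, z.1 + 3) :=
      hg.comp (Computable.pair Computable.snd (cnat_add Computable.fst (Computable.const 3)))
    exact this
  have hnear : ∀ n, ∀ y ∈ K, ∃ k < f n, dist y (ratPointToReal (g (k, n + 3))) <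
      (1 / 2) ^ n * (1 / 2) := by
    intro n y hy
    have hyR : ‖y‖ ≤ R := mem_closedBall_zero_iff.1 (hR hy)
    rw [Prod.norm_def, max_le_iff, Real.norm_eq_abs, Real.norm_eq_abs] at hyR
    obtain ⟨i, hi, hi', -⟩ := grid_approx R (f n) y.1 hyR.1
    obtain ⟨j, hj, hj', -⟩ := grid_approx R (f n) y.2 hyR.2
    have hz : dist y (ratPointToReal (gzc R (f n) i, gzc R (f n) j)) ≤ 1 / ((f n : ℝ) + 1) := by
      rw [dist_comm, Prod.dist_eq, Real.dist_eq, Real.dist_eq]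
      simp only [ratPointToReal, gzc]
      push_cast
      rw [mul_one_div, mul_one_div]
      exact max_le hi' hj'
    rcases hfc n i hi j hj with ⟨k, hk, h⟩ | ⟨k, hk, h⟩
    · rw [qnear_iff] at h
      push_cast at h
      refine ⟨k, hk, ?_⟩
      have := dist_triangle y (ratPointToReal (gzc R (f n) i, gzc R (f n) j))
        (ratPointToReal (g (k, n + 3)))
      linarith
    · rw [qnear_iff] at h
      push_cast at h
      have := dist_triangle y (ratPointToReal (gzc R (f n) i, gzc R (f n) j)) (ratPointToReal (c k))
      have hyc : y ∈ Kᶜ := by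
        rw [hU, Set.mem_iUnion]
        exact ⟨k, Metric.mem_ball.2 (by linarith)⟩
      exact absurd hy hyc
  refine ⟨fun n => (L n).toFinset, ⟨L, hL, fun n => rfl⟩, fun n => ⟨?_, ?_⟩⟩
  · obtain ⟨y, hy⟩ := hne
    obtain ⟨k, hk, -⟩ := hnear n y hy
    exact ⟨g (k, n + 3), by simp only [L, List.mem_toFinset, List.mem_map, List.mem_range]; exact ⟨k, hk, rfl⟩⟩
  · rw [two_zpow_neg]
    have he : (0 : ℝ) < (1 / 2) ^ n := by positivity
    refine lt_of_le_of_lt (Metric.hausdorffDist_le_of_mem_dist (r := (1 / 2) ^ n * (1 / 2))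
      (by positivity) ?_ ?_) (by linarith)
    · intro y hy
      obtain ⟨k, hk, h⟩ := hnear n y hy
      refine ⟨_, ⟨g (k, n + 3), ?_, rfl⟩, h.le⟩
      simp only [L, Finset.mem_coe, List.mem_toFinset, List.mem_map, List.mem_range]
      exact ⟨k, hk, rfl⟩
    · rintro _ ⟨q, hq, rfl⟩
      simp only [L, Finset.mem_coe, List.mem_toFinset, List.mem_map, List.mem_range] at hq
      obtain ⟨k, hk, rfl⟩ := hq
      refine ⟨x k, hx k, ?_⟩
      have h := hgx k (n + 3)
      rw [pow_add] at h
      refine h.le.trans ?_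
      norm_num at he ⊢

theorem fwd_facts (K : Set (ℝ × ℝ)) (hK : IsCompact K) (hne : K.Nonempty)
    (h : IsComputableCompactSet K) : ∃ L : ℕ → List (ℚ × ℚ), Computable L ∧
      (∀ n, ∀ y ∈ K, ∃ q ∈ L n, dist y (ratPointToReal q) < (1 / 2 : ℝ) ^ n) ∧
      (∀ n, ∀ q ∈ L n, ∃ y ∈ K, dist y (ratPointToReal q) < (1 / 2 : ℝ) ^ n) := by
  obtain ⟨f, ⟨L, hL, hLf⟩, hf⟩ := h
  simp only [two_zpow_neg] at hf
  have hfin : ∀ n, Metric.hausdorffEDist K (ratFinsetToSet (f n)) ≠ ⊤ := fun n =>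
    Metric.hausdorffEDist_ne_top_of_nonempty_of_bounded hne
      ((Finset.coe_nonempty.2 (hf n).1).image _) hK.isBounded
      (((f n).finite_toSet.image _).isBounded)
  refine ⟨L, hL, fun n y hy => ?_, fun n q hq => ?_⟩
  · obtain ⟨_, ⟨q, hq, rfl⟩, h⟩ := Metric.exists_dist_lt_of_hausdorffDist_lt hy (hf n).2 (hfin n)
    refine ⟨q, ?_, h⟩
    rw [← hLf] at hq
    simpa using hq
  · have hq' : ratPointToReal q ∈ ratFinsetToSet (f n) := by
      refine ⟨q, ?_, rfl⟩
      rw [← hLf]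
      simpa using hq
    exact Metric.exists_dist_lt_of_hausdorffDist_lt' hq' (hf n).2 (hfin n)

theorem rat_dense (x : ℝ × ℝ) {ε : ℝ} (hε : 0 < ε) :
    ∃ c : ℚ × ℚ, dist x (ratPointToReal c) < ε := by
  obtain ⟨a, ha⟩ := Rat.denseRange_cast.exists_dist_lt x.1 hε
  obtain ⟨b, hb⟩ := Rat.denseRange_cast.exists_dist_lt x.2 hε
  exact ⟨(a, b), by rw [Prod.dist_eq]; exact max_lt ha hb⟩

theorem idx_exists' {β : Type*} [Primcodable β] (b0 : β) : ∃ (c : ℕ → β) (n : ℕ → ℕ),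
    Computable c ∧ Computable n ∧ ∀ a b, ∃ k, c k = a ∧ n k = b := by
  have hidx : Computable fun k => (Encodable.decode (α := β × ℕ) k).getD (b0, 0) :=
    Computable.option_getD Computable.decode (Computable.const _)
  refine ⟨_, _, Computable.fst.comp hidx,
    Computable.snd.comp hidx, fun a b => ⟨Encodable.encode (a, b), ?_⟩⟩
  have : (Encodable.decode (α := β × ℕ) (Encodable.encode (a, b))).getD (b0, 0) = (a, b) := by
    rw [Encodable.encodek, Option.getD_some]
  exact ⟨congrArg Prod.fst this, congrArg Prod.snd this⟩

theorem ok_cp {L : ℕ → List (ℚ × ℚ)} (hL : Computable L) {c : ℕ → ℚ × ℚ} {n : ℕ → ℕ}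
    (hc : Computable c) (hn : Computable n) :
    CP fun k => ∀ q ∈ L (n k), ¬ qnear (c k) q (2 * (1 / 2) ^ (n k)) := by
  have hc' : Computable fun z : ℕ × (ℚ × ℚ) => c z.1 := hc.comp Computable.fst
  have hn' : Computable fun z : ℕ × (ℚ × ℚ) => n z.1 := hn.comp Computable.fst
  have hq : Computable fun z : ℕ × (ℚ × ℚ) => z.2 := Computable.snd
  have ht : Computable fun z : ℕ × (ℚ × ℚ) => 2 * (1 / 2 : ℚ) ^ (n z.1) :=
    cq_mul (Computable.const 2) (cq_pow _ hn')
  exact CP.ball_list (p := fun k q => ¬ qnear (c k) q (2 * (1 / 2) ^ (n k)))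
    (hL.comp hn) (CP.not (CP.qnear hc' hq ht))

theorem fwd_open (K : Set (ℝ × ℝ)) (hK : IsCompact K) (hne : K.Nonempty)
    (h : IsComputableCompactSet K) : IsLowerComputableOpen Kᶜ := by
  classical
  obtain ⟨L, hL, h1, h2⟩ := fwd_facts K hK hne h
  obtain ⟨c, nn, hc, hn, hsurj⟩ := idx_exists' ((0, 0) : ℚ × ℚ)
  have hok := ok_cp hL hc hn
  obtain ⟨ok, ok_iff⟩ : ∃ ok : ℕ → Prop, ∀ k, ok k ↔
    ∀ q ∈ L (nn k), ¬ qnear (c k) q (2 * (1 / 2) ^ (nn k)) := ⟨_, fun _ => Iff.rfl⟩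
  have hok : CP ok := hok.of_iff fun k => (ok_iff k).symm
  refine ⟨c, fun k => if ok k then (1 / 2) ^ (nn k) else 0, hc,
    computable_ite hok (cq_pow _ hn) (Computable.const 0), ?_⟩
  ext y
  rw [Set.mem_iUnion]
  constructor
  · intro hy
    obtain ⟨δ, hδ, hball⟩ := Metric.isOpen_iff.1 hK.isClosed.isOpen_compl y hy
    obtain ⟨n, hn⟩ := exists_pow_lt_of_lt_one (show 0 < δ / 4 by positivity)
      (show (1 / 2 : ℝ) < 1 by norm_num)
    have hp : (0 : ℝ) < (1 / 2) ^ n := by positivity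
    obtain ⟨c0, hc0⟩ := rat_dense y hp
    obtain ⟨k, hkc, hkn⟩ := hsurj c0 n
    refine ⟨k, ?_⟩
    have hk : ok k := by
      rw [ok_iff]
      intro q hq hnear
      rw [hkn] at hq
      rw [hkc, hkn] at hnear
      rw [qnear_iff] at hnear
      push_cast at hnear
      obtain ⟨z, hz, hzq⟩ := h2 n q hq
      have : z ∈ Kᶜ := by
        apply hball
        rw [Metric.mem_ball]
        have a := dist_triangle z (ratPointToReal q) (ratPointToReal c0)
        have b := dist_triangle z (ratPointToReal c0) y
        rw [dist_comm (ratPointToReal c0) y] at b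
        rw [dist_comm (ratPointToReal q)] at a
        linarith
      exact this hz
    beta_reduce
    rw [if_pos hk, hkc, hkn, Metric.mem_ball]
    push_cast
    exact hc0
  · rintro ⟨k, hk⟩ hy
    beta_reduce at hk
    split_ifs at hk with hok'
    · push_cast at hk
      obtain ⟨q, hq, hyq⟩ := h1 (nn k) y hy
      refine (ok_iff k).1 hok' q hq ((qnear_iff _ _ _).2 ?_)
      push_cast
      have := dist_triangle_left (ratPointToReal (c k)) (ratPointToReal q) y
      rw [Metric.mem_ball] at hk
      linarith
    · simp at hk

theorem nxt_cp {L : ℕ → List (ℚ × ℚ)} (hL : Computable L) :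
    CP fun z : (ℕ × (ℚ × ℚ)) × (ℚ × ℚ) =>
      ¬ z.1.2 ∈ L z.1.1 ∨ (z.2 ∈ L (z.1.1 + 1) ∧ qnear z.1.2 z.2 (2 * (1 / 2) ^ z.1.1)) := by
  have hn : Computable fun z : (ℕ × (ℚ × ℚ)) × (ℚ × ℚ) => z.1.1 :=
    Computable.fst.comp Computable.fst
  have hn1 : Computable fun z : (ℕ × (ℚ × ℚ)) × (ℚ × ℚ) => z.1.1 + 1 :=
    cnat_add hn (Computable.const 1)
  have hq : Computable fun z : (ℕ × (ℚ × ℚ)) × (ℚ × ℚ) => z.1.2 :=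
    Computable.snd.comp Computable.fst
  have hp : Computable fun z : (ℕ × (ℚ × ℚ)) × (ℚ × ℚ) => z.2 := Computable.snd
  have ht : Computable fun z : (ℕ × (ℚ × ℚ)) × (ℚ × ℚ) => 2 * (1 / 2 : ℚ) ^ z.1.1 :=
    cq_mul (Computable.const 2) (cq_pow _ hn)
  exact CP.or (CP.mem_list (hL.comp hn) hq).not
    (CP.and (CP.mem_list (hL.comp hn1) hp) (CP.qnear hq hp ht))

theorem q0_cp {L : ℕ → List (ℚ × ℚ)} (hL : Computable L) {u v : ℕ → ℕ} (hu : Computable u)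
    (hv : Computable v) : CP fun z : ℕ × (ℚ × ℚ) => z.2 ∈ L (u z.1) ∧
      (¬ v z.1 < (L (u z.1)).length ∨ (L (u z.1))[v z.1]? = some z.2) := by
  have hn : Computable fun z : ℕ × (ℚ × ℚ) => u z.1 := hu.comp Computable.fst
  have hi : Computable fun z : ℕ × (ℚ × ℚ) => v z.1 := hv.comp Computable.fst
  have hq : Computable fun z : ℕ × (ℚ × ℚ) => z.2 := Computable.snd
  have hl : Computable fun z : ℕ × (ℚ × ℚ) => L (u z.1) := hL.comp hn
  have hs : Computable fun z : ℕ × (ℚ × ℚ) => some z.2 := Computable.option_some.comp hq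
  have hg : Computable fun z : ℕ × (ℚ × ℚ) => (L (u z.1))[v z.1]? :=
    Computable.list_getElem?.comp hl hi
  exact CP.and (CP.mem_list hl hq)
    (CP.or (CP.nat_lt hi (Computable.list_length.comp hl)).not (CP.eq hg hs))

theorem iter_exists {β : Type*} [Primcodable β] {nxt : ℕ × β → β} (hnxt : Computable nxt)
    {q0 : ℕ → β} (hq0 : Computable q0) {u : ℕ → ℕ} (hu : Computable u) :
    ∃ s : ℕ → ℕ → β, (Computable fun z : ℕ × ℕ => s z.1 z.2) ∧ (∀ a, s a 0 = q0 a) ∧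
      ∀ a k, s a (k + 1) = nxt (u a + k, s a k) := by
  refine ⟨fun a k => Nat.rec (q0 a) (fun k q => nxt (u a + k, q)) k, ?_, fun _ => rfl,
    fun _ _ => rfl⟩
  have hstep : Computable₂ fun (z : ℕ × ℕ) (y : ℕ × β) => nxt (u z.1 + y.1, y.2) := by
    have h1 : Computable fun w : (ℕ × ℕ) × (ℕ × β) => u w.1.1 :=
      hu.comp (Computable.fst.comp Computable.fst)
    have h2 : Computable fun w : (ℕ × ℕ) × (ℕ × β) => w.2.1 := Computable.fst.comp Computable.snd
    have h3 : Computable fun w : (ℕ × ℕ) × (ℕ × β) => w.2.2 := Computable.snd.comp Computable.snd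
    have : Computable fun w : (ℕ × ℕ) × (ℕ × β) => nxt (u w.1.1 + w.2.1, w.2.2) :=
      hnxt.comp (Computable.pair (cnat_add h1 h2) h3)
    exact this
  exact Computable.nat_rec Computable.snd (hq0.comp Computable.fst) hstep

theorem shift_comp {β : Type*} [Primcodable β] {s : ℕ → ℕ → β}
    (hs : Computable fun z : ℕ × ℕ => s z.1 z.2) :
    Computable fun z : ℕ × ℕ => s z.1 (z.2 + 3) := by
  have h1 : Computable fun z : ℕ × ℕ => z.2 + 3 := cnat_add Computable.snd (Computable.const 3)
  have h2 : Computable fun z : ℕ × ℕ => (z.1, z.2 + 3) := Computable.pair Computable.fst h1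
  exact hs.comp h2

theorem fwd_seq (K : Set (ℝ × ℝ)) (hK : IsCompact K) (hne : K.Nonempty)
    (h : IsComputableCompactSet K) : ∃ x : ℕ → ℝ × ℝ, (∀ n, x n ∈ K) ∧
      UniformlyComputableSeq x ∧ K ⊆ closure (Set.range x) := by
  obtain ⟨L, hL, h1, h2⟩ := fwd_facts K hK hne h
  obtain ⟨u, v, hu, hv, huv⟩ := idx_exists' (0 : ℕ)
  obtain ⟨nxt, hnxt, nxt_spec⟩ : ∃ nxt : ℕ × (ℚ × ℚ) → ℚ × ℚ, Computable nxt ∧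
      ∀ a, ¬ a.2 ∈ L a.1 ∨ (nxt a ∈ L (a.1 + 1) ∧ qnear a.2 (nxt a) (2 * (1 / 2) ^ a.1)) := by
    refine CP.choose (p := fun (a : ℕ × (ℚ × ℚ)) (p : ℚ × ℚ) =>
      ¬ a.2 ∈ L a.1 ∨ (p ∈ L (a.1 + 1) ∧ qnear a.2 p (2 * (1 / 2) ^ a.1))) ?_ ?_
    · exact nxt_cp hL
    · rintro ⟨n, q⟩
      by_cases hq : q ∈ L n
      · obtain ⟨y, hy, hyq⟩ := h2 n q hq
        obtain ⟨p, hp, hyp⟩ := h1 (n + 1) y hy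
        refine ⟨p, Or.inr ⟨hp, (qnear_iff _ _ _).2 ?_⟩⟩
        push_cast
        have hpos : (0 : ℝ) < (1 / 2) ^ n := by positivity
        have := dist_triangle_left (ratPointToReal q) (ratPointToReal p) y
        rw [pow_succ] at hyp
        linarith
      · exact ⟨q, Or.inl hq⟩
  -- starting points
  obtain ⟨q0, hq0, q0_spec⟩ : ∃ q0 : ℕ → ℚ × ℚ, Computable q0 ∧ ∀ a, q0 a ∈ L (u a) ∧
      (¬ v a < (L (u a)).length ∨ (L (u a))[v a]? = some (q0 a)) := by
    refine CP.choose (p := fun (a : ℕ) (q : ℚ × ℚ) => q ∈ L (u a) ∧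
      (¬ v a < (L (u a)).length ∨ (L (u a))[v a]? = some q)) ?_ ?_
    · exact q0_cp hL hu hv
    · intro a
      by_cases hi : v a < (L (u a)).length
      · exact ⟨(L (u a))[v a], List.getElem_mem hi, Or.inr (List.getElem?_eq_getElem hi)⟩
      · obtain ⟨y, hy⟩ := hne
        obtain ⟨q, hq, -⟩ := h1 (u a) y hy
        exact ⟨q, hq, Or.inl hi⟩
  obtain ⟨s, hs, s0, s1⟩ := iter_exists hnxt hq0 hu
  have hmem : ∀ a k, s a k ∈ L (u a + k) := by
    intro a k
    induction k with
    | zero => rw [s0]; exact (q0_spec a).1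
    | succ k ih =>
      rcases nxt_spec (u a + k, s a k) with h | h
      · exact absurd ih h
      · rw [s1]; exact h.1
  have hstep : ∀ a k, dist (ratPointToReal (s a k)) (ratPointToReal (s a (k + 1))) ≤
      (4 * (1 / 2) ^ (u a)) / 2 / 2 ^ k := by
    intro a k
    rcases nxt_spec (u a + k, s a k) with h | h
    · exact absurd (hmem a k) h
    · have := (qnear_iff _ _ _).1 h.2
      push_cast at this
      rw [s1]
      refine this.le.trans (le_of_eq ?_)
      rw [pow_add, one_div_pow 2 k]
      ring
  have hlim : ∀ a, ∃ x, Filter.Tendsto (fun k => ratPointToReal (s a k)) Filter.atTop (nhds x) :=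
    fun a => cauchySeq_tendsto_of_complete (cauchySeq_of_le_geometric_two (hstep a))
  choose x hx using hlim
  have hdist : ∀ a k, dist (ratPointToReal (s a k)) (x a) ≤
      (4 * (1 / 2) ^ (u a)) / 2 ^ k := fun a k =>
    dist_le_of_le_geometric_two_of_tendsto (hstep a) (hx a) k
  have hle1 : ∀ n : ℕ, (1 / 2 : ℝ) ^ n ≤ 1 := fun n => pow_le_one₀ (by norm_num) (by norm_num)
  have hdist' : ∀ a k, dist (ratPointToReal (s a k)) (x a) ≤ 4 * (1 / 2) ^ k := by
    intro a k
    refine (hdist a k).trans ?_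
    rw [one_div_pow 2 k, div_eq_mul_one_div]
    have := hle1 (u a)
    have h3 : (0 : ℝ) < 1 / 2 ^ k := by positivity
    nlinarith
  refine ⟨x, fun a => ?_, ⟨fun z => s z.1 (z.2 + 3), ?_, fun a m => ?_⟩, ?_⟩
  · rw [← hK.isClosed.closure_eq, Metric.mem_closure_iff]
    intro ε hε
    obtain ⟨k, hk⟩ := exists_pow_lt_of_lt_one (show 0 < ε / 5 by positivity)
      (show (1 / 2 : ℝ) < 1 by norm_num)
    obtain ⟨y, hy, hyq⟩ := h2 _ _ (hmem a k)
    refine ⟨y, hy, ?_⟩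
    have a1 := dist_triangle_left (x a) y (ratPointToReal (s a k))
    have a2 := hdist' a k
    rw [dist_comm y] at hyq
    rw [pow_add] at hyq
    have a3 : (1 / 2 : ℝ) ^ (u a) * (1 / 2) ^ k ≤ 1 * (1 / 2) ^ k :=
      mul_le_mul_of_nonneg_right (hle1 _) (by positivity)
    linarith
  · exact shift_comp hs
  · rw [two_zpow_neg]
    refine lt_of_le_of_lt (hdist' a (m + 3)) ?_
    rw [pow_add]
    have hpos : (0 : ℝ) < (1 / 2) ^ m := by positivity
    linarith
  · intro y hy
    rw [Metric.mem_closure_iff]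
    intro ε hε
    obtain ⟨n, hn⟩ := exists_pow_lt_of_lt_one (show 0 < ε / 5 by positivity)
      (show (1 / 2 : ℝ) < 1 by norm_num)
    obtain ⟨q, hq, hyq⟩ := h1 n y hy
    obtain ⟨i, hi, rfl⟩ := List.getElem_of_mem hq
    obtain ⟨a, hua, hva⟩ := huv n i
    refine ⟨x a, ⟨_, rfl⟩, ?_⟩
    have hq0' : q0 a = (L n)[i] := by
      have := (q0_spec a).2
      rw [hua, hva] at this
      rcases this with h | h
      · exact absurd hi h
      · rw [List.getElem?_eq_getElem hi] at h
        exact (Option.some.inj h).symm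
    have a1 := hdist a 0
    have a0 : s a 0 = (L n)[i] := (s0 _).trans hq0'
    rw [a0, hua, pow_zero, div_one] at a1
    have a2 := dist_triangle y (ratPointToReal (L n)[i]) (x a)
    linarith

/-- a nonempty compact `K ⊆ ℝ × ℝ` is computable iff it contains a
uniformly computable dense sequence of points and has lower-computable open
complement. -/
theorem computableCompact_iff_dense_seq_and_lowerComputable_complement
    (K : Set (ℝ × ℝ)) (hK : IsCompact K) (hne : K.Nonempty) :
    IsComputableCompactSet K ↔
      ((∃ x : ℕ → ℝ × ℝ, (∀ n, x n ∈ K) ∧ UniformlyComputableSeq x ∧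
          K ⊆ closure (Set.range x)) ∧
        IsLowerComputableOpen Kᶜ) := by
  constructor
  · intro h
    exact ⟨fwd_seq K hK hne h, fwd_open K hK hne h⟩
  · rintro ⟨⟨x, hx, hu, hd⟩, hc⟩
    exact bwd_dir K hK hne x hx hu hd hc
end

section
/- Let Ω ⊊ ℂ be a nonempty open, connected, simply connected set, let ω ∈ Ω, and let φ : Ω → 𝔻 be a biholomorphism onto the open unit disk with φ(ω) = 0. Let γ̃ : [0,1] → ℂ be a continuous injective map with γ̃(t) ∈ Ω for all t ∈ (0,1), γ̃(0) ≠ γ̃(1), and γ̃(0), γ̃(1) ∈ ∂Ω (the frontier of Ω); let γ = γ̃([0,1]). Let N be a connected component of Ω \ γ with ω ∉ N. Suppose M > 0 satisfies dist(ω, γ) ≥ M, and ε > 0 satisfies ε² < M/4 and diam(γ) ≤ ε². Then diam(φ(N)) ≤ 30ε/√M. -/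
open Metric

open Set Filter Topology MeasureTheory in
lemma inv_differentiable (Ω : Set ℂ) (hΩ : IsOpen Ω) (hconn : IsConnected Ω) (φ : ℂ → ℂ)
    (hφ : DifferentiableOn ℂ φ Ω) (B : Set ℂ) (hbij : BijOn φ Ω B) (f : ℂ → ℂ)
    (hf : ∀ w ∈ B, f w ∈ Ω ∧ φ (f w) = w) (hf2 : ∀ z ∈ Ω, f (φ z) = z) :
    DifferentiableOn ℂ f B := by
  have hA : AnalyticOnNhd ℂ φ Ω := hφ.analyticOnNhd hΩ
  have hopen : ∀ s ⊆ Ω, IsOpen s → IsOpen (φ '' s) := by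
    rcases hA.is_constant_or_isOpen hconn.isPreconnected with ⟨w, hw⟩ | h
    · exfalso
      obtain ⟨z, hz⟩ := hconn.nonempty
      have : Ω = {z} := by
        ext y; constructor
        · intro hy; exact hbij.injOn hy hz (by rw [hw y hy, hw z hz])
        · rintro rfl; exact hz
      rw [this] at hΩ
      exact not_isOpen_singleton z hΩ
    · exact h
  have hcont : ∀ w ∈ B, ContinuousAt f w := by
    intro w hw
    rw [ContinuousAt, tendsto_def]
    intro V hV
    obtain ⟨U, hUV, hUo, hUm⟩ := _root_.mem_nhds_iff.1 hV
    have h1 : IsOpen (φ '' (U ∩ Ω)) := hopen _ inter_subset_right (hUo.inter hΩ)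
    have h2 : w ∈ φ '' (U ∩ Ω) := ⟨f w, ⟨hUm, (hf w hw).1⟩, (hf w hw).2⟩
    refine mem_of_superset (h1.mem_nhds h2) ?_
    rintro _ ⟨z, ⟨hzU, hzΩ⟩, rfl⟩
    simp only [mem_preimage, hf2 z hzΩ]
    exact hUV hzU
  have hBo : IsOpen B := by rw [← hbij.image_eq]; exact hopen _ subset_rfl hΩ
  intro w hw
  apply DifferentiableAt.differentiableWithinAt
  apply Complex.analyticAt_of_differentiable_on_punctured_nhds_of_continuousAt _ (hcont w hw) |>.differentiableAt
  set z := f w with hz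
  have hzΩ : z ∈ Ω := (hf w hw).1
  have hd : ∀ᶠ y in 𝓝[≠] z, deriv φ y ≠ 0 := by
    rcases (hA z hzΩ).deriv.eventually_eq_zero_or_eventually_ne_zero with h | h
    · exfalso
      obtain ⟨r, hr, hb⟩ := Metric.eventually_nhds_iff_ball.1 (h.and (hΩ.mem_nhds hzΩ))
      have h3 : z + (r/2 : ℝ) ∈ ball z r := by
        simp [abs_of_pos hr]; linarith
      have h4 : φ (z + (r/2:ℝ)) = φ z := by
        apply isOpen_ball.is_const_of_deriv_eq_zero (convex_ball z r).isPreconnected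
          (hφ.mono fun y hy => (hb y hy).2) (fun y hy => (hb y hy).1) h3 (mem_ball_self hr)
      have h5 := hbij.injOn (hb _ h3).2 hzΩ h4
      have : (r/2 : ℝ) = 0 := by
        have : ((r/2 : ℝ):ℂ) = 0 := by simpa using h5
        exact_mod_cast this
      linarith
    · exact h
  have htend : Tendsto f (𝓝[≠] w) (𝓝[≠] z) := by
    rw [tendsto_nhdsWithin_iff]
    refine ⟨(hcont w hw).mono_left nhdsWithin_le_nhds, ?_⟩
    filter_upwards [self_mem_nhdsWithin, nhdsWithin_le_nhds (hBo.mem_nhds hw)] with y hy hyB h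
    apply hy
    have h' : f y = z := h
    rw [mem_singleton_iff, ← (hf y hyB).2, h', (hf w hw).2]
  filter_upwards [htend.eventually hd, nhdsWithin_le_nhds (hBo.mem_nhds hw)] with y hy hyB
  refine (HasDerivAt.of_local_left_inverse (hcont y hyB) (f := φ) (f' := deriv φ (f y)) ?_ hy ?_).differentiableAt
  · exact (hφ.differentiableAt (hΩ.mem_nhds (hf y hyB).1)).hasDerivAt
  · filter_upwards [hBo.mem_nhds hyB] with x hx using (hf x hx).2

open Set Filter Topology MeasureTheory in
lemma area_log (q : ℂ → ℂ) (A U : Set ℂ) (hU : IsOpen U) (hA : MeasurableSet A) (hAU : A ⊆ U)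
    (hq : DifferentiableOn ℂ q U) (hinj : InjOn q A) :
    ∫⁻ w in q '' A, ENNReal.ofReal ((‖w‖ ^ 2)⁻¹) =
      ∫⁻ z in A, ENNReal.ofReal (‖deriv q z / q z‖ ^ 2) := by
  have hd : ∀ x ∈ A, HasFDerivWithinAt q
      (((ContinuousLinearMap.toSpanSingleton ℂ (deriv q x)).restrictScalars ℝ : ℂ →L[ℝ] ℂ)) A x := by
    intro x hx
    have := (hq.differentiableAt (hU.mem_nhds (hAU hx))).hasDerivAt.hasFDerivAt
    exact (this.restrictScalars ℝ).hasFDerivWithinAt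
  rw [lintegral_image_eq_lintegral_abs_det_fderiv_mul volume hA hd hinj]
  apply lintegral_congr
  intro z
  have : ((ContinuousLinearMap.toSpanSingleton ℂ (deriv q z)).restrictScalars ℝ : ℂ →L[ℝ] ℂ).det = ‖deriv q z‖^2 := by
    simp [ContinuousLinearMap.det, LinearMap.det_restrictScalars,
      Algebra.norm_complex_eq, Complex.normSq_eq_norm_sq]
  rw [this, ← ENNReal.ofReal_mul (by positivity)]
  congr 1
  rw [abs_of_nonneg (by positivity), norm_div, div_pow, div_eq_mul_inv]

open Set Filter Topology MeasureTheory in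
lemma polar_le (g : ℂ → ENNReal) (hg : Measurable g) :
    ∫⁻ z, g z = ∫⁻ t in Ioo (-Real.pi) Real.pi, ∫⁻ r in Ioi (0:ℝ),
      ENNReal.ofReal r * g (r * Complex.exp (t * Complex.I)) := by
  rw [← Complex.lintegral_comp_polarCoord_symm]
  have : polarCoord.target = (Ioi (0:ℝ)) ×ˢ (Ioo (-Real.pi) Real.pi) := rfl
  rw [this, Measure.volume_eq_prod, ← Measure.prod_restrict, lintegral_prod_symm]
  · simp [Complex.polarCoord_symm_apply, Complex.exp_mul_I]
  · simp only [Complex.polarCoord_symm_apply, smul_eq_mul]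
    fun_prop

open Set Filter Topology MeasureTheory in
lemma lint_inv (a b : ℝ) (ha : 0 < a) (hab : a ≤ b) :
    ∫⁻ r in Ioo a b, ENNReal.ofReal (r⁻¹) = ENNReal.ofReal (Real.log (b / a)) := by
  rw [← integral_inv_of_pos ha (ha.trans_le hab), intervalIntegral.integral_of_le hab,
    restrict_Ioo_eq_restrict_Ioc, ofReal_integral_eq_lintegral_ofReal]
  · have : IntervalIntegrable (fun x : ℝ => x⁻¹) volume a b :=
      intervalIntegral.intervalIntegrable_inv (fun x hx => by
        rw [uIcc_of_le hab] at hx; linarith [hx.1]) continuousOn_id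
    exact (intervalIntegrable_iff_integrableOn_Ioc_of_le hab).1 this
  · filter_upwards [ae_restrict_mem measurableSet_Ioc] with x hx
    have := ha.trans hx.1
    simp only [Pi.zero_apply]; positivity

open Set Filter Topology MeasureTheory in
lemma annulus_area (a b : ℝ) (ha : 0 < a) (hab : a ≤ b) (S : Set ℂ)
    (hS : ∀ w ∈ S, a < ‖w‖ ∧ ‖w‖ < b) :
    ∫⁻ w in S, ENNReal.ofReal ((‖w‖ ^ 2)⁻¹) ≤ ENNReal.ofReal (2 * Real.pi * Real.log (b / a)) := by
  set R : Set ℂ := {w | a < ‖w‖ ∧ ‖w‖ < b} with hR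
  have hRm : MeasurableSet R := by
    apply IsOpen.measurableSet
    exact (isOpen_lt continuous_const continuous_norm).inter (isOpen_lt continuous_norm continuous_const)
  refine (lintegral_mono_set (show S ⊆ R from hS)).trans ?_
  rw [← lintegral_indicator hRm, polar_le _ (by
    apply Measurable.indicator _ hRm; fun_prop)]
  have : ∀ t : ℝ, ∫⁻ r in Ioi (0:ℝ), ENNReal.ofReal r *
      R.indicator (fun w => ENNReal.ofReal ((‖w‖ ^ 2)⁻¹)) (r * Complex.exp (t * Complex.I))
      ≤ ENNReal.ofReal (Real.log (b / a)) := by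
    intro t
    rw [← lint_inv a b ha hab, ← lintegral_indicator measurableSet_Ioi,
      ← lintegral_indicator measurableSet_Ioo]
    apply lintegral_mono
    intro r
    by_cases h0 : 0 < r
    · simp only [indicator, mem_Ioi, h0, if_true, hR, mem_ofPred_eq, norm_mul, Complex.norm_real,
        Complex.norm_exp_ofReal_mul_I, mul_one, Real.norm_eq_abs, abs_of_pos h0, mem_Ioo]
      split_ifs with h
      · rw [← ENNReal.ofReal_mul h0.le]
        apply le_of_eq; congr 1; field_simp
      · simp
    · simp [h0]
  refine (lintegral_mono this).trans ?_
  rw [lintegral_const]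
  simp only [MeasurableSet.univ, Measure.restrict_apply, univ_inter, Real.volume_Ioo]
  rw [← ENNReal.ofReal_mul (Real.log_nonneg (by rw [le_div_iff₀ ha]; linarith))]
  apply le_of_eq; congr 1; ring

open Set Filter Topology MeasureTheory in
lemma mean_sq (P : ℂ → ℂ) (hP : DifferentiableOn ℂ P (ball 0 1)) (hP0 : P 0 = 1) (ρ : ℝ)
    (h0 : 0 < ρ) (h1 : ρ < 1) :
    ENNReal.ofReal (2 * Real.pi) ≤
      ∫⁻ t in Ioo (-Real.pi) Real.pi, ENNReal.ofReal (‖P (ρ * Complex.exp (t * Complex.I))‖ ^ 2) := by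
  have hav : Real.circleAverage (fun z => P z ^ 2) 0 ρ = 1 := by
    rw [circleAverage_of_differentiable_on_off_countable (s := ∅) countable_empty]
    · simp [hP0]
    · rw [abs_of_pos h0]
      exact (hP.continuousOn.mono (closedBall_subset_ball h1)).pow 2
    · rw [abs_of_pos h0]
      intro z hz
      have : z ∈ ball (0:ℂ) 1 := ball_subset_ball h1.le hz.1
      exact (hP.differentiableAt (isOpen_ball.mem_nhds this)).pow 2
  rw [Real.circleAverage_eq_integral_add (-Real.pi),
    intervalIntegral.integral_comp_add_right (fun θ => P (circleMap 0 ρ θ) ^ 2)] at hav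
  have e1 : (0:ℝ) + -Real.pi = -Real.pi := by ring
  have e2 : 2 * Real.pi + -Real.pi = Real.pi := by ring
  rw [e1, e2, intervalIntegral.integral_of_le (by linarith [Real.pi_pos])] at hav
  have hpi := Real.pi_pos
  have h2 : ∫ θ in Ioc (-Real.pi) Real.pi, P (circleMap 0 ρ θ) ^ 2 = ((2 * Real.pi : ℝ) : ℂ) := by
    have h3 : (2 * Real.pi)⁻¹ ≠ 0 := by positivity
    rw [Complex.real_smul] at hav
    push_cast at hav ⊢
    have : (2 * (Real.pi:ℂ)) ≠ 0 := by
      simp [Real.pi_ne_zero]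
    field_simp at hav
    rw [hav]
  have h4 := enorm_integral_le_lintegral_enorm (μ := volume.restrict (Ioc (-Real.pi) Real.pi)) (fun θ => P (circleMap 0 ρ θ) ^ 2)
  rw [h2] at h4
  rw [restrict_Ioo_eq_restrict_Ioc]
  convert h4 using 1
  · rw [← ofReal_norm, Complex.norm_real, Real.norm_eq_abs, abs_of_pos (by positivity)]
  · apply lintegral_congr
    intro t
    rw [← ofReal_norm, norm_pow]
    simp [circleMap]

open Set Filter Topology MeasureTheory in
lemma polar_le' (g : ℂ → ENNReal) (hg : Measurable g) :
    ∫⁻ z, g z = ∫⁻ r in Ioi (0:ℝ), ∫⁻ t in Ioo (-Real.pi) Real.pi,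
      ENNReal.ofReal r * g (r * Complex.exp (t * Complex.I)) := by
  rw [← Complex.lintegral_comp_polarCoord_symm]
  have : polarCoord.target = (Ioi (0:ℝ)) ×ˢ (Ioo (-Real.pi) Real.pi) := rfl
  rw [this, Measure.volume_eq_prod, ← Measure.prod_restrict, lintegral_prod]
  · simp [Complex.polarCoord_symm_apply, Complex.exp_mul_I]
  · simp only [Complex.polarCoord_symm_apply, smul_eq_mul]
    fun_prop

open Set Filter Topology MeasureTheory in
lemma lower_area (P : ℂ → ℂ) (hP : DifferentiableOn ℂ P (ball 0 1)) (hP0 : P 0 = 1) (δ r : ℝ)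
    (h0 : 0 < δ) (hδ : δ ≤ r) (h1 : r < 1) (A : Set ℂ) (hA : A = {z | δ < ‖z‖ ∧ ‖z‖ < r}) :
    ENNReal.ofReal (2 * Real.pi * Real.log (r / δ)) ≤
      ∫⁻ z in A, ENNReal.ofReal (‖P z / z‖ ^ 2) := by
  have hAo : IsOpen A := by
    rw [hA]
    exact (isOpen_lt continuous_const continuous_norm).inter (isOpen_lt continuous_norm continuous_const)
  have hm : Measurable (A.indicator (fun z => ENNReal.ofReal (‖P z / z‖ ^ 2))) := by
    have hc : ContinuousOn (fun z => ENNReal.ofReal (‖P z / z‖ ^ 2)) A := by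
      apply ENNReal.continuous_ofReal.comp_continuousOn
      apply ContinuousOn.pow
      apply ContinuousOn.norm
      apply ContinuousOn.div
      · apply hP.continuousOn.mono
        intro z hz; rw [hA] at hz; simp only [mem_ball_zero_iff]; exact hz.2.trans h1
      · exact continuousOn_id
      · intro z hz h; rw [hA] at hz; rw [h] at hz; simp at hz; linarith [hz.1]
    refine measurable_of_restrict_of_restrict_compl hAo.measurableSet ?_ ?_
    · convert hc.domRestrict.measurable using 1
      ext z; simp
    · convert measurable_const (a := (0:ENNReal)) using 1
      ext ⟨z, hz⟩; simp at hz; simp [hz]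
  rw [← lintegral_indicator hAo.measurableSet, polar_le' _ hm]
  have key : ∀ ρ ∈ Ioo δ r, ENNReal.ofReal (2 * Real.pi) * ENNReal.ofReal (ρ⁻¹) ≤
     ∫⁻ t in Ioo (-Real.pi) Real.pi, ENNReal.ofReal ρ * (A.indicator (fun z => ENNReal.ofReal (‖P z / z‖ ^ 2))) (ρ * Complex.exp (t * Complex.I)) := by
    intro ρ hρ
    have hρ0 : 0 < ρ := h0.trans hρ.1
    have h3 := mean_sq P hP hP0 ρ hρ0 (hρ.2.trans h1)
    calc _ ≤ (∫⁻ t in Ioo (-Real.pi) Real.pi, ENNReal.ofReal (‖P (ρ * Complex.exp (t * Complex.I))‖ ^ 2)) * ENNReal.ofReal (ρ⁻¹) := by gcongr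
      _ = ∫⁻ t in Ioo (-Real.pi) Real.pi, ENNReal.ofReal (‖P (ρ * Complex.exp (t * Complex.I))‖ ^ 2) * ENNReal.ofReal (ρ⁻¹) := by
        rw [lintegral_mul_const' _ _ ENNReal.ofReal_ne_top]
      _ = _ := by
        apply lintegral_congr
        intro t
        have : (ρ * Complex.exp (t * Complex.I)) ∈ A := by
          rw [hA]; simp only [mem_ofPred_eq, norm_mul, Complex.norm_real,
            Complex.norm_exp_ofReal_mul_I, mul_one, Real.norm_eq_abs, abs_of_pos hρ0]
          exact hρ
        rw [indicator_of_mem this, ← ENNReal.ofReal_mul (by positivity), ← ENNReal.ofReal_mul hρ0.le]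
        congr 1
        simp only [norm_div, norm_mul, Complex.norm_real,
            Complex.norm_exp_ofReal_mul_I, mul_one, Real.norm_eq_abs, abs_of_pos hρ0]
        field_simp
  calc _ = ∫⁻ ρ in Ioo δ r, ENNReal.ofReal (2 * Real.pi) * ENNReal.ofReal (ρ⁻¹) := by
        rw [lintegral_const_mul' _ _ ENNReal.ofReal_ne_top, lint_inv δ r h0 hδ,
          ← ENNReal.ofReal_mul (by positivity)]
    _ ≤ _ := setLIntegral_mono' measurableSet_Ioo key
    _ ≤ _ := lintegral_mono_set (fun x hx => h0.trans hx.1)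

open Set Filter Topology MeasureTheory in
lemma be_deriv (q : ℂ → ℂ) (hq : DifferentiableOn ℂ q (ball 0 1)) (hinj : InjOn q (ball 0 1))
    (hq0 : q 0 = 0) (hbe : ∀ z ∈ ball (0:ℂ) 1, ∀ w ∈ ball (0:ℂ) 1, q z * q w ≠ 1) :
    ‖deriv q 0‖ ≤ 1 := by
  by_contra! hc
  obtain ⟨c0, hc1, hc2⟩ := exists_between hc
  have hc0 : 0 < c0 := by linarith
  obtain ⟨r, hr1, hr2⟩ := exists_between (inv_lt_one_of_one_lt₀ hc1)
  have hr0 : 0 < r := lt_trans (by positivity) hr1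
  have hrc : 1 < r * c0 := by rwa [inv_lt_iff_one_lt_mul₀ hc0, ] at hr1
  have h0m : (0:ℂ) ∈ ball (0:ℂ) 1 := by simp
  set k := dslope q 0 with hk
  have hkd : DifferentiableOn ℂ k (ball 0 1) :=
    (Complex.differentiableOn_dslope (isOpen_ball.mem_nhds h0m)).2 hq
  have hk0 : k 0 = deriv q 0 := by simp [hk]
  have hqk : ∀ z, q z = z * k z := by
    intro z
    have := sub_smul_dslope q 0 z
    simp [hq0] at this
    rw [← this]
  have hkne : ∀ z ∈ ball (0:ℂ) 1, k z ≠ 0 := by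
    intro z hz h
    by_cases hz0 : z = 0
    · rw [hz0, hk0] at h; rw [h] at hc; simp at hc; linarith
    · apply hz0; apply hinj hz h0m; rw [hqk z, h, hq0, mul_zero]
  have hsub : closedBall (0:ℂ) r ⊆ ball 0 1 := closedBall_subset_ball hr2
  obtain ⟨zm, hzm, hmin⟩ := (isCompact_closedBall (0:ℂ) r).exists_isMinOn
    (nonempty_closedBall.2 hr0.le) ((hkd.continuousOn.mono hsub).norm)
  set κ := ‖k zm‖ with hκ
  have hκ0 : 0 < κ := norm_pos_iff.2 (hkne _ (hsub hzm))
  obtain ⟨B, hB⟩ := (isCompact_closedBall (0:ℂ) r).exists_bound_of_continuousOn (hq.continuousOn.mono hsub)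
  have hnear : ∀ᶠ z in 𝓝 (0:ℂ), c0 < ‖k z‖ := by
    have : ContinuousAt k 0 := hkd.continuousOn.continuousAt (isOpen_ball.mem_nhds h0m)
    apply this.norm.eventually_const_lt
    simpa [hk0] using hc2
  obtain ⟨δ1, hδ1, hb⟩ := Metric.eventually_nhds_iff_ball.1 hnear
  set B' := |B| + 1 with hB'
  have hB'0 : 0 < B' := by positivity
  obtain ⟨δ, hδ0, hδlt⟩ := exists_between (show 0 < min (min δ1 r) (min (κ * δ1 / c0) (1 / (c0 * B'))) by positivity)
  simp only [lt_min_iff] at hδlt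
  obtain ⟨⟨hδδ1, hδr⟩, hδ3, hδ4⟩ := hδlt
  rw [lt_div_iff₀ hc0] at hδ3
  rw [lt_div_iff₀ (by positivity)] at hδ4
  set A : Set ℂ := {z | δ < ‖z‖ ∧ ‖z‖ < r} with hA
  have hAm : MeasurableSet A := IsOpen.measurableSet
    ((isOpen_lt continuous_const continuous_norm).inter (isOpen_lt continuous_norm continuous_const))
  have hAU : A ⊆ ball 0 1 \ {0} := by
    intro z hz
    refine ⟨by simpa using hz.2.trans hr2, ?_⟩
    rintro rfl
    have := hz.1; simp at this; linarith
  have hAB : A ⊆ ball 0 1 := hAU.trans sdiff_subset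
  have hqne : ∀ z ∈ ball (0:ℂ) 1 \ {0}, q z ≠ 0 := by
    intro z hz; rw [hqk]; exact mul_ne_zero hz.2 (hkne z hz.1)
  have hlow : ∀ z ∈ A, c0 * δ < ‖q z‖ := by
    intro z hz
    rw [hqk, norm_mul]
    by_cases h : ‖z‖ < δ1
    · have := hb z (by simpa using h)
      nlinarith [hz.1]
    · have h2 : κ ≤ ‖k z‖ := hmin (by simpa using hz.2.le)
      push Not at h
      nlinarith
  have hhigh : ∀ z ∈ A, ‖q z‖ < (c0 * δ)⁻¹ := by
    intro z hz
    have h2 := hB z (by simpa using hz.2.le)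
    have h3 : B < B' := by rw [hB']; linarith [le_abs_self B]
    have : B' ≤ (c0 * δ)⁻¹ := by
      rw [le_inv_comm₀ hB'0 (by positivity), ← one_div, le_div_iff₀ hB'0]; nlinarith
    linarith
  have hUo : IsOpen (ball (0:ℂ) 1 \ {0}) := isOpen_ball.sdiff isClosed_singleton
  have hq' := hq.mono (sdiff_subset (s := ball (0:ℂ) 1) (t := {0}))
  have hi' : DifferentiableOn ℂ (fun z => (q z)⁻¹) (ball (0:ℂ) 1 \ {0}) := hq'.inv hqne
  have hiinj : InjOn (fun z => (q z)⁻¹) A := fun x hx y hy h => hinj (hAB hx) (hAB hy) (inv_injective h)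
  have a1 := area_log q A _ hUo hAm hAU hq' (hinj.mono hAB)
  have a2 := area_log (fun z => (q z)⁻¹) A _ hUo hAm hAU hi' hiinj
  have a3 : ∫⁻ z in A, ENNReal.ofReal (‖deriv (fun z => (q z)⁻¹) z / (q z)⁻¹‖ ^ 2) =
      ∫⁻ z in A, ENNReal.ofReal (‖deriv q z / q z‖ ^ 2) := by
    apply setLIntegral_congr_fun hAm
    intro z hz
    have hd := hq.differentiableAt (isOpen_ball.mem_nhds (hAB hz))
    have hne := hqne z (hAU hz)
    simp only
    rw [deriv_fun_inv'' hd hne]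
    congr 2
    simp only [norm_div, norm_neg, norm_inv, norm_pow]
    have : ‖q z‖ ≠ 0 := norm_ne_zero_iff.2 hne
    field_simp
  rw [a3] at a2
  have hdisj : Disjoint (q '' A) ((fun z => (q z)⁻¹) '' A) := by
    rw [Set.disjoint_left]
    rintro _ ⟨z, hz, rfl⟩ ⟨w, hw, hzw⟩
    apply hbe z (hAB hz) w (hAB hw)
    simp only at hzw
    rw [← hzw, inv_mul_cancel₀ (hqne w (hAU hw))]
  have hSm : MeasurableSet ((fun z => (q z)⁻¹) '' A) :=
    hAm.image_of_continuousOn_injOn (hi'.continuousOn.mono hAU) hiinj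
  have a4 := lintegral_union (f := fun w : ℂ => ENNReal.ofReal ((‖w‖ ^ 2)⁻¹)) (μ := volume) hSm hdisj
  rw [a1, a2] at a4
  have hcd : 0 < c0 * δ := by positivity
  have hcd1 : c0 * δ ≤ (c0 * δ)⁻¹ := by
    have : (δ + r) / 2 < r := by linarith
    have hz : (((δ + r) / 2 : ℝ) : ℂ) ∈ A := by
      simp only [hA, mem_ofPred_eq, Complex.norm_real, Real.norm_eq_abs]
      rw [abs_of_pos (by linarith)]; constructor <;> linarith
    exact ((hlow _ hz).trans (hhigh _ hz)).le
  have a5 := annulus_area (c0 * δ) (c0 * δ)⁻¹ hcd hcd1 (q '' A ∪ (fun z => (q z)⁻¹) '' A) (by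
    rintro w (⟨z, hz, rfl⟩ | ⟨z, hz, rfl⟩)
    · exact ⟨hlow z hz, hhigh z hz⟩
    · have hp : 0 < ‖q z‖ := hcd.trans (hlow z hz)
      simp only [norm_inv]
      exact ⟨by rw [lt_inv_comm₀ hcd hp]; exact hhigh z hz,
        by rw [inv_lt_inv₀ hp hcd]; exact hlow z hz⟩)
  rw [a4] at a5
  have hkd' : DifferentiableOn ℂ (deriv k) (ball 0 1) := hkd.deriv isOpen_ball
  have a6 := lower_area (fun z => 1 + z * deriv k z / k z)
    ((differentiableOn_const _).add ((differentiableOn_id.mul hkd').div hkd hkne)) (by simp) δ r hδ0 hδr.le hr2 A hA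
  have a7 : ∫⁻ z in A, ENNReal.ofReal (‖(1 + z * deriv k z / k z) / z‖ ^ 2) =
      ∫⁻ z in A, ENNReal.ofReal (‖deriv q z / q z‖ ^ 2) := by
    apply setLIntegral_congr_fun hAm
    intro z hz
    have hkz := (hkd.differentiableAt (isOpen_ball.mem_nhds (hAB hz))).hasDerivAt
    have hne := hkne z (hAB hz)
    have hz0 : z ≠ 0 := (hAU hz).2
    have hqd : deriv q z = k z + z * deriv k z := by
      have h1 : q = fun z => z * k z := funext hqk
      rw [h1]
      have h2 : HasDerivAt (fun z => z * k z) (1 * k z + z * deriv k z) z := (hasDerivAt_id z).mul hkz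
      rw [h2.deriv, one_mul]
    simp only
    rw [hqd, hqk z]
    congr 3
    field_simp
  rw [a7] at a6
  have a8 := (add_le_add a6 a6).trans a5
  have hl1 : 0 ≤ Real.log (r / δ) := Real.log_nonneg (by rw [le_div_iff₀ hδ0]; linarith)
  rw [← ENNReal.ofReal_add (by positivity) (by positivity), ENNReal.ofReal_le_ofReal_iff (by
    apply mul_nonneg (by positivity); apply Real.log_nonneg; rw [le_div_iff₀ hcd]; linarith)] at a8
  have e1 : (c0 * δ)⁻¹ / (c0 * δ) = ((c0 * δ)⁻¹)^2 := by field_simp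
  rw [e1, Real.log_pow] at a8
  push_cast at a8
  have a9 : Real.log (r / δ) ≤ Real.log ((c0 * δ)⁻¹) := by
    have := Real.pi_pos
    by_contra! h
    nlinarith
  rw [Real.log_le_log_iff (by positivity) (by positivity), div_le_iff₀ hδ0] at a9
  have : (c0 * δ)⁻¹ * δ = c0⁻¹ := by field_simp
  rw [this] at a9
  linarith

open Set in
lemma koebe0 (L : ℂ → ℂ) (hL : DifferentiableOn ℂ L (ball 0 1))
    (hinj : InjOn (fun z => Complex.exp (L z)) (ball 0 1)) : ‖deriv L 0‖ ≤ 4 := by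
  have h0m : (0:ℂ) ∈ ball (0:ℂ) 1 := by simp
  set h : ℂ → ℂ := fun z => Complex.exp ((L z - L 0) / 2) with hh
  have hsq : ∀ z, h z * h z = Complex.exp (L z) * Complex.exp (- L 0) := by
    intro z; simp only [hh]; rw [← Complex.exp_add, ← Complex.exp_add]; congr 1; ring
  have hsqinj : ∀ z ∈ ball (0:ℂ) 1, ∀ w ∈ ball (0:ℂ) 1, h z * h z = h w * h w → z = w := by
    intro z hz w hw e
    rw [hsq, hsq] at e
    exact hinj hz hw (mul_right_cancel₀ (Complex.exp_ne_zero _) e)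
  have h1 : h 0 = 1 := by simp [hh]
  have hne : ∀ z ∈ ball (0:ℂ) 1, h z + 1 ≠ 0 := by
    intro z hz e
    have e1 : h z = -1 := eq_neg_of_add_eq_zero_left e
    have := hsqinj z hz 0 h0m (by rw [e1, h1]; norm_num)
    rw [this, h1] at e; norm_num at e
  have hhd : DifferentiableOn ℂ h (ball 0 1) := by
    simp only [hh]; exact ((hL.sub_const _).div_const _).cexp
  have hd0 : HasDerivAt h (deriv L 0 / 2) 0 := by
    have := ((((hL.differentiableAt (isOpen_ball.mem_nhds h0m)).hasDerivAt.sub_const (L 0)).div_const 2).cexp)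
    simpa [hh] using this
  have hq := be_deriv (fun z => (h z - 1) / (h z + 1)) ((hhd.sub_const 1).div (hhd.add_const 1) hne)
    (by
      intro z hz w hw e
      simp only at e
      rw [div_eq_div_iff (hne z hz) (hne w hw)] at e
      have : h z = h w := by linear_combination e / 2
      exact hsqinj z hz w hw (by rw [this]))
    (by simp [h1]) (by
      intro z hz w hw e
      have h2 := hne z hz
      have h3 := hne w hw
      field_simp at e
      have e1 : h w = - h z := by linear_combination (-1/2) * e
      have := hsqinj z hz w hw (by rw [e1]; ring)
      rw [this] at e1
      have e2 : h w = 0 := by linear_combination e1 / 2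
      exact Complex.exp_ne_zero _ e2)
  have hq' := ((hd0.sub_const 1).div (hd0.add_const 1) (hne 0 h0m)).deriv
  have e : (fun z => (h z - 1) / (h z + 1)) = (fun z => h z - 1) / (fun z => h z + 1) := rfl
  rw [e, hq', h1] at hq
  have : (deriv L 0 / 2 * (1 + 1) - (1 - 1) * (deriv L 0 / 2)) / (1 + 1) ^ 2 = deriv L 0 / 4 := by ring
  rw [this, norm_div] at hq
  simp at hq
  linarith

/-- disk automorphism -/
noncomputable def mob (c u x : ℂ) : ℂ := (u * x + c) / (1 + (starRingEnd ℂ) c * u * x)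

lemma mob_den (c u x : ℂ) (hc : ‖c‖ < 1) (hu : ‖u‖ = 1) (hx : ‖x‖ < 1) :
    1 + (starRingEnd ℂ) c * u * x ≠ 0 := by
  intro h
  have h1 : (starRingEnd ℂ) c * u * x = -1 := by linear_combination h
  have h2 := congrArg norm h1
  simp [hu] at h2
  nlinarith [norm_nonneg c, norm_nonneg x]

lemma mob_normSq (c u x : ℂ) (hu : ‖u‖ = 1) :
    ‖1 + (starRingEnd ℂ) c * u * x‖ ^ 2 - ‖u * x + c‖ ^ 2 = (1 - ‖c‖ ^ 2) * (1 - ‖x‖ ^ 2) := by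
  have hu' : ‖u‖ ^ 2 = 1 := by rw [hu]; norm_num
  rw [← Complex.normSq_eq_norm_sq] at *
  rw [← Complex.normSq_eq_norm_sq, ← Complex.normSq_eq_norm_sq, ← Complex.normSq_eq_norm_sq]
  simp only [Complex.normSq_apply] at *
  simp
  linear_combination ((c.re^2 + c.im^2) * (x.re^2+x.im^2) - (x.re^2+x.im^2)) * hu'

lemma mob_mem (c u x : ℂ) (hc : ‖c‖ < 1) (hu : ‖u‖ = 1) (hx : ‖x‖ < 1) : ‖mob c u x‖ < 1 := by
  have h1 := mob_normSq c u x hu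
  have h2 := norm_pos_iff.2 (mob_den c u x hc hu hx)
  rw [mob, norm_div, div_lt_one h2]
  have h3 : 0 < (1 - ‖c‖ ^ 2) * (1 - ‖x‖ ^ 2) := by
    apply mul_pos <;> nlinarith [norm_nonneg c, norm_nonneg x]
  apply lt_of_pow_lt_pow_left₀ 2 h2.le
  linarith

lemma mob_sub (c u x y : ℂ) (hc : ‖c‖ < 1) (hu : ‖u‖ = 1) (hx : ‖x‖ < 1) (hy : ‖y‖ < 1) :
    mob c u x - mob c u y = (1 - (starRingEnd ℂ) c * c) * u * (x - y) /
      ((1 + (starRingEnd ℂ) c * u * x) * (1 + (starRingEnd ℂ) c * u * y)) := by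
  have h1 := mob_den c u x hc hu hx
  have h2 := mob_den c u y hc hu hy
  unfold mob
  rw [div_sub_div _ _ h1 h2]
  congr 1
  ring

lemma conj_mul_ne (c : ℂ) (hc : ‖c‖ < 1) : 1 - (starRingEnd ℂ) c * c ≠ 0 := by
  intro h
  have h1 : (starRingEnd ℂ) c * c = 1 := by linear_combination -h
  have h2 := congrArg norm h1
  simp at h2
  nlinarith [norm_nonneg c]

open Set in
lemma mob_injOn (c u : ℂ) (hc : ‖c‖ < 1) (hu : ‖u‖ = 1) : InjOn (mob c u) (ball 0 1) := by
  intro x hx y hy h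
  rw [mem_ball_zero_iff] at hx hy
  have h1 := mob_sub c u x y hc hu hx hy
  rw [h, sub_self, eq_comm, div_eq_zero_iff] at h1
  have hu0 : u ≠ 0 := by intro h; rw [h] at hu; simp at hu
  rcases h1 with h1 | h1
  · rcases mul_eq_zero.1 h1 with h2 | h2
    · exact absurd h2 (mul_ne_zero (conj_mul_ne c hc) hu0)
    · exact sub_eq_zero.1 h2
  · exact absurd h1 (mul_ne_zero (mob_den c u x hc hu hx) (mob_den c u y hc hu hy))

open Set in
lemma mob_diff (c u : ℂ) (hc : ‖c‖ < 1) (hu : ‖u‖ = 1) : DifferentiableOn ℂ (mob c u) (ball 0 1) := by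
  unfold mob
  apply DifferentiableOn.div
  · fun_prop
  · fun_prop
  · intro x hx
    exact mob_den c u x hc hu (by simpa using hx)

lemma mob_zero (c u : ℂ) : mob c u 0 = c := by simp [mob]

open Set in
lemma mob_mapsTo (c u : ℂ) (hc : ‖c‖ < 1) (hu : ‖u‖ = 1) : MapsTo (mob c u) (ball 0 1) (ball 0 1) := by
  intro x hx
  rw [mem_ball_zero_iff] at *
  exact mob_mem c u x hc hu hx

lemma mob_deriv0 (c u : ℂ) : HasDerivAt (mob c u) ((1 - (starRingEnd ℂ) c * c) * u) 0 := by
  have h1 : HasDerivAt (fun x : ℂ => u * x + c) u 0 := by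
    simpa using ((hasDerivAt_id (0:ℂ)).const_mul u).add_const c
  have h2 : HasDerivAt (fun x : ℂ => 1 + (starRingEnd ℂ) c * u * x) ((starRingEnd ℂ) c * u) 0 := by
    simpa using ((hasDerivAt_id (0:ℂ)).const_mul ((starRingEnd ℂ) c * u)).const_add 1
  have h3 := h1.div h2 (by simp)
  have h4 : (u * (1 + (starRingEnd ℂ) c * u * 0) - (u * 0 + c) * ((starRingEnd ℂ) c * u)) /
      (1 + (starRingEnd ℂ) c * u * 0) ^ 2 = (1 - (starRingEnd ℂ) c * c) * u := by
    simp; ring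
  rw [h4] at h3
  exact h3

open Set in
lemma koebe1 (L : ℂ → ℂ) (hL : DifferentiableOn ℂ L (ball 0 1))
    (hinj : InjOn (fun z => Complex.exp (L z)) (ball 0 1)) (c : ℂ) (hc : ‖c‖ < 1) :
    ‖deriv L c‖ ≤ 4 / (1 - ‖c‖ ^ 2) := by
  have hu : ‖(1:ℂ)‖ = 1 := by simp
  have := koebe0 (L ∘ mob c 1) (hL.comp (mob_diff c 1 hc hu) (mob_mapsTo c 1 hc hu))
    (hinj.comp (mob_injOn c 1 hc hu) (mob_mapsTo c 1 hc hu))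
  have h1 : HasDerivAt L (deriv L c) (mob c 1 0) := by
    rw [mob_zero]
    exact (hL.differentiableAt (isOpen_ball.mem_nhds (by simpa using hc))).hasDerivAt
  rw [(h1.comp 0 (mob_deriv0 c 1)).deriv, norm_mul] at this
  have h2 : ‖(1 - (starRingEnd ℂ) c * c) * 1‖ = 1 - ‖c‖ ^ 2 := by
    rw [mul_one, Complex.conj_mul', ]
    rw [show (1:ℂ) - (‖c‖:ℂ)^2 = ((1 - ‖c‖^2 : ℝ) : ℂ) by push_cast; rfl, Complex.norm_real,
      Real.norm_eq_abs, abs_of_pos]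
    nlinarith [norm_nonneg c]
  rw [h2] at this
  rw [le_div_iff₀ (by nlinarith [norm_nonneg c])]
  exact this

open Set in
lemma koebe2 (L : ℂ → ℂ) (hL : DifferentiableOn ℂ L (ball 0 1))
    (hinj : InjOn (fun z => Complex.exp (L z)) (ball 0 1)) (v : ℂ) (hv : ‖v‖ = 1) (r : ℝ) (hr0 : 0 ≤ r)
    (hr : r < 1) :
    (L 0).re ≤ (L (r * v)).re + (2 * Real.log (1 + r) - 2 * Real.log (1 - r)) := by
  have hder : ∀ s ∈ Icc (0:ℝ) r, HasDerivAt (fun s : ℝ => (L (s * v)).re + (2 * Real.log (1 + s) - 2 * Real.log (1 - s)))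
      ((deriv L (s * v) * v).re + (2 * (1 / (1 + s)) - 2 * (-1 / (1 - s)))) s := by
    intro s hs
    have hn : ‖(s:ℂ) * v‖ < 1 := by
      rw [norm_mul, hv, Complex.norm_real, Real.norm_eq_abs, abs_of_nonneg hs.1]; linarith [hs.2]
    have h1 : HasDerivAt L (deriv L (s * v)) ((s:ℂ) * v) :=
      (hL.differentiableAt (isOpen_ball.mem_nhds (by simpa using hn))).hasDerivAt
    have h2 : HasDerivAt (fun x : ℂ => x * v) v (s:ℂ) := by
      simpa using (hasDerivAt_id (s:ℂ)).mul_const v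
    have h3 : HasDerivAt (fun x : ℂ => L (x * v)) (deriv L (s * v) * v) (s:ℂ) := h1.comp (s:ℂ) h2
    have h4 := h3.real_of_complex
    apply h4.add
    apply HasDerivAt.sub
    · apply HasDerivAt.const_mul
      exact ((hasDerivAt_id s).const_add 1).log (by simp; linarith [hs.1])
    · apply HasDerivAt.const_mul
      exact ((hasDerivAt_id s).const_sub 1).log (by simp; linarith [hs.2])
  have hmono : MonotoneOn (fun s : ℝ => (L (s * v)).re + (2 * Real.log (1 + s) - 2 * Real.log (1 - s))) (Icc 0 r) := by
    apply monotoneOn_of_deriv_nonneg (convex_Icc 0 r)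
    · exact fun s hs => (hder s hs).continuousAt.continuousWithinAt
    · intro s hs
      exact (hder s (interior_subset hs)).differentiableAt.differentiableWithinAt
    · intro s hs
      have hs := interior_subset hs
      rw [(hder s hs).deriv]
      have hn : ‖(s:ℂ) * v‖ = s := by
        rw [norm_mul, hv, Complex.norm_real, Real.norm_eq_abs, abs_of_nonneg hs.1, mul_one]
      have h5 := koebe1 L hL hinj (s * v) (by rw [hn]; linarith [hs.2])
      rw [hn] at h5
      have h6 : -‖deriv L (s * v) * v‖ ≤ (deriv L (s * v) * v).re :=
        (abs_le.1 (Complex.abs_re_le_norm _)).1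
      rw [norm_mul, hv, mul_one] at h6
      have p1 : 0 < 1 + s := by linarith [hs.1]
      have p2 : 0 < 1 - s := by linarith [hs.2]
      have h7 : 2 * (1 / (1 + s)) - 2 * (-1 / (1 - s)) = 4 / (1 - s ^ 2) := by
        rw [show (1:ℝ) - s^2 = (1+s)*(1-s) by ring]
        field_simp; ring
      rw [h7]; linarith
  have := hmono (left_mem_Icc.2 hr0) (right_mem_Icc.2 hr0) hr0
  simpa using this

open Set Filter Topology MeasureTheory in
lemma lemB (L : ℂ → ℂ) (hL : DifferentiableOn ℂ L (ball 0 1))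
    (hinj : InjOn (fun z => Complex.exp (L z)) (ball 0 1)) (c : ℝ)
    (hray : ∀ t ∈ Ioo 0 Real.pi, ∃ r ∈ Ioo (0:ℝ) 1, (L (r * Complex.exp (t * Complex.I))).re ≤ c) :
    (L 0).re ≤ c + Real.log 36 := by
  by_contra! hcon
  have hl36 : Real.log 36 = 2 * Real.log 3 + 2 * Real.log 2 := by
    rw [show (36:ℝ) = (3^2)*(2^2) by norm_num, Real.log_mul (by norm_num) (by norm_num), Real.log_pow,
      Real.log_pow]; norm_num
  have hl2 : 0 < Real.log 2 := Real.log_pos (by norm_num)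
  set c' := (L 0).re - 2 * Real.log 3 with hc'
  set lam := c' - c with hlam
  have hlam2 : 2 * Real.log 2 < lam := by rw [hlam, hc']; linarith
  have hcc' : c < c' := by linarith
  have hhalf : ∀ v : ℂ, ‖v‖ = 1 → ∀ r : ℝ, 0 ≤ r → r ≤ 1/2 → c' ≤ (L (r * v)).re := by
    intro v hv r h0 h1
    have h2 := koebe2 L hL hinj v hv r h0 (by linarith)
    have h3 : Real.log (1 + r) - Real.log (1 - r) ≤ Real.log 3 := by
      rw [← Real.log_div (by linarith) (by linarith)]
      apply Real.log_le_log
      · apply div_pos <;> linarith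
      · rw [div_le_iff₀ (by linarith)]; linarith
    rw [hc']; linarith
  set A : Set ℂ := ball 0 1 ∩ ({z | 1/2 < ‖z‖} ∩ (ball 0 1 ∩ (fun z => (L z).re) ⁻¹' (Ioo c c'))) with hA
  have hAo : IsOpen A := by
    apply isOpen_ball.inter
    apply (isOpen_lt continuous_const continuous_norm).inter
    apply ContinuousOn.isOpen_inter_preimage _ isOpen_ball isOpen_Ioo
    exact Complex.continuous_re.comp_continuousOn hL.continuousOn
  have hAB : A ⊆ ball 0 1 := inter_subset_left
  -- upper bound
  have up : ∫⁻ z in A, ENNReal.ofReal (‖deriv L z‖ ^ 2) ≤ ENNReal.ofReal (2 * Real.pi * lam) := by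
    have a1 := area_log (fun z => Complex.exp (L z)) A _ isOpen_ball hAo.measurableSet hAB hL.cexp
      (hinj.mono hAB)
    have a2 := annulus_area (Real.exp c) (Real.exp c') (Real.exp_pos _) (Real.exp_le_exp.2 hcc'.le)
      ((fun z => Complex.exp (L z)) '' A) (by
        rintro _ ⟨z, hz, rfl⟩
        simp only [Complex.norm_exp, Real.exp_lt_exp]
        exact hz.2.2.2)
    rw [a1, ← Real.exp_sub, Real.log_exp] at a2
    refine le_trans (le_of_eq ?_) a2
    apply setLIntegral_congr_fun hAo.measurableSet
    intro z hz
    have hd := (hL.differentiableAt (isOpen_ball.mem_nhds (hAB hz))).hasDerivAt.cexp.deriv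
    simp only
    rw [hd]
    congr 3
    field_simp
  have hm : Measurable (A.indicator (fun z => ENNReal.ofReal (‖deriv L z‖ ^ 2))) := by
    apply Measurable.indicator _ hAo.measurableSet
    have := measurable_deriv L
    fun_prop
  rw [← lintegral_indicator hAo.measurableSet, polar_le _ hm] at up
  have inner : ∀ t ∈ Ioo 0 Real.pi, ENNReal.ofReal (lam ^ 2 / Real.log 2) ≤ ∫⁻ r in Ioi (0:ℝ),
      ENNReal.ofReal r * A.indicator (fun z => ENNReal.ofReal (‖deriv L z‖ ^ 2)) (r * Complex.exp (t * Complex.I)) := by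
    intro t ht
    set v := Complex.exp (t * Complex.I) with hv
    have hv1 : ‖v‖ = 1 := Complex.norm_exp_ofReal_mul_I t
    have hn : ∀ r : ℝ, 0 < r → ‖(r:ℂ) * v‖ = r := by
      intro r hr
      rw [norm_mul, hv1, Complex.norm_real, Real.norm_eq_abs, abs_of_pos hr, mul_one]
    set ℓ : ℝ → ℝ := fun r => (L (r * v)).re with hℓ
    have hder : ∀ s ∈ Ioo (0:ℝ) 1, HasDerivAt ℓ (deriv L (s * v) * v).re s := by
      intro s hs
      have h1 : HasDerivAt L (deriv L (s * v)) ((s:ℂ) * v) :=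
        (hL.differentiableAt (isOpen_ball.mem_nhds (by simpa [hv1, abs_of_pos hs.1] using hs.2))).hasDerivAt
      have h2 : HasDerivAt (fun x : ℂ => x * v) v (s:ℂ) := by
        simpa using (hasDerivAt_id (s:ℂ)).mul_const v
      have h3 : HasDerivAt (fun x : ℂ => L (x * v)) (deriv L (s * v) * v) (s:ℂ) := h1.comp (s:ℂ) h2
      exact h3.real_of_complex
    have hcontℓ : ContinuousOn ℓ (Ioo 0 1) := fun s hs => (hder s hs).continuousAt.continuousWithinAt
    set s : Set ℝ := Ioo (1/2) 1 ∩ ℓ ⁻¹' (Ioo c c') with hs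
    have hsub : Ioo (1/2:ℝ) 1 ⊆ Ioo 0 1 := Ioo_subset_Ioo_left (by norm_num)
    have hso : IsOpen s := (hcontℓ.mono hsub).isOpen_inter_preimage isOpen_Ioo isOpen_Ioo
    have hsA : ∀ r ∈ s, (r:ℂ) * v ∈ A := by
      intro r hr
      have hr0 := hsub hr.1
      have hb : (r:ℂ) * v ∈ ball (0:ℂ) 1 := by rw [mem_ball_zero_iff, hn r hr0.1]; exact hr0.2
      exact ⟨hb, by simp only [mem_ofPred_eq]; rw [hn r hr0.1]; exact hr.1.1, hb, hr.2⟩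
    have himg : Ioo c c' ⊆ ℓ '' s := by
      intro y hy
      obtain ⟨r0, hr0, hr0c⟩ := hray t ht
      have hr0h : 1/2 < r0 := by
        by_contra! h
        have := hhalf v hv1 r0 hr0.1.le h
        linarith
      have hcI : ContinuousOn ℓ (Icc (1/2) r0) := hcontℓ.mono (fun x hx => ⟨by linarith [hx.1], by linarith [hx.2, hr0.2]⟩)
      have h12 : c' ≤ ℓ (1/2) := hhalf v hv1 (1/2) (by norm_num) le_rfl
      have := intermediate_value_Ioo' hr0h.le hcI
      obtain ⟨x, hx, hxy⟩ := this ⟨lt_of_le_of_lt hr0c hy.1, lt_of_lt_of_le hy.2 h12⟩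
      refine ⟨x, ⟨⟨hx.1, hx.2.trans hr0.2⟩, ?_⟩, hxy⟩
      simp only [mem_preimage, hxy]; exact hy
    have hlen : ENNReal.ofReal lam ≤ ∫⁻ r in s, ENNReal.ofReal ‖deriv L (r * v)‖ := by
      have h1 := addHaar_image_le_lintegral_abs_det_fderiv volume hso.measurableSet
        (fun x hx => (hder x (hsub hx.1)).hasFDerivAt.hasFDerivWithinAt (s := s))
      have h2 : volume (Ioo c c') ≤ volume (ℓ '' s) := measure_mono himg
      rw [Real.volume_Ioo] at h2
      refine h2.trans (h1.trans (lintegral_mono fun r => ENNReal.ofReal_le_ofReal ?_))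
      have : (ContinuousLinearMap.toSpanSingleton ℝ (deriv L (r * v) * v).re).det = (deriv L (r * v) * v).re := by
        simp [ContinuousLinearMap.det]
      rw [this]
      refine (Complex.abs_re_le_norm _).trans ?_
      rw [norm_mul, hv1, mul_one]
    set κ := lam / Real.log 2 with hκ
    have hκ0 : 0 < κ := div_pos (by linarith) hl2
    have hmd : Measurable (fun r : ℝ => deriv L (r * v)) := by
      have := measurable_deriv L
      fun_prop
    have h5 : ENNReal.ofReal (2 * κ * lam) ≤ (∫⁻ r in Ioi (0:ℝ),
      ENNReal.ofReal r * A.indicator (fun z => ENNReal.ofReal (‖deriv L z‖ ^ 2)) (r * v))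
       + ENNReal.ofReal (κ ^ 2 * Real.log 2) := by
      calc _ = ENNReal.ofReal (2 * κ) * ENNReal.ofReal lam := ENNReal.ofReal_mul (by positivity)
        _ ≤ ENNReal.ofReal (2 * κ) * ∫⁻ r in s, ENNReal.ofReal ‖deriv L (r * v)‖ := by gcongr
        _ = ∫⁻ r in s, ENNReal.ofReal (2 * κ) * ENNReal.ofReal ‖deriv L (r * v)‖ := by
          rw [lintegral_const_mul' _ _ ENNReal.ofReal_ne_top]
        _ ≤ ∫⁻ r in s, (ENNReal.ofReal r * A.indicator (fun z => ENNReal.ofReal (‖deriv L z‖ ^ 2)) (r * v) + ENNReal.ofReal (κ ^ 2) * ENNReal.ofReal (r⁻¹)) := by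
          apply setLIntegral_mono' hso.measurableSet
          intro r hr
          have hr0 : 0 < r := (hsub hr.1).1
          rw [indicator_of_mem (hsA r hr), ← ENNReal.ofReal_mul (by positivity), ← ENNReal.ofReal_mul (by positivity), ← ENNReal.ofReal_mul (by positivity), ← ENNReal.ofReal_add (by positivity) (by positivity)]
          apply ENNReal.ofReal_le_ofReal
          set x := ‖deriv L (r * v)‖
          have : r * x ^ 2 + κ ^ 2 * r⁻¹ - 2 * κ * x = r⁻¹ * (r * x - κ) ^ 2 := by
            field_simp; ring
          have h6 : 0 ≤ r⁻¹ * (r * x - κ) ^ 2 := by positivity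
          linarith
        _ = (∫⁻ r in s, ENNReal.ofReal r * A.indicator (fun z => ENNReal.ofReal (‖deriv L z‖ ^ 2)) (r * v)) + ∫⁻ r in s, ENNReal.ofReal (κ ^ 2) * ENNReal.ofReal (r⁻¹) := by
          apply lintegral_add_right
          fun_prop
        _ ≤ _ := by
          gcongr
          · exact fun r hr => (hsub hr.1).1
          · rw [lintegral_const_mul' _ _ ENNReal.ofReal_ne_top, ENNReal.ofReal_mul (by positivity)]
            gcongr
            have := lint_inv (1/2) 1 (by norm_num) (by norm_num)
            rw [show (1:ℝ) / (1/2) = 2 by norm_num] at this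
            rw [← this]
            exact lintegral_mono_set inter_subset_left
    have h7 := tsub_le_iff_right.2 h5
    rw [← ENNReal.ofReal_sub _ (by positivity)] at h7
    refine le_trans (le_of_eq ?_) h7
    congr 1
    rw [hκ]; field_simp; ring
  have hpi := Real.pi_pos
  have low : ENNReal.ofReal (Real.pi * (lam ^ 2 / Real.log 2)) ≤ ENNReal.ofReal (2 * Real.pi * lam) := by
    refine le_trans ?_ up
    calc _ = ∫⁻ t in Ioo 0 Real.pi, ENNReal.ofReal (lam ^ 2 / Real.log 2) := by
          rw [lintegral_const]
          simp only [MeasurableSet.univ, Measure.restrict_apply, univ_inter, Real.volume_Ioo, sub_zero]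
          rw [← ENNReal.ofReal_mul (by positivity)]
          congr 1; ring
      _ ≤ _ := setLIntegral_mono' measurableSet_Ioo inner
      _ ≤ _ := lintegral_mono_set (Ioo_subset_Ioo_left (by linarith))
  have hlp : 0 < lam := by linarith
  rw [ENNReal.ofReal_le_ofReal_iff (by positivity)] at low
  have : Real.pi * (lam ^ 2 / Real.log 2) = Real.pi * lam * (lam / Real.log 2) := by ring
  rw [this] at low
  have h8 : 2 < lam / Real.log 2 := by rw [lt_div_iff₀ hl2]; linarith
  have h9 : 0 < Real.pi * lam := by positivity
  nlinarith

lemma geo_ineq (r x1 x2 : ℝ) (hr0 : 0 ≤ r) (hr1 : r < 1) (h1 : 0 ≤ x1) (h1' : x1 < 1) (h2 : 0 ≤ x2)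
    (h2' : x2 < 1) :
    ((x1 + x2) * (1 + r) ^ 2) ^ 2 ≤ 4 ^ 2 * ((1 + r ^ 2 * x1 ^ 2) * (1 + r ^ 2 * x2 ^ 2)) := by
  set S := x1 + x2 with hS
  have hS2 : S ≤ 2 := by linarith
  have hS0 : 0 ≤ S := by linarith
  have e1 : (1 + r ^ 2 * x1 ^ 2) * (1 + r ^ 2 * x2 ^ 2) = (1 - r ^ 2 * (x1 * x2)) ^ 2 + r ^ 2 * S ^ 2 := by
    rw [hS]; ring
  have hP : x1 * x2 ≤ S ^ 2 / 4 := by rw [hS]; nlinarith [sq_nonneg (x1 - x2)]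
  have hr2 : r ^ 2 ≤ 1 := by nlinarith
  have hr2' : 0 ≤ r ^ 2 := by positivity
  have hq : r ^ 2 * (S ^ 2 / 4) ≤ 1 := by
    have : S ^ 2 / 4 ≤ 1 := by nlinarith
    nlinarith [sq_nonneg S]
  have e2 : (1 - r ^ 2 * (S ^ 2 / 4)) ^ 2 ≤ (1 - r ^ 2 * (x1 * x2)) ^ 2 := by
    apply pow_le_pow_left₀ (by linarith)
    have := mul_le_mul_of_nonneg_left hP hr2'
    linarith
  have e3 : (1 + r ^ 2 * (S ^ 2 / 4)) ^ 2 ≤ (1 + r ^ 2 * x1 ^ 2) * (1 + r ^ 2 * x2 ^ 2) := by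
    rw [e1]; nlinarith
  have e4 : S * (1 + r ^ 2) ≤ 2 * (1 + r ^ 2 * (S ^ 2 / 4)) := by
    have : 0 ≤ (2 - S) * (1 - r ^ 2 * S / 2) := by
      apply mul_nonneg (by linarith)
      nlinarith
    nlinarith
  have e5 : (1 + r) ^ 2 ≤ 2 * (1 + r ^ 2) := by nlinarith [sq_nonneg (1 - r)]
  have e6 : S * (1 + r) ^ 2 ≤ 4 * (1 + r ^ 2 * (S ^ 2 / 4)) := by nlinarith
  calc _ ≤ (4 * (1 + r ^ 2 * (S ^ 2 / 4))) ^ 2 := pow_le_pow_left₀ (by positivity) e6 2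
    _ = 4 ^ 2 * (1 + r ^ 2 * (S ^ 2 / 4)) ^ 2 := by ring
    _ ≤ _ := by gcongr

lemma normSq_one_add (b : ℂ) (y : ℝ) : ‖1 + b * y‖ ^ 2 = 1 + 2 * y * b.re + ‖b‖ ^ 2 * y ^ 2 := by
  rw [← Complex.normSq_eq_norm_sq, ← Complex.normSq_eq_norm_sq, Complex.normSq_apply, Complex.normSq_apply]
  simp; ring

/-- first-order condition -/
lemma beta_nonneg (β R x : ℝ) (hx : 0 < x) (hR : 0 < R)
    (h : ∀ y, 0 < y → y ≤ x → 0 ≤ y ^ 2 * R + 2 * y * β) : 0 ≤ β := by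
  by_contra! hb
  have hy : 0 < min x (-β / R) := lt_min hx (div_pos (by linarith) hR)
  have := h _ hy (min_le_left _ _)
  have h2 : min x (-β / R) * R ≤ -β := by
    rw [← le_div_iff₀ hR]; exact min_le_right _ _
  nlinarith

lemma alg1 (n k z : ℂ) (h : 1 + -k * z ≠ 0) :
    (z + -n) / (1 + -k * z) + n = z * (1 + k * ((z + -n) / (1 + -k * z))) := by
  have hW : (z + -n) / (1 + -k * z) * (1 + -k * z) = z + -n := div_mul_cancel₀ _ h
  generalize (z + -n) / (1 + -k * z) = W at *
  linear_combination hW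

lemma alg2 (n k v s y : ℂ) (hD : 1 + k * v * s ≠ 0) (hE : 1 + s * y ≠ 0) :
    ((v + n * s) / (1 + k * v * s) * y + (v * s + n) / (1 + k * v * s)) * (1 + k * v * ((y + s) / (1 + s * y)))
    = (v * ((y + s) / (1 + s * y)) + n) * (1 + (s + k * v) / (1 + k * v * s) * y) := by
  have hZ : (y + s) / (1 + s * y) * (1 + s * y) = y + s := div_mul_cancel₀ _ hE
  have h1 : (v + n * s) / (1 + k * v * s) * (1 + k * v * s) = v + n * s := div_mul_cancel₀ _ hD
  have h2 : (v * s + n) / (1 + k * v * s) * (1 + k * v * s) = v * s + n := div_mul_cancel₀ _ hD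
  have h3 : (s + k * v) / (1 + k * v * s) * (1 + k * v * s) = s + k * v := div_mul_cancel₀ _ hD
  generalize (y + s) / (1 + s * y) = Z at *
  generalize (v + n * s) / (1 + k * v * s) = P at *
  generalize (v * s + n) / (1 + k * v * s) = Q at *
  generalize (s + k * v) / (1 + k * v * s) = R at *
  apply mul_right_cancel₀ hD
  linear_combination v * (k * n - 1) * hZ + (y * (1 + k * v * Z)) * h1 + (1 + k * v * Z) * h2 - (v * Z + n) * y * h3

lemma alg3 (s r : ℝ) (h : 1 - s * r ≠ 0) (h2 : 1 - s * s ≠ 0) :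
    ((r - s) / (1 - s * r) + s) / (1 + s * ((r - s) / (1 - s * r))) = r := by
  have hW : (r - s) / (1 - s * r) * (1 - s * r) = r - s := div_mul_cancel₀ _ h
  generalize (r - s) / (1 - s * r) = W at *
  have h4 : 1 + s * W ≠ 0 := by
    intro h5
    apply h2
    linear_combination (1 - s * r) * h5 - s * hW
  rw [div_eq_iff h4]
  linear_combination hW

set_option maxHeartbeats 1000000 in
open Set in
lemma geo (n1 n2 : ℂ) (hn1 : ‖n1‖ < 1) (hn2 : ‖n2‖ < 1) :
    ∃ (c u : ℂ) (x1 x2 : ℝ), ‖c‖ < 1 ∧ ‖u‖ = 1 ∧ 0 ≤ x1 ∧ x1 < 1 ∧ 0 ≤ x2 ∧ x2 < 1 ∧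
      mob c u (-x1 : ℝ) = n1 ∧ mob c u x2 = n2 ∧ ‖n1 - n2‖ ≤ 4 * ((1 - ‖c‖) / (1 + ‖c‖)) := by
  have one1 : ‖(1:ℂ)‖ = 1 := by simp
  set w := mob (-n1) 1 n2 with hw
  have hwlt : ‖w‖ < 1 := mob_mem (-n1) 1 n2 (by simpa using hn1) one1 hn2
  obtain ⟨v, hv, hwv⟩ : ∃ v : ℂ, ‖v‖ = 1 ∧ w = (‖w‖ : ℂ) * v := by
    by_cases h : w = 0
    · exact ⟨1, by simp, by simp [h]⟩
    · have : ‖w‖ ≠ 0 := norm_ne_zero_iff.2 h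
      refine ⟨w / ‖w‖, by simp [this], ?_⟩
      have : (‖w‖:ℂ) ≠ 0 := by exact_mod_cast this
      field_simp
  set ρ := ‖w‖ with hρ
  have hρ0 : 0 ≤ ρ := norm_nonneg w
  have hmn2 : mob n1 v ρ = n2 := by
    have e1 : mob n1 v ρ = mob n1 1 w := by
      rw [hwv]; simp only [mob]; congr 1 <;> ring
    rw [e1]
    have d1 := mob_den n1 1 w hn1 one1 hwlt
    have d2 := mob_den (-n1) 1 n2 (by simpa using hn1) one1 hn2
    rw [mob, div_eq_iff d1, hw, mob]
    simp only [one_mul, mul_one, map_neg] at d2 ⊢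
    exact alg1 _ _ _ d2
  have hcont : ContinuousOn (fun s : ℝ => ‖mob n1 v s‖) (Icc 0 ρ) := by
    apply ContinuousOn.norm
    apply (mob_diff n1 v hn1 hv).continuousOn.comp (by fun_prop)
    intro s hs
    simp only [mem_ball_zero_iff, Complex.norm_real, Real.norm_eq_abs]
    rw [abs_of_nonneg hs.1]; linarith [hs.2]
  obtain ⟨s, hs, hmin⟩ := isCompact_Icc.exists_isMinOn (nonempty_Icc.2 hρ0) hcont
  have hs1 : s < 1 := lt_of_le_of_lt hs.2 hwlt
  have hsn : ‖(s:ℂ)‖ < 1 := by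
    rw [Complex.norm_real, Real.norm_eq_abs, abs_of_nonneg hs.1]; exact hs1
  set c := mob n1 v s with hc
  have hc1 : ‖c‖ < 1 := mob_mem n1 v s hn1 hv hsn
  have dd := mob_den n1 v s hn1 hv hsn
  set u := (v + n1 * s) / (1 + (starRingEnd ℂ) n1 * v * s) with hu
  have hvv : (starRingEnd ℂ) v * v = 1 := by rw [Complex.conj_mul', hv]; norm_num
  have hvn : v + n1 * s = v * (starRingEnd ℂ) (1 + (starRingEnd ℂ) n1 * v * s) := by
    simp only [map_add, map_mul, map_one, Complex.conj_conj, Complex.conj_ofReal]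
    linear_combination (-n1 * s) * hvv
  have hu1 : ‖u‖ = 1 := by
    rw [hu, hvn, norm_div, norm_mul, hv, Complex.norm_conj, one_mul, div_self (norm_ne_zero_iff.2 dd)]
  have dd' : (starRingEnd ℂ) (1 + (starRingEnd ℂ) n1 * v * s) ≠ 0 := by
    intro h; exact dd ((map_eq_zero _).1 h)
  have hcu : (starRingEnd ℂ) c * u = (s + (starRingEnd ℂ) n1 * v) / (1 + (starRingEnd ℂ) n1 * v * s) := by
    rw [hu, hvn, hc, mob, map_div₀, div_mul_div_comm, div_eq_div_iff (mul_ne_zero dd' dd) dd]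
    have h9 : (starRingEnd ℂ) (v * s + n1) * v = s + (starRingEnd ℂ) n1 * v := by
      simp only [map_add, map_mul, Complex.conj_ofReal]
      linear_combination (s:ℂ) * hvv
    linear_combination ((starRingEnd ℂ) (1 + (starRingEnd ℂ) n1 * v * s) * (1 + (starRingEnd ℂ) n1 * v * s)) * h9
  have hcomp : ∀ y : ℝ, |y| < 1 → mob c u y = mob n1 v ((y + s) / (1 + s * y) : ℝ) := by
    intro y hy
    have hy' := abs_lt.1 hy
    have q1 : 0 < 1 + s * y := by nlinarith [hs.1]
    have q1c : (1 + (s:ℂ) * y) ≠ 0 := by exact_mod_cast q1.ne'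
    have d1 := mob_den c u y hc1 hu1 (by rw [Complex.norm_real]; exact hy)
    have hz : ‖(((y + s) / (1 + s * y) : ℝ):ℂ)‖ < 1 := by
      rw [Complex.norm_real, Real.norm_eq_abs, abs_div, abs_of_pos q1, div_lt_one q1, abs_lt]
      have := hs.1
      constructor <;> nlinarith
    have d2 := mob_den n1 v _ hn1 hv hz
    rw [mob, mob, div_eq_div_iff d1 d2, hcu, hc, mob, hu]
    push_cast
    exact alg2 _ _ _ _ _ dd q1c
  set x2 := (ρ - s) / (1 - s * ρ) with hx2
  have q2 : 0 < 1 - s * ρ := by nlinarith [hs.1]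
  have hx20 : 0 ≤ x2 := div_nonneg (by linarith [hs.2]) q2.le
  have hx21 : x2 < 1 := by rw [hx2, div_lt_one q2]; nlinarith [hs.1]
  have m1 : mob c u ((-s : ℝ)) = n1 := by
    rw [hcomp (-s) (by rw [abs_neg, abs_of_nonneg hs.1]; exact hs1)]
    simp [mob]
  have m2 : mob c u x2 = n2 := by
    rw [hcomp x2 (by rw [abs_of_nonneg hx20]; exact hx21), ← hmn2]
    congr 2
    have q3 : 1 - s * s ≠ 0 := by nlinarith [hs.1]
    rw [hx2]
    exact alg3 s ρ q2.ne' q3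
  have hmin' : ∀ y : ℝ, -s ≤ y → y ≤ x2 → ‖c‖ ≤ ‖mob c u y‖ := by
    intro y h1 h2
    rw [hcomp y (abs_lt.2 ⟨by linarith, by linarith⟩)]
    apply hmin
    have q1 : 0 < 1 + s * y := by nlinarith [hs.1]
    constructor
    · exact div_nonneg (by linarith) q1.le
    · rw [div_le_iff₀ q1]
      rw [hx2, le_div_iff₀ q2] at h2
      nlinarith
  set b := (starRingEnd ℂ) c * u with hb
  have hbn : ‖b‖ = ‖c‖ := by rw [hb, norm_mul, hu1, Complex.norm_conj, mul_one]
  have hR : 0 < 1 + ‖c‖ ^ 2 := by positivity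
  have hR' : 0 < 1 - ‖c‖ ^ 2 := by nlinarith [norm_nonneg c]
  have hcond : ∀ y : ℝ, -s ≤ y → y ≤ x2 → 0 ≤ y ^ 2 * (1 + ‖c‖ ^ 2) + 2 * y * b.re := by
    intro y h1 h2
    have h3 := hmin' y h1 h2
    have hy1 : ‖(y:ℂ)‖ < 1 := by
      rw [Complex.norm_real, Real.norm_eq_abs]; exact abs_lt.2 ⟨by linarith, by linarith⟩
    have d := norm_pos_iff.2 (mob_den c u y hc1 hu1 hy1)
    rw [mob, norm_div, le_div_iff₀ d] at h3
    have h4 := mob_normSq c u y hu1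
    have h5 := normSq_one_add b y
    rw [← hb] at h3 h4 d
    rw [hbn] at h5
    have h6 := pow_le_pow_left₀ (by positivity) h3 2
    rw [mul_pow] at h6
    rw [Complex.norm_real, Real.norm_eq_abs, sq_abs] at h4
    have h7 : 0 ≤ (1 - ‖c‖ ^ 2) * (y ^ 2 * (1 + ‖c‖ ^ 2) + 2 * y * b.re) := by
      have : ‖u * y + c‖ ^ 2 = ‖1 + b * y‖ ^ 2 - (1 - ‖c‖ ^ 2) * (1 - y ^ 2) := by linarith
      rw [this, h5] at h6
      nlinarith
    exact nonneg_of_mul_nonneg_right h7 hR'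
  have hA : 1 + ‖c‖ ^ 2 * s ^ 2 ≤ ‖1 + b * ((-s : ℝ) : ℂ)‖ ^ 2 := by
    rw [normSq_one_add, hbn]
    rcases hs.1.eq_or_lt with h | h
    · rw [← h]; simp
    · have := beta_nonneg (-b.re) (1 + ‖c‖ ^ 2) s h hR (by
        intro y h1 h2
        have := hcond (-y) (by linarith) (by linarith)
        nlinarith)
      nlinarith
  have hB : 1 + ‖c‖ ^ 2 * x2 ^ 2 ≤ ‖1 + b * (x2 : ℂ)‖ ^ 2 := by
    rw [normSq_one_add, hbn]
    rcases hx20.eq_or_lt with h | h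
    · rw [← h]; simp
    · have := beta_nonneg (b.re) (1 + ‖c‖ ^ 2) x2 h hR (by
        intro y h1 h2
        exact hcond y (by linarith [hs.1]) h2)
      nlinarith
  refine ⟨c, u, s, x2, hc1, hu1, hs.1, hs1, hx20, hx21, m1, m2, ?_⟩
  have hsn' : ‖((-s:ℝ):ℂ)‖ < 1 := by rw [Complex.ofReal_neg, norm_neg]; exact hsn
  have hxn' : ‖(x2:ℂ)‖ < 1 := by rw [Complex.norm_real, Real.norm_eq_abs, abs_of_nonneg hx20]; exact hx21
  have hsubq := mob_sub c u ((-s:ℝ):ℂ) x2 hc1 hu1 hsn' hxn'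
  rw [m1, m2] at hsubq
  have dA := norm_pos_iff.2 (mob_den c u _ hc1 hu1 hsn')
  have dB := norm_pos_iff.2 (mob_den c u _ hc1 hu1 hxn')
  rw [hsubq, norm_div, norm_mul, norm_mul, norm_mul, hu1, ← hb]
  rw [← hb] at dA dB
  have e1 : ‖1 - (starRingEnd ℂ) c * c‖ = 1 - ‖c‖ ^ 2 := by
    rw [Complex.conj_mul']
    rw [show (1:ℂ) - (‖c‖:ℂ)^2 = ((1 - ‖c‖^2 : ℝ) : ℂ) by push_cast; rfl, Complex.norm_real,
      Real.norm_eq_abs, abs_of_pos hR']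
  have e2 : ‖((-s:ℝ):ℂ) - x2‖ = s + x2 := by
    rw [← Complex.ofReal_sub, Complex.norm_real, Real.norm_eq_abs, abs_of_nonpos (by linarith [hs.1])]
    ring
  rw [e1, e2, mul_one]
  have hr0 := norm_nonneg c
  have key := geo_ineq ‖c‖ s x2 hr0 hc1 hs.1 hs1 hx20 hx21
  have key2 : (s + x2) * (1 + ‖c‖) ^ 2 ≤ 4 * (‖1 + b * ((-s : ℝ) : ℂ)‖ * ‖1 + b * (x2 : ℂ)‖) := by
    apply le_of_sq_le_sq _ (by positivity)
    refine key.trans ?_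
    rw [mul_pow, mul_pow]
    gcongr
  rw [div_le_iff₀ (mul_pos dA dB), ← mul_div_assoc, div_mul_eq_mul_div, le_div_iff₀ (by linarith)]
  have : 0 ≤ 1 - ‖c‖ := by linarith
  nlinarith [mul_le_mul_of_nonneg_left key2 this]

lemma arg_aux (x : ℝ) (hx : 0 < x) (θ : ℝ) (h : θ ∈ Set.Ioc (-Real.pi) Real.pi) :
    Complex.arg ((x:ℂ) * Complex.exp (θ * Complex.I)) = θ := by
  rw [Complex.exp_mul_I]; exact Complex.arg_mul_cos_add_sin_mul_I hx h

lemma rays (Q : Set ℂ) (hQ : IsPreconnected Q) (h0 : (0:ℂ) ∉ Q) (x1 x2 : ℝ) (hx1 : 0 < x1) (hx2 : 0 < x2)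
    (h1 : ((-x1 : ℝ) : ℂ) ∈ Q) (h2 : (x2 : ℂ) ∈ Q) (t2 : ℝ) (ht2 : t2 ∈ Set.Ioo 0 Real.pi)
    (hmiss : ∀ r : ℝ, 0 < r → (r : ℂ) * Complex.exp (-(t2 * Complex.I)) ∉ Q)
    (t : ℝ) (ht : t ∈ Set.Ioo 0 Real.pi) : ∃ r : ℝ, 0 < r ∧ (r : ℂ) * Complex.exp (t * Complex.I) ∈ Q := by
  have hsl : ∀ z ∈ Q, -z * Complex.exp (t2 * Complex.I) ∈ Complex.slitPlane := by
    intro z hz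
    rw [Complex.mem_slitPlane_iff_not_le_zero]
    intro hle
    obtain ⟨r, hr⟩ : ∃ r : ℝ, (r : ℂ) = -z * Complex.exp (t2 * Complex.I) := by
      refine ⟨(-z * Complex.exp (t2 * Complex.I)).re, ?_⟩
      have := (Complex.le_def.1 hle).2
      apply Complex.ext
      · rw [Complex.ofReal_re]
      · rw [this, Complex.ofReal_im]; rfl
    rw [← hr] at hle
    have hr0 : r ≤ 0 := by exact_mod_cast hle
    have hz2 : z = ((-r : ℝ) : ℂ) * Complex.exp (-(t2 * Complex.I)) := by
      push_cast
      rw [hr, Complex.exp_neg]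
      field_simp [Complex.exp_ne_zero]
    rcases hr0.eq_or_lt with h | h
    · apply h0; rw [h] at hz2; simp at hz2; rwa [hz2] at hz
    · apply hmiss (-r) (by linarith); rwa [← hz2]
  have hcont : ContinuousOn (fun z : ℂ => Complex.arg (-z * Complex.exp (t2 * Complex.I))) Q := by
    intro z hz
    have := Complex.continuousAt_arg (hsl z hz)
    apply ContinuousAt.continuousWithinAt
    exact ContinuousAt.comp (f := fun z : ℂ => -z * Complex.exp (t2 * Complex.I)) this (by fun_prop)
  have hpi : Complex.exp (-(Real.pi * Complex.I)) = -1 := by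
    rw [Complex.exp_neg, Complex.exp_pi_mul_I]; norm_num
  have g2 : Complex.arg (-(x2:ℂ) * Complex.exp (t2 * Complex.I)) = t2 - Real.pi := by
    rw [show -(x2:ℂ) * Complex.exp (t2 * Complex.I) = (x2:ℂ) * Complex.exp (((t2 - Real.pi : ℝ) : ℂ) * Complex.I) by
      push_cast
      rw [sub_mul, sub_eq_add_neg, Complex.exp_add, hpi]; ring]
    exact arg_aux x2 hx2 _ ⟨by linarith [ht2.1], by linarith [ht2.2, Real.pi_pos]⟩
  have g1 : Complex.arg (-((-x1:ℝ):ℂ) * Complex.exp (t2 * Complex.I)) = t2 := by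
    rw [Complex.ofReal_neg, neg_neg]
    exact arg_aux x1 hx1 _ ⟨by linarith [ht2.1, Real.pi_pos], ht2.2.le⟩
  have := hQ.intermediate_value h2 h1 hcont
  simp only [g1, g2] at this
  obtain ⟨z, hz, hgz⟩ := this (show t + t2 - Real.pi ∈ Set.Icc (t2 - Real.pi) t2 from
    ⟨by linarith [ht.1], by linarith [ht.2]⟩)
  have hz0 : z ≠ 0 := by rintro rfl; exact h0 hz
  refine ⟨‖z‖, norm_pos_iff.2 hz0, ?_⟩
  have e1 := Complex.norm_mul_exp_arg_mul_I (-z * Complex.exp (t2 * Complex.I))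
  simp only at hgz
  rw [hgz, norm_mul, Complex.norm_exp_ofReal_mul_I, norm_neg, mul_one] at e1
  convert hz using 1
  have e2 : Complex.exp (((t + t2 - Real.pi : ℝ) : ℂ) * Complex.I) =
      -(Complex.exp (t * Complex.I) * Complex.exp (t2 * Complex.I)) := by
    push_cast
    rw [sub_mul, add_mul, sub_eq_add_neg, Complex.exp_add, Complex.exp_add, hpi]; ring
  rw [e2] at e1
  apply mul_right_cancel₀ (Complex.exp_ne_zero (t2 * Complex.I))
  linear_combination -e1

lemma mob_inv (c u z : ℂ) (hc : ‖c‖ < 1) (hu : ‖u‖ = 1) (hz : ‖z‖ < 1) :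
    mob c u (mob (-((starRingEnd ℂ) u * c)) ((starRingEnd ℂ) u) z) = z := by
  have huc : ‖(starRingEnd ℂ) u‖ = 1 := by rw [Complex.norm_conj, hu]
  have hc' : ‖-((starRingEnd ℂ) u * c)‖ < 1 := by rw [norm_neg, norm_mul, huc, one_mul]; exact hc
  have d1 := mob_den _ _ z hc' huc hz
  have d2 := mob_den c u _ hc hu (mob_mem _ _ z hc' huc hz)
  rw [mob, div_eq_iff d2]
  have hW : mob (-((starRingEnd ℂ) u * c)) ((starRingEnd ℂ) u) z *
      (1 + (starRingEnd ℂ) (-((starRingEnd ℂ) u * c)) * (starRingEnd ℂ) u * z) = 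
      (starRingEnd ℂ) u * z + -((starRingEnd ℂ) u * c) := by
    unfold mob; exact div_mul_cancel₀ _ d1
  generalize mob (-((starRingEnd ℂ) u * c)) ((starRingEnd ℂ) u) z = W at *
  have hvv : (starRingEnd ℂ) u * u = 1 := by rw [Complex.conj_mul', hu]; norm_num
  simp only [map_neg, map_mul, Complex.conj_conj] at hW
  generalize (starRingEnd ℂ) u = k at *
  generalize (starRingEnd ℂ) c = l at *
  linear_combination u * hW + (z - c + u * W * l * z) * hvv

lemma mob_inv2 (c u x : ℂ) (hc : ‖c‖ < 1) (hu : ‖u‖ = 1) (hx : ‖x‖ < 1) :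
    mob (-((starRingEnd ℂ) u * c)) ((starRingEnd ℂ) u) (mob c u x) = x := by
  have huc : ‖(starRingEnd ℂ) u‖ = 1 := by rw [Complex.norm_conj, hu]
  have hc' : ‖-((starRingEnd ℂ) u * c)‖ < 1 := by rw [norm_neg, norm_mul, huc, one_mul]; exact hc
  apply mob_injOn c u hc hu
  · rw [mem_ball_zero_iff]; exact mob_mem _ _ _ hc' huc (mob_mem _ _ _ hc hu hx)
  · rw [mem_ball_zero_iff]; exact hx
  · exact mob_inv c u _ hc hu (mob_mem _ _ _ hc hu hx)

lemma log_exists (f : ℂ → ℂ) (hf : DifferentiableOn ℂ f (ball 0 1)) (hne : ∀ z ∈ ball (0:ℂ) 1, f z ≠ 0) :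
    ∃ L : ℂ → ℂ, DifferentiableOn ℂ L (ball 0 1) ∧ ∀ z ∈ ball (0:ℂ) 1, Complex.exp (L z) = f z := by
  have hd : DifferentiableOn ℂ (deriv f) (ball 0 1) := hf.deriv isOpen_ball
  have hq : DifferentiableOn ℂ (fun z => deriv f z / f z) (ball 0 1) := hd.div hf hne
  obtain ⟨L, hL0, hL⟩ := hq.isExactOn_ball.with_val_at 0 (Complex.log (f 0))
  have hLd : DifferentiableOn ℂ L (ball 0 1) := fun z hz => (hL z hz).differentiableAt.differentiableWithinAt
  refine ⟨L, hLd, fun z hz => ?_⟩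
  have h0 : (0:ℂ) ∈ ball (0:ℂ) 1 := by simp
  have hP : ∀ z ∈ ball (0:ℂ) 1, HasDerivAt (fun z => f z * Complex.exp (-L z)) 0 z := by
    intro z hz
    have h1 := (hf.differentiableAt (isOpen_ball.mem_nhds hz)).hasDerivAt
    have h2 := h1.mul (hL z hz).neg.cexp
    have h4 := hne z hz
    have h3 : (0:ℂ) = deriv f z * Complex.exp (-L z) + f z * (Complex.exp (-L z) * -(deriv f z / f z)) := by
      field_simp
      ring
    rw [h3]
    exact h2
  have hc := isOpen_ball.is_const_of_deriv_eq_zero (convex_ball (0:ℂ) 1).isPreconnected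
    (fun z hz => (hP z hz).differentiableAt.differentiableWithinAt) (fun z hz => (hP z hz).deriv) hz h0
  simp only [hL0, Complex.exp_neg, Complex.exp_log (hne 0 h0)] at hc
  rw [mul_inv_cancel₀ (hne 0 h0)] at hc
  have := Complex.exp_ne_zero (L z)
  field_simp at hc
  exact hc.symm

lemma koebe3 (L : ℂ → ℂ) (hL : DifferentiableOn ℂ L (ball 0 1))
    (hinj : Set.InjOn (fun z => Complex.exp (L z)) (ball 0 1)) (z : ℂ) (hz : ‖z‖ < 1) :
    ‖Complex.exp (L 0)‖ * ((1 - ‖z‖) / (1 + ‖z‖)) ^ 2 ≤ ‖Complex.exp (L z)‖ := by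
  obtain ⟨v, hv, hzv⟩ : ∃ v : ℂ, ‖v‖ = 1 ∧ z = (‖z‖ : ℂ) * v := by
    by_cases h : z = 0
    · exact ⟨1, by simp, by simp [h]⟩
    · have : ‖z‖ ≠ 0 := norm_ne_zero_iff.2 h
      refine ⟨z / ‖z‖, by simp [this], ?_⟩
      have : (‖z‖:ℂ) ≠ 0 := by exact_mod_cast this
      field_simp
  have h := koebe2 L hL hinj v hv ‖z‖ (norm_nonneg z) hz
  rw [← hzv] at h
  have h1 : 0 < 1 + ‖z‖ := by positivity
  have h2 : 0 < 1 - ‖z‖ := by linarith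
  rw [Complex.norm_exp, Complex.norm_exp]
  have h3 : ((1 - ‖z‖) / (1 + ‖z‖)) ^ 2 = Real.exp (2 * Real.log (1 - ‖z‖) - 2 * Real.log (1 + ‖z‖)) := by
    rw [← mul_sub, ← Real.log_div h2.ne' h1.ne', two_mul, Real.exp_add, Real.exp_log (div_pos h2 h1), sq]
  rw [h3, ← Real.exp_add]
  apply Real.exp_le_exp.2
  linarith

lemma hit (L : ℂ → ℂ) (hL : DifferentiableOn ℂ L (ball 0 1))
    (hinj : Set.InjOn (fun z => Complex.exp (L z)) (ball 0 1)) (δ : ℝ) (hδ : 0 < δ)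
    (N : Set ℂ) (H : ∀ C ⊆ ball (0:ℂ) 1, IsPreconnected C → (C ∩ N).Nonempty →
      (∃ x ∈ C, ‖Complex.exp (L x)‖ ≤ δ) ∨ C ⊆ N)
    (c u : ℂ) (hc : ‖c‖ < 1) (hu : ‖u‖ = 1) (hcN : c ∉ N)
    (hray : ∀ t ∈ Set.Ioo 0 Real.pi, ∃ r ∈ Set.Ioo (0:ℝ) 1, mob c u (r * Complex.exp (t * Complex.I)) ∈ N) :
    ‖Complex.exp (L c)‖ ≤ 36 * δ := by
  by_contra! hcon
  have hm := mob_mapsTo c u hc hu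
  have key := lemB (fun z => L (mob c u z)) (hL.comp (mob_diff c u hc hu) hm)
    (by
      have := hinj.comp (mob_injOn c u hc hu) hm
      exact this) (Real.log δ) (by
      intro t ht
      obtain ⟨r, hr, hrN⟩ := hray t ht
      set e := Complex.exp (t * Complex.I) with he
      have hen : ‖e‖ = 1 := Complex.norm_exp_ofReal_mul_I t
      have hball : ∀ s ∈ Set.Icc (0:ℝ) r, (s:ℂ) * e ∈ ball (0:ℂ) 1 := by
        intro s hs
        rw [mem_ball_zero_iff, norm_mul, hen, mul_one, Complex.norm_real, Real.norm_eq_abs, abs_of_nonneg hs.1]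
        linarith [hs.2, hr.2]
      have hcont : ContinuousOn (fun s : ℝ => mob c u (s * e)) (Set.Icc 0 r) :=
        (mob_diff c u hc hu).continuousOn.comp (by fun_prop) hball
      rcases H ((fun s : ℝ => mob c u (s * e)) '' Set.Icc 0 r)
        (by rintro _ ⟨s, hs, rfl⟩; exact hm (hball s hs)) (isPreconnected_Icc.image _ hcont)
        ⟨_, ⟨r, ⟨hr.1.le, le_rfl⟩, rfl⟩, hrN⟩ with ⟨_, ⟨s, hs, rfl⟩, hx⟩ | hsub
      · simp only at hx
        rcases hs.1.eq_or_lt with h | h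
        · rw [← h] at hx
          simp only [Complex.ofReal_zero, zero_mul, mob_zero] at hx
          linarith
        · refine ⟨s, ⟨h, lt_of_le_of_lt hs.2 hr.2⟩, ?_⟩
          rw [Complex.norm_exp] at hx
          exact (Real.le_log_iff_exp_le hδ).2 hx
      · exfalso
        apply hcN
        apply hsub
        exact ⟨0, ⟨le_rfl, hr.1.le⟩, by simp [mob_zero]⟩)
  simp only [mob_zero] at key
  rw [Complex.norm_exp] at hcon
  have : Real.exp (L c).re ≤ δ * 36 := by
    rw [← Real.log_mul hδ.ne' (by norm_num)] at key
    exact (Real.le_log_iff_exp_le (by positivity)).1 key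
  linarith

lemma disc_main (L : ℂ → ℂ) (hL : DifferentiableOn ℂ L (ball 0 1))
    (hinj : Set.InjOn (fun z => Complex.exp (L z)) (ball 0 1)) (M ε : ℝ) (hM : 0 < M) (hε : 0 < ε)
    (hM0 : M ≤ ‖Complex.exp (L 0)‖)
    (N : Set ℂ) (hN : N ⊆ ball 0 1) (hNp : IsPreconnected N) (hN0 : (0:ℂ) ∉ N)
    (H : ∀ C ⊆ ball (0:ℂ) 1, IsPreconnected C → (C ∩ N).Nonempty →
      (∃ x ∈ C, ‖Complex.exp (L x)‖ ≤ ε ^ 2) ∨ C ⊆ N)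
    (n1 n2 : ℂ) (hn1 : n1 ∈ N) (hn2 : n2 ∈ N) : ‖n1 - n2‖ ≤ 30 * ε / Real.sqrt M := by
  have hsM : 0 < Real.sqrt M := Real.sqrt_pos.2 hM
  have hsq : Real.sqrt M ^ 2 = M := Real.sq_sqrt hM.le
  have hfin : ∀ z : ℂ, ‖z‖ < 1 → ‖Complex.exp (L z)‖ ≤ 36 * ε ^ 2 →
      (1 - ‖z‖) / (1 + ‖z‖) ≤ 6 * ε / Real.sqrt M := by
    intro z hz hle
    have h1 := koebe3 L hL hinj z hz
    have h2 : M * ((1 - ‖z‖) / (1 + ‖z‖)) ^ 2 ≤ 36 * ε ^ 2 :=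
      le_trans (mul_le_mul_of_nonneg_right hM0 (by positivity)) (h1.trans hle)
    rw [le_div_iff₀ hsM]
    apply le_of_sq_le_sq _ (by positivity)
    rw [mul_pow, hsq]
    nlinarith
  suffices hs : ∃ c : ℂ, (1 - ‖c‖) / (1 + ‖c‖) ≤ 6 * ε / Real.sqrt M ∧
      ‖n1 - n2‖ ≤ 4 * ((1 - ‖c‖) / (1 + ‖c‖)) by
    obtain ⟨c, h1, h2⟩ := hs
    have h3 : 0 < ε / Real.sqrt M := by positivity
    rw [mul_div_assoc] at *
    linarith
  obtain ⟨c, u, x1, x2, hc, hu, hx1, hx1', hx2, hx2', e1, e2, hle⟩ :=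
    geo n1 n2 (by simpa using hN hn1) (by simpa using hN hn2)
  refine ⟨c, ?_, hle⟩
  by_cases hcN : c ∈ N
  · -- segment from 0 to c
    have hcont : ContinuousOn (fun s : ℝ => (s:ℂ) * c) (Set.Icc 0 1) := by fun_prop
    have hnn : ∀ s ∈ Set.Icc (0:ℝ) 1, ‖(s:ℂ) * c‖ ≤ ‖c‖ := by
      intro s hs
      rw [norm_mul, Complex.norm_real, Real.norm_eq_abs, abs_of_nonneg hs.1]
      exact mul_le_of_le_one_left (norm_nonneg c) hs.2
    rcases H ((fun s : ℝ => (s:ℂ) * c) '' Set.Icc 0 1)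
      (by rintro _ ⟨s, hs, rfl⟩; rw [mem_ball_zero_iff]; exact lt_of_le_of_lt (hnn s hs) hc)
      (isPreconnected_Icc.image _ hcont) ⟨c, ⟨1, by simp, by simp⟩, hcN⟩ with ⟨_, ⟨s, hs, rfl⟩, hx⟩ | hsub
    · have h1 := hnn s hs
      refine le_trans ?_ (hfin _ (lt_of_le_of_lt h1 hc) (hx.trans (by nlinarith)))
      gcongr
      linarith
    · exfalso; apply hN0; apply hsub; exact ⟨0, by simp, by simp⟩
  apply hfin c hc
  have hx1p : 0 < x1 := by
    rcases hx1.eq_or_lt with h | h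
    · exfalso; apply hcN; rw [← h] at e1; simp [mob_zero] at e1; rwa [e1]
    · exact h
  have hx2p : 0 < x2 := by
    rcases hx2.eq_or_lt with h | h
    · exfalso; apply hcN; rw [← h] at e2; simp [mob_zero] at e2; rwa [e2]
    · exact h
  by_cases hlow : ∀ t ∈ Set.Ioo 0 Real.pi, ∃ r ∈ Set.Ioo (0:ℝ) 1, mob c u (r * Complex.exp (-(t * Complex.I))) ∈ N
  · apply hit L hL hinj (ε ^ 2) (by positivity) N H c (-u) hc (by rwa [norm_neg]) hcN
    intro t ht
    obtain ⟨r, hr, hm⟩ := hlow (Real.pi - t) ⟨by linarith [ht.2], by linarith [ht.1]⟩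
    refine ⟨r, hr, ?_⟩
    convert hm using 1
    have : Complex.exp (-(((Real.pi - t : ℝ):ℂ) * Complex.I)) = -Complex.exp (t * Complex.I) := by
      rw [show -(((Real.pi - t : ℝ):ℂ) * Complex.I) = t * Complex.I + -(Real.pi * Complex.I) by push_cast; ring,
        Complex.exp_add, Complex.exp_neg (Real.pi * Complex.I), Complex.exp_pi_mul_I]
      norm_num
    rw [this]
    simp only [mob]
    congr 1 <;> ring
  · push Not at hlow
    obtain ⟨t2, ht2, hmiss⟩ := hlow
    apply hit L hL hinj (ε ^ 2) (by positivity) N H c u hc hu hcN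
    intro t ht
    set S := mob (-((starRingEnd ℂ) u * c)) ((starRingEnd ℂ) u) with hS
    have huc : ‖(starRingEnd ℂ) u‖ = 1 := by rw [Complex.norm_conj, hu]
    have hc' : ‖-((starRingEnd ℂ) u * c)‖ < 1 := by rw [norm_neg, norm_mul, huc, one_mul]; exact hc
    have hback : ∀ q ∈ S '' N, ‖q‖ < 1 ∧ mob c u q ∈ N := by
      rintro _ ⟨n, hn, rfl⟩
      have hnb : ‖n‖ < 1 := by simpa using hN hn
      refine ⟨mob_mem _ _ _ hc' huc hnb, ?_⟩
      rw [hS, mob_inv c u n hc hu hnb]; exact hn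
    have hpol : ∀ (r θ : ℝ), 0 < r → ‖(r:ℂ) * Complex.exp (θ * Complex.I)‖ < 1 → r < 1 := by
      intro r θ hr h
      rwa [norm_mul, Complex.norm_exp_ofReal_mul_I, mul_one, Complex.norm_real, Real.norm_eq_abs, abs_of_pos hr] at h
    obtain ⟨r, hr, hrQ⟩ := rays (S '' N)
      (hNp.image _ ((mob_diff _ _ hc' huc).continuousOn.mono hN))
      (by intro h; have := (hback _ h).2; rw [mob_zero] at this; exact hcN this)
      x1 x2 hx1p hx2p
      ⟨n1, hn1, by
        rw [← e1, hS]
        exact mob_inv2 c u _ hc hu (by rw [Complex.norm_real, norm_neg, Real.norm_eq_abs, abs_of_pos hx1p]; exact hx1')⟩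
      ⟨n2, hn2, by
        rw [← e2, hS]
        exact mob_inv2 c u _ hc hu (by rw [Complex.norm_real, Real.norm_eq_abs, abs_of_pos hx2p]; exact hx2')⟩
      t2 ht2 (by
        intro r hr h
        have h1 := hback _ h
        refine hmiss r ⟨hr, hpol r (-t2) hr ?_⟩ h1.2
        have := h1.1
        push_cast
        rwa [neg_mul]) t ht
    have h1 := hback _ hrQ
    exact ⟨r, ⟨hr, hpol r t hr h1.1⟩, h1.2⟩

theorem lavrentiev_crosscut_diam
    (Ω : Set ℂ) (hΩne : Ω.Nonempty) (hΩproper : Ω ≠ Set.univ)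
    (hΩopen : IsOpen Ω) (hΩconn : IsConnected Ω) (hΩsc : SimplyConnectedSpace Ω)
    (ω : ℂ) (hω : ω ∈ Ω)
    (φ : ℂ → ℂ) (hφdiff : DifferentiableOn ℂ φ Ω)
    (hφbij : Set.BijOn φ Ω (ball (0 : ℂ) 1)) (hφω : φ ω = 0)
    (γt : ℝ → ℂ) (hγcont : ContinuousOn γt (Set.Icc 0 1))
    (hγinj : Set.InjOn γt (Set.Icc 0 1))
    (hγint : γt '' Set.Ioo 0 1 ⊆ Ω)
    (hγends : γt 0 ≠ γt 1) (hγ0 : γt 0 ∈ frontier Ω) (hγ1 : γt 1 ∈ frontier Ω)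
    (γ : Set ℂ) (hγ : γ = γt '' Set.Icc 0 1)
    (N : Set ℂ) (hN : ∃ z ∈ Ω \ γ, N = connectedComponentIn (Ω \ γ) z)
    (hωN : ω ∉ N)
    (M : ℝ) (hM : 0 < M) (hdist : M ≤ infDist ω γ)
    (ε : ℝ) (hε : 0 < ε) (hεM : ε ^ 2 < M / 4) (hdiam : diam γ ≤ ε ^ 2) :
    diam (φ '' N) ≤ 30 * ε / Real.sqrt M := by
  set f := Function.invFunOn φ Ω with hf
  have hfB : ∀ w ∈ ball (0:ℂ) 1, f w ∈ Ω ∧ φ (f w) = w := by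
    intro w hw
    have := hφbij.surjOn hw
    exact ⟨Function.invFunOn_mem this, Function.invFunOn_eq this⟩
  have hfΩ : ∀ z ∈ Ω, f (φ z) = z := fun z hz => hφbij.injOn.leftInvOn_invFunOn hz
  have hfd := inv_differentiable Ω hΩopen hΩconn φ hφdiff _ hφbij f hfB hfΩ
  have hf0 : f 0 = ω := by rw [← hφω]; exact hfΩ ω hω
  have hγ0' : γt 0 ∉ Ω := by
    rw [hΩopen.frontier_eq] at hγ0; exact hγ0.2
  set a := γt 0 with ha
  have haγ : a ∈ γ := by rw [hγ]; exact ⟨0, by simp, rfl⟩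
  have hbd : Bornology.IsBounded γ := by
    rw [hγ]; exact (isCompact_Icc.image_of_continuousOn hγcont).isBounded
  have hγε : ∀ w ∈ γ, ‖w - a‖ ≤ ε ^ 2 := by
    intro w hw
    rw [← dist_eq_norm]
    exact (dist_le_diam_of_mem hbd hw haγ).trans hdiam
  obtain ⟨L, hL, hLe⟩ := log_exists (fun z => f z - a) (hfd.sub_const a) (by
    intro z hz h
    apply hγ0'
    rw [← sub_eq_zero.1 h]
    exact (hfB z hz).1)
  have hinj : Set.InjOn (fun z => Complex.exp (L z)) (ball 0 1) := by
    intro x hx y hy h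
    simp only [hLe x hx, hLe y hy] at h
    have h2 : f x = f y := by linear_combination h
    rw [← (hfB x hx).2, ← (hfB y hy).2, h2]
  obtain ⟨z0, hz0, hNe⟩ := hN
  have hNsub : N ⊆ Ω \ γ := by rw [hNe]; exact connectedComponentIn_subset _ _
  have hNΩ : N ⊆ Ω := fun z hz => (hNsub hz).1
  have hNpre : IsPreconnected N := by rw [hNe]; exact isPreconnected_connectedComponentIn
  have key := disc_main L hL hinj M ε hM hε
    (by
      rw [hLe 0 (by simp), hf0, ← dist_eq_norm]
      exact hdist.trans (infDist_le_dist_of_mem haγ))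
    (φ '' N) (by rintro _ ⟨z, hz, rfl⟩; exact hφbij.mapsTo (hNΩ hz))
    (hNpre.image _ (hφdiff.continuousOn.mono hNΩ))
    (by
      rintro ⟨z, hz, h⟩
      rw [← hφω] at h
      have := hφbij.injOn (hNΩ hz) hω h
      rw [this] at hz
      exact hωN hz)
    (by
      intro C hC hCp hCN
      by_cases hx : ∃ x ∈ C, f x ∈ γ
      · obtain ⟨x, hxC, hxγ⟩ := hx
        left
        refine ⟨x, hxC, ?_⟩
        rw [hLe x (hC hxC)]
        exact hγε _ hxγ
      · right
        push Not at hx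
        obtain ⟨_, hnC, n, hn, rfl⟩ := hCN
        have hpre : IsPreconnected (f '' C) := hCp.image _ (hfd.continuousOn.mono hC)
        have hsub : f '' C ⊆ Ω \ γ := by
          rintro _ ⟨x, hxC, rfl⟩
          exact ⟨(hfB x (hC hxC)).1, hx x hxC⟩
        have hnm : n ∈ f '' C := ⟨φ n, hnC, hfΩ n (hNΩ hn)⟩
        have h1 := hpre.subset_connectedComponentIn hnm hsub
        rw [hNe] at hn
        rw [← connectedComponentIn_eq hn, ← hNe] at h1
        intro x hxC
        exact ⟨f x, h1 ⟨x, hxC, rfl⟩, (hfB x (hC hxC)).2⟩)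
  apply diam_le_of_forall_dist_le (by positivity)
  intro x hx y hy
  rw [dist_eq_norm]
  exact key x y hx hy
end
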